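/- arXiv:1106.6041 — 2 statements merged into one kernel-verified Lean document; each statement's English description precedes it below -/
import Mathlib

section
/- Let n ≥ 1 and let a_1, …, a_n : ℝ → ℝ be functions of class C^n. Suppose that for every t ∈ ℝ the monic polynomial P(t)(x) = x^n + Σ_{j=1}^n (-1)^j a_j(t) x^{n-j} is hyperbolic, i.e. all its complex roots are real. If λ_1, …, λ_n : ℝ → ℝ are differentiable functions such that P(t)(x) = ∏_{j=1}^n (x - λ_j(t)) for all t and x, then each λ_j is of class C^1. -/
namespace Hyp
open Polynomial Filter Topology Set

noncomputable def pol {n : ℕ} (c : Fin n → ℝ) : ℝ[X] := X ^ n + ∑ i : Fin n, C (c i) * X ^ (i : ℕ)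

noncomputable def lin {n : ℕ} (c : Fin n → ℝ) : ℝ[X] := ∑ i : Fin n, C (c i) * X ^ (i : ℕ)

lemma lin_coeff {n : ℕ} (c : Fin n → ℝ) (k : ℕ) :
    (lin c).coeff k = if h : k < n then c ⟨k, h⟩ else 0 := by
  classical
  unfold lin
  rw [finsetSum_coeff]
  simp only [coeff_C_mul, coeff_X_pow]
  split_ifs with h
  · rw [Finset.sum_eq_single ⟨k, h⟩]
    · simp
    · intro b _ hb
      have : k ≠ b := fun e => hb (Fin.ext e.symm)
      simp [this]
    · simp
  · apply Finset.sum_eq_zero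
    intro i _
    have : k ≠ i := by have := i.2; omega
    simp [this]

lemma lin_degree {n : ℕ} (c : Fin n → ℝ) : (lin c).degree < n := by
  rw [degree_lt_iff_coeff_zero]
  intro m hm
  rw [lin_coeff, dif_neg (by omega)]

lemma pol_eq {n : ℕ} (c : Fin n → ℝ) : pol c = X ^ n + lin c := rfl

lemma pol_monic {n : ℕ} (c : Fin n → ℝ) : (pol c).Monic := by
  rw [pol_eq]
  exact monic_X_pow_add (lin_degree c)

lemma pol_natDegree {n : ℕ} (c : Fin n → ℝ) : (pol c).natDegree = n := by
  rw [pol_eq]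
  apply natDegree_eq_of_degree_eq_some
  rw [degree_add_eq_left_of_degree_lt, degree_X_pow]
  rw [degree_X_pow]; exact lin_degree c

lemma pol_degree {n : ℕ} (c : Fin n → ℝ) : (pol c).degree = n := by
  rw [degree_eq_natDegree (pol_monic c).ne_zero, pol_natDegree]

lemma pol_coeff {n : ℕ} (c : Fin n → ℝ) (i : Fin n) : (pol c).coeff i = c i := by
  rw [pol_eq, coeff_add, lin_coeff, coeff_X_pow, if_neg (by have := i.2; omega), dif_pos i.2]
  simp

lemma eq_pol {n : ℕ} {P : ℝ[X]} (h : P.Monic) (hd : P.natDegree = n) :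
    P = pol (fun i : Fin n => P.coeff i) := by
  ext k
  rcases lt_trichotomy k n with hk | hk | hk
  · exact (pol_coeff (fun i : Fin n => P.coeff i) ⟨k, hk⟩).symm
  · have h1 := h.coeff_natDegree
    have h2 := (pol_monic (fun i : Fin n => P.coeff i)).coeff_natDegree
    rw [pol_natDegree] at h2
    rw [hd] at h1
    rw [hk, h1, h2]
  · rw [coeff_eq_zero_of_natDegree_lt (by omega), coeff_eq_zero_of_natDegree_lt]
    rw [pol_natDegree]; exact hk

lemma pol_eval {n : ℕ} (c : Fin n → ℝ) (x : ℝ) :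
    (pol c).eval x = x ^ n + ∑ i : Fin n, c i * x ^ (i : ℕ) := by
  simp [pol, eval_finsetSum]

lemma pol_inj {n : ℕ} {c d : Fin n → ℝ} (h : pol c = pol d) : c = d := by
  ext i
  rw [← pol_coeff c, h, pol_coeff]

lemma pol_eval_continuous {n : ℕ} : Continuous (fun z : (Fin n → ℝ) × ℝ => (pol z.1).eval z.2) := by
  simp only [pol_eval]
  fun_prop

/-- polynomial with given roots -/
lemma prod_monic {n : ℕ} (r : Fin n → ℝ) : (∏ j, (X - C (r j))).Monic :=
  monic_prod_of_monic _ _ (fun i _ => monic_X_sub_C (r i))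

lemma prod_natDegree {n : ℕ} (r : Fin n → ℝ) : (∏ j, (X - C (r j))).natDegree = n := by
  rw [natDegree_prod_of_monic _ _ (fun i _ => monic_X_sub_C (r i))]
  simp

noncomputable def rc {n : ℕ} (r : Fin n → ℝ) : Fin n → ℝ := fun i => (∏ j, (X - C (r j))).coeff i

lemma pol_rc {n : ℕ} (r : Fin n → ℝ) : pol (rc r) = ∏ j, (X - C (r j)) :=
  (eq_pol (prod_monic r) (prod_natDegree r)).symm

lemma rc_splits {n : ℕ} (r : Fin n → ℝ) : (pol (rc r)).Splits := by
  rw [pol_rc]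
  exact Splits.prod (fun i _ => Splits.X_sub_C _)

lemma splits_exists {n : ℕ} {c : Fin n → ℝ} (h : (pol c).Splits) : ∃ r : Fin n → ℝ, c = rc r := by
  have h1 := h.eq_prod_roots_of_monic (pol_monic c)
  have h2 := h.natDegree_eq_card_roots
  rw [pol_natDegree] at h2
  set l := (pol c).roots.toList with hl
  have hll : l.length = n := by rw [hl, Multiset.length_toList]; exact h2.symm
  refine ⟨fun i => l.get (i.cast hll.symm), ?_⟩
  apply pol_inj
  rw [pol_rc]
  have h3 : (pol c).roots = (l : Multiset ℝ) := by rw [hl, Multiset.coe_toList]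
  rw [h1, h3, Multiset.map_coe, Multiset.prod_coe]
  clear_value l
  clear h1 h2 h3 hl h
  clear c
  subst hll
  rw [← List.prod_ofFn]
  congr 1
  apply List.ext_get <;> simp

lemma rc_root {n : ℕ} {r : Fin n → ℝ} {x : ℝ} : (pol (rc r)).eval x = 0 ↔ ∃ i, x = r i := by
  rw [pol_rc, eval_prod, Finset.prod_eq_zero_iff]
  simp [sub_eq_zero]

lemma rc_continuous {n : ℕ} : Continuous (rc : (Fin n → ℝ) → (Fin n → ℝ)) := by
  classical
  have key : ∀ s : Finset (Fin n), ∀ k : ℕ,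
      Continuous (fun r : Fin n → ℝ => (∏ j ∈ s, (X - C (r j))).coeff k) := by
    intro s
    induction s using Finset.induction_on with
    | empty => intro k; simp only [Finset.prod_empty]; exact continuous_const
    | insert a s ha ih =>
      intro k
      simp only [Finset.prod_insert ha, sub_mul, coeff_sub, coeff_C_mul]
      cases k with
      | zero =>
        simp only [coeff_X_mul_zero]
        have := ih 0
        fun_prop
      | succ k =>
        simp only [coeff_X_mul]
        have := ih k
        have := ih (k+1)
        fun_prop
  exact continuous_pi (fun i => key _ _)

lemma prod_coeff_one {ι : Type*} (s : Finset ι) (r : ι → ℝ) (k : ℕ) (h : s.card = k + 1) :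
    (∏ j ∈ s, (X - C (r j))).coeff k = - ∑ j ∈ s, r j := by
  have := prod_X_sub_C_coeff_card_pred s r (by omega)
  rwa [h] at this

lemma prod_coeff_two {ι : Type*} (s : Finset ι) (r : ι → ℝ) : ∀ (k : ℕ) (_ : s.card = k + 2),
    2 * (∏ j ∈ s, (X - C (r j))).coeff k = (∑ j ∈ s, r j) ^ 2 - ∑ j ∈ s, (r j) ^ 2 := by
  classical
  induction s using Finset.induction_on with
  | empty => intro k h; simp at h
  | insert a s ha ih =>
    intro k h
    rw [Finset.card_insert_of_notMem ha] at h
    have h1 := prod_coeff_one s r k (by omega)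
    rw [Finset.prod_insert ha, Finset.sum_insert ha, Finset.sum_insert ha, sub_mul, coeff_sub,
      coeff_C_mul, h1]
    cases k with
    | zero =>
      obtain ⟨b, rfl⟩ := Finset.card_eq_one.1 (by omega : s.card = 1)
      simp
      ring
    | succ k =>
      have h2 := ih k (by omega)
      rw [coeff_X_mul]
      linear_combination h2

lemma rc_last {m : ℕ} (r : Fin (m + 1) → ℝ) : rc r (Fin.last m) = - ∑ j, r j := by
  unfold rc
  exact prod_coeff_one _ _ _ (by simp)

lemma rc_two {m : ℕ} (r : Fin (m + 2) → ℝ) (h0 : rc r (Fin.last (m + 1)) = 0) :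
    ∑ j, (r j) ^ 2 = -2 * rc r ⟨m, by omega⟩ := by
  rw [rc_last] at h0
  have h := prod_coeff_two Finset.univ r m (by simp)
  have h1 : ∑ j, r j = 0 := by linarith
  unfold rc
  rw [h1] at h
  simp only at *
  linarith

lemma rc_bound {n : ℕ} (r : Fin n → ℝ) (B : ℝ) (hr : ∀ i, |r i| ≤ B) (hB : 0 ≤ B) (i : Fin n) :
    |rc r i| ≤ B ^ (n - (i : ℕ)) * 2 ^ n := by
  have h := coeff_le_of_roots_le (p := pol (rc r)) (f := RingHom.id ℝ) (B := B) (i : ℕ)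
    (pol_monic _) (by rw [Polynomial.map_id]; exact rc_splits r) (by
      intro z hz
      rw [Polynomial.map_id, mem_roots (pol_monic _).ne_zero] at hz
      obtain ⟨i, rfl⟩ := rc_root.1 hz
      exact hr i)
  rw [Polynomial.map_id, pol_natDegree, pol_coeff, Real.norm_eq_abs] at h
  refine h.trans ?_
  gcongr
  exact_mod_cast Nat.choose_le_two_pow n i

lemma pol_scale {n : ℕ} (c : Fin n → ℝ) {s : ℝ} (hs : s ≠ 0) :
    pol (fun i => c i / s ^ (n - (i : ℕ))) = C ((s ^ n)⁻¹) * (pol c).comp (C s * X) := by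
  simp only [pol, add_comp, mul_add, pow_comp, X_comp]
  congr 1
  · rw [mul_pow, ← mul_assoc, ← C_pow, ← C_mul, inv_mul_cancel₀ (pow_ne_zero _ hs)]; simp
  · rw [Polynomial.sum_comp, Finset.mul_sum]
    apply Finset.sum_congr rfl
    intro i _
    simp only [mul_comp, C_comp, pow_comp, X_comp, mul_pow]
    rw [← C_pow, ← mul_assoc, ← mul_assoc, ← C_mul, ← C_mul]
    congr 2
    have : s ^ n = s ^ (n - (i : ℕ)) * s ^ (i : ℕ) := by rw [← pow_add]; congr 1; have := i.2; omega
    rw [this]; field_simp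

lemma splits_scale {n : ℕ} {c : Fin n → ℝ} (h : (pol c).Splits) {s : ℝ} (hs : s ≠ 0) :
    (pol (fun i => c i / s ^ (n - (i : ℕ)))).Splits := by
  rw [pol_scale c hs]
  apply Splits.C_mul
  apply h.comp_of_natDegree_le_one
  compute_degree

lemma eval_scale {n : ℕ} (c : Fin n → ℝ) {s : ℝ} (hs : s ≠ 0) {x : ℝ} (h : (pol c).eval x = 0) :
    (pol (fun i => c i / s ^ (n - (i : ℕ)))).eval (x / s) = 0 := by
  rw [pol_scale c hs]
  simp only [eval_mul, eval_comp, eval_C, eval_X]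
  rw [mul_div_cancel₀ _ hs, h, mul_zero]

/-- Tschirnhaus shift -/
noncomputable def sh {m : ℕ} (c : Fin (m + 1) → ℝ) : Fin (m + 1) → ℝ :=
  fun i => ((pol c).comp (X - C (c (Fin.last m) / (m + 1)))).coeff i

lemma pol_sh {m : ℕ} (c : Fin (m + 1) → ℝ) :
    pol (sh c) = (pol c).comp (X - C (c (Fin.last m) / (m + 1))) := by
  symm
  apply eq_pol
  · exact (pol_monic c).comp_X_sub_C _
  · rw [natDegree_comp, pol_natDegree, natDegree_X_sub_C, mul_one]

lemma sh_splits {m : ℕ} {c : Fin (m + 1) → ℝ} (h : (pol c).Splits) : (pol (sh c)).Splits := by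
  rw [pol_sh]; exact h.comp_X_sub_C _

lemma sh_root {m : ℕ} {c : Fin (m + 1) → ℝ} {x : ℝ} (h : (pol c).eval x = 0) :
    (pol (sh c)).eval (x + c (Fin.last m) / (m + 1)) = 0 := by
  rw [pol_sh]; simp [eval_comp, h]

lemma sh_last {m : ℕ} {c : Fin (m + 1) → ℝ} (h : (pol c).Splits) : sh c (Fin.last m) = 0 := by
  obtain ⟨r, rfl⟩ := splits_exists h
  have : sh (rc r) = rc (fun i => r i + rc r (Fin.last m) / (m + 1)) := by
    apply pol_inj
    rw [pol_sh, pol_rc, pol_rc, prod_comp]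
    apply Finset.prod_congr rfl
    intro i _
    simp only [sub_comp, X_comp, C_comp, C_add]
    ring
  rw [this, rc_last, Finset.sum_add_distrib, rc_last]
  simp
  field_simp
  ring

lemma coeff_X_sub_C_pow' (h : ℝ) (n k : ℕ) :
    ((X - C h : ℝ[X]) ^ n).coeff k = (-h) ^ (n - k) * (n.choose k : ℝ) := by
  rw [sub_eq_add_neg, ← C_neg, coeff_X_add_C_pow]

lemma sh_contDiff {m : ℕ} {N : WithTop ℕ∞} : ContDiff ℝ N (sh : (Fin (m + 1) → ℝ) → _) := by
  rw [contDiff_pi]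
  intro i
  have : ∀ c : Fin (m+1) → ℝ, sh c i = (-(c (Fin.last m) / (m + 1))) ^ (m + 1 - (i : ℕ)) * ((m + 1).choose i : ℝ)
      + ∑ j : Fin (m+1), c j * ((-(c (Fin.last m) / (m + 1))) ^ ((j : ℕ) - (i : ℕ)) * ((j : ℕ).choose i : ℝ)) := by
    intro c
    unfold sh pol
    rw [add_comp, pow_comp, X_comp, coeff_add, coeff_X_sub_C_pow', Polynomial.sum_comp, finsetSum_coeff]
    congr 1
    apply Finset.sum_congr rfl
    intro j _
    rw [mul_comp, C_comp, pow_comp, X_comp, coeff_C_mul, coeff_X_sub_C_pow']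
  simp only [this]
  fun_prop

/-- dichotomy -/
lemma dichotomy {n : ℕ} {c : Fin n → ℝ} (h : (pol c).Splits) :
    (∃ ρ : ℝ, c = rc (fun _ => ρ)) ∨ ∃ p q : ℕ, p < n ∧ q < n ∧ p + q = n ∧
      ∃ (c1 : Fin p → ℝ) (c2 : Fin q → ℝ), pol c = pol c1 * pol c2 ∧ IsCoprime (pol c1) (pol c2) ∧
        (pol c1).Splits ∧ (pol c2).Splits := by
  classical
  obtain ⟨r, rfl⟩ := splits_exists h
  by_cases hall : ∃ ρ, ∀ i, r i = ρ
  · obtain ⟨ρ, hρ⟩ := hall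
    left; exact ⟨ρ, by congr 1; ext i; exact hρ i⟩
  right
  push Not at hall
  have hn : 0 < n := by
    rcases Nat.eq_zero_or_pos n with h0 | h0
    · subst h0; obtain ⟨i, _⟩ := hall 0; exact i.elim0
    · exact h0
  set ρ := r ⟨0, hn⟩ with hρ
  obtain ⟨i1, hi1⟩ := hall ρ
  set s := Finset.univ.filter (fun i => r i = ρ) with hs
  set s' := Finset.univ.filter (fun i => ¬ r i = ρ) with hs'
  have hcard : s.card + s'.card = n := by
    rw [hs, hs', Finset.card_filter_add_card_filter_not]; simp
  have h1 : 0 < s.card := Finset.card_pos.2 ⟨⟨0, hn⟩, by simp [hs, hρ]⟩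
  have h2 : 0 < s'.card := Finset.card_pos.2 ⟨i1, by simp [hs', hi1]⟩
  have hm : ∀ s : Finset (Fin n), (∏ j ∈ s, (X - C (r j))).Monic := fun s =>
    monic_prod_of_monic _ _ (fun i _ => monic_X_sub_C (r i))
  have hd : ∀ s : Finset (Fin n), (∏ j ∈ s, (X - C (r j))).natDegree = s.card := fun s => by
    rw [natDegree_prod_of_monic _ _ (fun i _ => monic_X_sub_C (r i))]; simp
  refine ⟨s.card, s'.card, by omega, by omega, hcard, fun i => (∏ j ∈ s, (X - C (r j))).coeff i,
    fun i => (∏ j ∈ s', (X - C (r j))).coeff i, ?_, ?_, ?_, ?_⟩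
  · rw [← eq_pol (hm s) (hd s), ← eq_pol (hm s') (hd s'), pol_rc]
    exact (Finset.prod_filter_mul_prod_filter_not _ _ _).symm
  · rw [← eq_pol (hm s) (hd s), ← eq_pol (hm s') (hd s')]
    apply IsCoprime.prod_left
    intro i hi
    apply IsCoprime.prod_right
    intro j hj
    apply isCoprime_X_sub_C_of_isUnit_sub
    simp [hs, hs'] at hi hj
    rw [isUnit_iff_ne_zero, sub_ne_zero, hi]
    exact fun e => hj e.symm
  · rw [← eq_pol (hm s) (hd s)]
    exact Splits.prod (fun i _ => Splits.X_sub_C _)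
  · rw [← eq_pol (hm s') (hd s')]
    exact Splits.prod (fun i _ => Splits.X_sub_C _)

end Hyp

namespace Hyp
open Polynomial Filter Topology Set

lemma pol_add_smul {n : ℕ} (c b : Fin n → ℝ) (s : ℝ) : pol (c + s • b) = pol c + C s * lin b := by
  unfold pol lin
  rw [add_assoc, Finset.mul_sum, ← Finset.sum_add_distrib]
  congr 1
  apply Finset.sum_congr rfl
  intro i _
  simp only [Pi.add_apply, Pi.smul_apply, smul_eq_mul, C_add, C_mul]
  ring

lemma lin_eq_zero {n : ℕ} {c : Fin n → ℝ} (h : lin c = 0) : c = 0 := by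
  ext i
  have := lin_coeff c i
  rw [h, dif_pos i.2] at this
  simpa using this.symm

noncomputable def mulmap {p q : ℕ} (u : (Fin p → ℝ) × (Fin q → ℝ)) : Fin (p + q) → ℝ :=
  fun i => (pol u.1 * pol u.2).coeff i

lemma pol_mulmap {p q : ℕ} (u : (Fin p → ℝ) × (Fin q → ℝ)) :
    pol (mulmap u) = pol u.1 * pol u.2 := by
  symm
  apply eq_pol ((pol_monic _).mul (pol_monic _))
  rw [(pol_monic _).natDegree_mul (pol_monic _), pol_natDegree, pol_natDegree]

lemma contDiff_pol_coeff {n : ℕ} {N : WithTop ℕ∞} (k : ℕ) :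
    ContDiff ℝ N (fun c : Fin n → ℝ => (pol c).coeff k) := by
  simp only [pol_eq, coeff_add, lin_coeff]
  split_ifs <;> fun_prop

lemma mulmap_contDiff {p q : ℕ} {N : WithTop ℕ∞} :
    ContDiff ℝ N (mulmap : (Fin p → ℝ) × (Fin q → ℝ) → _) := by
  rw [contDiff_pi]
  intro i
  unfold mulmap
  simp only [coeff_mul]
  apply ContDiff.sum
  intro k _
  exact ((contDiff_pol_coeff k.1).comp contDiff_fst).mul ((contDiff_pol_coeff k.2).comp contDiff_snd)

lemma mulmap_fderiv {p q : ℕ} (c h : (Fin p → ℝ) × (Fin q → ℝ)) (i : Fin (p + q)) :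
    fderiv ℝ mulmap c h i = (lin h.1 * pol c.2 + pol c.1 * lin h.2).coeff i := by
  have h1 : HasFDerivAt (mulmap : (Fin p → ℝ) × (Fin q → ℝ) → _) (fderiv ℝ mulmap c) (c + (0 : ℝ) • h) := by
    rw [zero_smul, add_zero]
    exact ((mulmap_contDiff (N := 1)).differentiable (by simp) c).hasFDerivAt
  have h2 : HasDerivAt (fun s : ℝ => c + s • h) h 0 := by
    simpa using ((hasDerivAt_id (0 : ℝ)).smul_const h).const_add c
  have h3 := hasDerivAt_pi.1 (h1.comp_hasDerivAt (0 : ℝ) h2) i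
  have h4 : (fun s : ℝ => (mulmap ∘ fun s : ℝ => c + s • h) s i) = fun s =>
      (pol c.1 * pol c.2).coeff i + s * (lin h.1 * pol c.2 + pol c.1 * lin h.2).coeff i
        + s ^ 2 * (lin h.1 * lin h.2).coeff i := by
    ext s
    simp only [Function.comp, mulmap, Prod.fst_add, Prod.snd_add, Prod.smul_fst, Prod.smul_snd,
      pol_add_smul]
    rw [← coeff_C_mul, ← coeff_C_mul, ← coeff_add, ← coeff_add]
    congr 1
    rw [C_pow]
    ring
  have h4' : (fun s : ℝ => (mulmap (c + s • h)) i) = fun s =>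
      (pol c.1 * pol c.2).coeff i + s * (lin h.1 * pol c.2 + pol c.1 * lin h.2).coeff i
        + s ^ 2 * (lin h.1 * lin h.2).coeff i := h4
  have h5 : HasDerivAt (fun s : ℝ =>
      (pol c.1 * pol c.2).coeff i + s * (lin h.1 * pol c.2 + pol c.1 * lin h.2).coeff i
        + s ^ 2 * (lin h.1 * lin h.2).coeff i) ((lin h.1 * pol c.2 + pol c.1 * lin h.2).coeff i) 0 := by
    generalize (lin h.1 * pol c.2 + pol c.1 * lin h.2).coeff i = B
    generalize (pol c.1 * pol c.2).coeff i = A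
    generalize (lin h.1 * lin h.2).coeff i = E
    have h6 := (((hasDerivAt_id' (0 : ℝ)).mul_const B).const_add A).fun_add
      ((hasDerivAt_pow 2 (0 : ℝ)).mul_const E)
    exact h6.congr_deriv (by simp)
  rw [← h4] at h5
  exact h3.unique h5

lemma mulmap_fderiv_inj {p q : ℕ} (c : (Fin p → ℝ) × (Fin q → ℝ)) (hc : IsCoprime (pol c.1) (pol c.2)) :
    Function.Injective (fderiv ℝ mulmap c) := by
  rw [injective_iff_map_eq_zero]
  intro h hh
  have h0 : lin h.1 * pol c.2 + pol c.1 * lin h.2 = 0 := by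
    have hdeg : (lin h.1 * pol c.2 + pol c.1 * lin h.2).degree < ((p + q : ℕ) : WithBot ℕ) := by
      refine lt_of_le_of_lt (degree_add_le _ _) ?_
      rw [degree_mul, degree_mul, pol_degree, pol_degree, max_lt_iff]
      have a1 := lin_degree h.1
      have a2 := lin_degree h.2
      constructor
      · push_cast
        exact WithBot.add_lt_add_right (by simp) a1
      · push_cast
        exact WithBot.add_lt_add_left (by simp) a2
    ext k
    by_cases hk : k < p + q
    · have := mulmap_fderiv c h ⟨k, hk⟩
      rw [hh] at this
      simpa using this.symm
    · rw [coeff_zero]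
      exact (degree_lt_iff_coeff_zero _ _).1 hdeg k (by omega)
  have hd1 : pol c.1 ∣ lin h.1 * pol c.2 := ⟨- lin h.2, by linear_combination h0⟩
  have hd2 := hc.dvd_of_dvd_mul_right hd1
  have e1 : lin h.1 = 0 := eq_zero_of_dvd_of_degree_lt hd2 (by rw [pol_degree]; exact lin_degree _)
  rw [e1, zero_mul, zero_add] at h0
  have e2 : lin h.2 = 0 := (mul_eq_zero.1 h0).resolve_left (pol_monic _).ne_zero
  exact Prod.ext (lin_eq_zero e1) (lin_eq_zero e2)

lemma factor {p q : ℕ} (c : Fin (p + q) → ℝ) (c1 : Fin p → ℝ) (c2 : Fin q → ℝ)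
    (hc : pol c = pol c1 * pol c2) (hcop : IsCoprime (pol c1) (pol c2)) (N : ℕ) :
    ∃ Ψ1 : (Fin (p + q) → ℝ) → (Fin p → ℝ), ∃ Ψ2 : (Fin (p + q) → ℝ) → (Fin q → ℝ),
      ContDiffAt ℝ N Ψ1 c ∧ ContDiffAt ℝ N Ψ2 c ∧ Ψ1 c = c1 ∧ Ψ2 c = c2 ∧
      ∀ᶠ a in 𝓝 c, pol a = pol (Ψ1 a) * pol (Ψ2 a) := by
  have hcm : mulmap (c1, c2) = c := pol_inj (by rw [pol_mulmap, hc])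
  set L : ((Fin p → ℝ) × (Fin q → ℝ)) ≃ₗ[ℝ] (Fin (p + q) → ℝ) :=
    LinearEquiv.ofInjectiveOfFinrankEq ((fderiv ℝ mulmap (c1, c2)) : _ →ₗ[ℝ] _)
      (mulmap_fderiv_inj (c1, c2) hcop) (by simp)
  have hL : ((L.toContinuousLinearEquiv : _ ≃L[ℝ] _) :
      ((Fin p → ℝ) × (Fin q → ℝ)) →L[ℝ] (Fin (p + q) → ℝ)) = fderiv ℝ mulmap (c1, c2) := by
    apply ContinuousLinearMap.ext
    intro x
    rfl
  have hf : ContDiffAt ℝ ((N + 1 : ℕ) : WithTop ℕ∞) (mulmap : (Fin p → ℝ) × (Fin q → ℝ) → _) (c1, c2) :=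
    mulmap_contDiff.contDiffAt
  have hf' : HasFDerivAt (mulmap : (Fin p → ℝ) × (Fin q → ℝ) → _)
      ((L.toContinuousLinearEquiv : _ ≃L[ℝ] _) :
      ((Fin p → ℝ) × (Fin q → ℝ)) →L[ℝ] (Fin (p + q) → ℝ)) (c1, c2) := by
    rw [hL]
    exact (hf.differentiableAt (by simp)).hasFDerivAt
  have hN : ((N + 1 : ℕ) : WithTop ℕ∞) ≠ 0 := by exact_mod_cast Nat.succ_ne_zero N
  have hcd := (hf.to_localInverse hf' hN).of_le (m := (N : WithTop ℕ∞)) (by exact_mod_cast Nat.le_succ N)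
  have himg := hf.localInverse_apply_image hf' hN
  have hr : ∀ᶠ y in 𝓝 (mulmap (c1, c2)), mulmap (hf.localInverse hf' hN y) = y :=
    (hf.hasStrictFDerivAt' hf' hN).eventually_right_inverse
  set Ψ := hf.localInverse hf' hN
  rw [hcm] at hcd himg hr
  refine ⟨fun a => (Ψ a).1, fun a => (Ψ a).2, hcd.fst, hcd.snd, congrArg Prod.fst himg, congrArg Prod.snd himg, ?_⟩
  filter_upwards [hr] with a ha
  rw [← pol_mulmap, ha]

end Hyp

namespace Hyp
open Polynomial Filter Topology Set

section analysis
variable {E F : Type*} [NormedAddCommGroup E] [NormedSpace ℝ E] [NormedAddCommGroup F]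
  [NormedSpace ℝ F]

def Sm (n : ℕ) (δ : ℝ) (a : ℝ → E) : Prop :=
  (∀ t ∈ Ioo (-1 : ℝ) 1, ContDiffAt ℝ n a t) ∧
    ∀ t ∈ Ioo (-1 : ℝ) 1, ∀ k, 1 ≤ k → k ≤ n → ‖iteratedDeriv k a t‖ ≤ δ

lemma Sm.mono {n : ℕ} {δ δ' : ℝ} {a : ℝ → E} (h : Sm n δ a) (hd : δ ≤ δ') : Sm n δ' a :=
  ⟨h.1, fun t ht k h1 h2 => (h.2 t ht k h1 h2).trans hd⟩

lemma Sm.of_le {n m : ℕ} {δ : ℝ} {a : ℝ → E} (h : Sm n δ a) (hd : m ≤ n) : Sm m δ a :=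
  ⟨fun t ht => (h.1 t ht).of_le (by exact_mod_cast hd), fun t ht k h1 h2 => h.2 t ht k h1 (h2.trans hd)⟩

lemma Sm.dist {n : ℕ} (hn : 1 ≤ n) {δ : ℝ} {a : ℝ → E} (h : Sm n δ a) {t : ℝ} (ht : t ∈ Ioo (-1 : ℝ) 1) :
    ‖a t - a 0‖ ≤ δ := by
  have h0 : (0 : ℝ) ∈ Ioo (-1 : ℝ) 1 := by constructor <;> norm_num
  have := (convex_Ioo (-1 : ℝ) 1).norm_image_sub_le_of_norm_deriv_le (f := a) (C := δ)
    (fun x hx => (h.1 x hx).differentiableAt (by exact_mod_cast (by omega : n ≠ 0)))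
    (fun x hx => by simpa [iteratedDeriv_one] using h.2 x hx 1 le_rfl hn) h0 ht
  have hδ : 0 ≤ δ := (norm_nonneg _).trans (h.2 0 h0 1 le_rfl hn)
  refine this.trans ?_
  have : ‖t - 0‖ ≤ 1 := by rw [sub_zero, Real.norm_eq_abs, abs_le]; exact ⟨ht.1.le, ht.2.le⟩
  nlinarith

lemma comp_small {Φ : E → F} {c : E} {n : ℕ} (hn : 1 ≤ n) (hΦ : ContDiffAt ℝ n Φ c) {ε : ℝ}
    (hε : 0 < ε) {U : Set E} (hU : U ∈ 𝓝 c) :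
    ∃ δ > 0, ∀ a : ℝ → E, Sm n δ a → ‖a 0 - c‖ ≤ δ →
      Sm n ε (Φ ∘ a) ∧ ‖Φ (a 0) - Φ c‖ ≤ ε ∧ ∀ t ∈ Ioo (-1 : ℝ) 1, a t ∈ U := by
  have e1 := hΦ.eventually (by simp)
  have e2 : ∀ᶠ y in 𝓝 c, ∀ k ∈ Finset.range (n + 1),
      ‖iteratedFDeriv ℝ k Φ y‖ < ‖iteratedFDeriv ℝ k Φ c‖ + 1 := by
    rw [Filter.eventually_all_finset]
    intro k hk
    have hk' : k ≤ n := by simpa [Nat.lt_succ_iff] using hk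
    exact (hΦ.continuousAt_iteratedFDeriv (by exact_mod_cast hk')).norm.eventually_lt_const (by linarith)
  have e3 : ∀ᶠ y in 𝓝 c, ‖Φ y - Φ c‖ < ε := by
    have := (hΦ.continuousAt.sub (continuousAt_const (y := Φ c))).norm
    have h2 := this.eventually_lt_const (u := ε) (by simpa using hε)
    simpa using h2
  obtain ⟨ρ, hρ, hball⟩ := Metric.eventually_nhds_iff_ball.1 (e1.and (e2.and (e3.and hU)))
  set C := ∑ k ∈ Finset.range (n + 1), (‖iteratedFDeriv ℝ k Φ c‖ + 1) with hC
  have hCpos : 0 < C := Finset.sum_pos (fun k _ => by positivity) ⟨0, by simp⟩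
  set M := (n.factorial : ℝ) * C with hM
  have hMpos : 0 < M := by positivity
  set D := min 1 (ε / M) with hD
  have hDpos : 0 < D := by positivity
  have hD1 : D ≤ 1 := min_le_left _ _
  refine ⟨min (D ^ n) (ρ / 3), by positivity, fun a ha ha0 => ?_⟩
  have hin : ∀ t ∈ Ioo (-1 : ℝ) 1, a t ∈ Metric.ball c ρ := by
    intro t ht
    rw [mem_ball_iff_norm]
    have h1 := ha.dist hn ht
    have h2 : ‖a t - c‖ ≤ ‖a t - a 0‖ + ‖a 0 - c‖ := norm_sub_le_norm_sub_add_norm_sub _ _ _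
    have h3 := min_le_right (D ^ n) (ρ / 3)
    linarith
  have h0 : (0 : ℝ) ∈ Ioo (-1 : ℝ) 1 := by constructor <;> norm_num
  refine ⟨⟨?_, ?_⟩, (hball _ (hin 0 h0)).2.2.1.le, fun t ht => (hball _ (hin t ht)).2.2.2⟩
  · intro t ht
    exact (hball _ (hin t ht)).1.comp t (ha.1 t ht)
  · intro t ht k hk1 hkn
    rw [← norm_iteratedFDeriv_eq_norm_iteratedDeriv]
    have hW : ∀ (g : ℝ → F) , iteratedFDerivWithin ℝ k g (Ioo (-1 : ℝ) 1) t = iteratedFDeriv ℝ k g t :=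
      fun g => iteratedFDerivWithin_of_isOpen k isOpen_Ioo ht
    rw [← hW]
    have key := norm_iteratedFDerivWithin_comp_le (𝕜 := ℝ) (g := Φ) (f := a) (n := k) (N := n)
      (s := Ioo (-1 : ℝ) 1) (t := Metric.ball c ρ) (x := t) (C := C) (D := D)
      (fun y hy => (hball y hy).1.contDiffWithinAt) (fun y hy => (ha.1 y hy).contDiffWithinAt)
      (by exact_mod_cast hkn) Metric.isOpen_ball.uniqueDiffOn isOpen_Ioo.uniqueDiffOn hin ht
      (fun i hi => by
        rw [iteratedFDerivWithin_of_isOpen i Metric.isOpen_ball (hin t ht)]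
        refine ((hball _ (hin t ht)).2.1 i (by simp; omega)).le.trans ?_
        exact Finset.single_le_sum (f := fun k => ‖iteratedFDeriv ℝ k Φ c‖ + 1)
          (fun k _ => by positivity) (by simp; omega))
      (fun i h1 hi => by
        rw [iteratedFDerivWithin_of_isOpen i isOpen_Ioo ht, norm_iteratedFDeriv_eq_norm_iteratedDeriv]
        refine (ha.2 t ht i h1 (hi.trans hkn)).trans ((min_le_left _ _).trans ?_)
        exact pow_le_pow_of_le_one hDpos.le hD1 (hi.trans hkn))
    refine key.trans ?_
    have h1 : D ^ k ≤ D := by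
      simpa using pow_le_pow_of_le_one hDpos.le hD1 hk1
    have h2 : (k.factorial : ℝ) ≤ n.factorial := by exact_mod_cast Nat.factorial_le hkn
    calc (k.factorial : ℝ) * C * D ^ k ≤ n.factorial * C * D := by gcongr
      _ ≤ n.factorial * C * (ε / M) := by gcongr; exact min_le_right _ _
      _ = ε := by rw [← hM]; field_simp

lemma iteratedDeriv_pi' {n k : ℕ} {a : ℝ → Fin n → ℝ} {t : ℝ} (h : ContDiffAt ℝ k a t) (j : Fin n) :
    iteratedDeriv k a t j = iteratedDeriv k (fun t => a t j) t := by
  have := (ContinuousLinearMap.proj (R := ℝ) (φ := fun _ : Fin n => ℝ) j).iteratedFDeriv_comp_left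
    (i := k) h le_rfl
  rw [iteratedDeriv, iteratedDeriv]
  have h2 : (fun t => a t j) = (ContinuousLinearMap.proj (R := ℝ) (φ := fun _ : Fin n => ℝ) j) ∘ a := by
    ext; rfl
  rw [h2, this]
  rfl

lemma Sm_pi {n m : ℕ} {δ : ℝ} (hδ : 0 ≤ δ) {a : ℝ → Fin n → ℝ} :
    Sm m δ a ↔ ∀ j, Sm m δ (fun t => a t j) := by
  constructor
  · intro h j
    refine ⟨fun t ht => contDiffAt_pi.1 (h.1 t ht) j, fun t ht k h1 h2 => ?_⟩
    rw [← iteratedDeriv_pi' ((h.1 t ht).of_le (by exact_mod_cast h2))]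
    exact (norm_le_pi_norm _ j).trans (h.2 t ht k h1 h2)
  · intro h
    have hc : ∀ t ∈ Ioo (-1 : ℝ) 1, ContDiffAt ℝ m a t := fun t ht => contDiffAt_pi.2 (fun j => (h j).1 t ht)
    refine ⟨hc, fun t ht k h1 h2 => ?_⟩
    rw [pi_norm_le_iff_of_nonneg hδ]
    intro j
    rw [iteratedDeriv_pi' ((hc t ht).of_le (by exact_mod_cast h2))]
    exact (h j).2 t ht k h1 h2

lemma diffAt_iteratedDeriv {f : ℝ → F} {n k : ℕ} {t : ℝ} (h : ContDiffAt ℝ n f t) (hk : k < n) :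
    DifferentiableAt ℝ (iteratedDeriv k f) t := by
  have h1 := h.iteratedFDeriv_right (m := 1) (i := k) (by norm_cast; omega)
  rw [iteratedDeriv_eq_equiv_comp]
  exact (LinearIsometryEquiv.differentiable _ _).comp t (h1.differentiableAt (by simp))

lemma iteratedDeriv_affine (f : ℝ → F) (b c : ℝ) (k : ℕ) :
    iteratedDeriv k (fun x => f (b + c * x)) = fun x => c ^ k • iteratedDeriv k f (b + c * x) := by
  induction k with
  | zero => simp
  | succ k ih =>
    rw [iteratedDeriv_succ, ih]
    ext x
    have h1 : (fun x => c ^ k • iteratedDeriv k f (b + c * x)) =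
      c ^ k • (fun x => (fun y => iteratedDeriv k f (b + y)) (c * x)) := by ext; rfl
    rw [h1, deriv_const_smul_field, deriv_comp_mul_left (f := fun y => iteratedDeriv k f (b + y)),
      deriv_comp_const_add, smul_smul, ← pow_succ, iteratedDeriv_succ]

lemma landau (m : ℕ) : ∃ A : ℝ, 0 < A ∧ ∀ (C : ℝ) (f : ℝ → ℝ), 0 ≤ C →
    (∀ t ∈ Ioo (-1 : ℝ) 1, ContDiffAt ℝ m f t) → (∀ t ∈ Ioo (-1 : ℝ) 1, |f t| ≤ C) →
    (∀ t ∈ Ioo (-1 : ℝ) 1, |iteratedDeriv m f t| ≤ C) →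
    ∀ k ≤ m, ∀ t, |t| ≤ 1 / 2 → |iteratedDeriv k f t| ≤ A * C := by
  cases m with
  | zero =>
    refine ⟨1, one_pos, fun C f hC _ h1 _ k hk t ht => ?_⟩
    obtain rfl : k = 0 := by omega
    rw [abs_le] at ht
    simpa using h1 t ⟨by linarith, by linarith⟩
  | succ m =>
    set h : Fin (m + 1) → ℝ := fun i => 1 / (4 * ((i : ℕ) + 1)) with hh
    have hpos : ∀ i, 0 < h i := fun i => by simp only [hh]; positivity
    have hle : ∀ i, h i ≤ 1 / 4 := fun i => by
      simp only [hh]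
      apply one_div_le_one_div_of_le (by norm_num)
      have : (0 : ℝ) ≤ (i : ℕ) := by positivity
      linarith
    have hinj : Function.Injective h := by
      intro i j hij
      simp only [hh] at hij
      rw [one_div, one_div, inv_inj] at hij
      apply Fin.ext
      have : ((i : ℕ) : ℝ) = (j : ℕ) := by linarith
      exact_mod_cast this
    set V := Matrix.vandermonde h with hV
    have hdet : IsUnit V.det := (Matrix.det_vandermonde_ne_zero_iff.2 hinj).isUnit
    set S := ∑ k, ∑ i, |V⁻¹ k i| with hS
    have hSn : 0 ≤ S := Finset.sum_nonneg (fun k _ => Finset.sum_nonneg (fun i _ => abs_nonneg _))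
    refine ⟨((m + 1).factorial : ℝ) * S * 2 + 1, by positivity, fun C f hC hf h1 h2 k hk t ht => ?_⟩
    rw [abs_le] at ht
    rcases Nat.lt_or_ge m k with hkm | hkm
    · obtain rfl : k = m + 1 := by omega
      refine (h2 t ⟨by linarith, by linarith⟩).trans ?_
      have : 0 ≤ ((m + 1).factorial : ℝ) * S * 2 * C := by positivity
      linarith
    -- Taylor
    have hsub : Icc t (t + 1 / 4) ⊆ Ioo (-1 : ℝ) 1 := fun y hy => ⟨by linarith [hy.1], by linarith [hy.2]⟩
    have hud : UniqueDiffOn ℝ (Icc t (t + 1 / 4)) := uniqueDiffOn_Icc (by linarith)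
    have hitw : ∀ l ≤ m + 1, ∀ y ∈ Icc t (t + 1 / 4),
        iteratedDerivWithin l f (Icc t (t + 1 / 4)) y = iteratedDeriv l f y := fun l hl y hy =>
      iteratedDerivWithin_eq_iteratedDeriv hud ((hf y (hsub hy)).of_le (by exact_mod_cast hl)) hy
    have htmem : t ∈ Icc t (t + 1 / 4) := ⟨le_rfl, by linarith⟩
    set x : Fin (m + 1) → ℝ := fun l => ((l : ℕ).factorial : ℝ)⁻¹ * iteratedDeriv l f t with hx
    have hy : ∀ i, |(V.mulVec x) i| ≤ 2 * C := by
      intro i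
      have hmem : t + h i ∈ Icc t (t + 1 / 4) := ⟨by linarith [hpos i], by linarith [hle i]⟩
      have T := taylor_mean_remainder_bound (f := f) (a := t) (b := t + 1 / 4) (C := C) (x := t + h i)
        (n := m) (by linarith) (fun y hy => (hf y (hsub hy)).contDiffWithinAt) hmem
        (fun y hy => by rw [hitw _ le_rfl y hy]; exact h2 y (hsub hy))
      have hval : taylorWithinEval f m (Icc t (t + 1 / 4)) t (t + h i) = (V.mulVec x) i := by
        rw [taylor_within_apply, Matrix.mulVec, dotProduct, Finset.sum_range]
        apply Finset.sum_congr rfl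
        intro l _
        rw [hitw l (by have := l.2; omega) t htmem, hV, Matrix.vandermonde_apply, hx]
        simp only [smul_eq_mul, add_sub_cancel_left]
        ring
      rw [hval, Real.norm_eq_abs, add_sub_cancel_left] at T
      have hb := h1 _ (hsub hmem)
      have hrem : C * h i ^ (m + 1) / (m.factorial : ℝ) ≤ C := by
        rw [div_le_iff₀ (by positivity)]
        have a1 : h i ^ (m + 1) ≤ 1 := pow_le_one₀ (hpos i).le (by linarith [hle i])
        have a2 : (1 : ℝ) ≤ m.factorial := by exact_mod_cast Nat.one_le_iff_ne_zero.2 (Nat.factorial_ne_zero m)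
        nlinarith
      rw [abs_le] at *
      constructor <;> linarith
    have hxV : x = V⁻¹.mulVec (V.mulVec x) := by
      rw [Matrix.mulVec_mulVec, Matrix.nonsing_inv_mul _ hdet, Matrix.one_mulVec]
    have hxb : |x ⟨k, by omega⟩| ≤ S * (2 * C) := by
      rw [hxV, Matrix.mulVec, dotProduct]
      refine (Finset.abs_sum_le_sum_abs _ _).trans ?_
      calc _ ≤ ∑ i, |V⁻¹ ⟨k, by omega⟩ i| * (2 * C) := by
            apply Finset.sum_le_sum
            intro i _
            rw [abs_mul]
            gcongr
            exact hy i
        _ = (∑ i, |V⁻¹ ⟨k, by omega⟩ i|) * (2 * C) := by rw [Finset.sum_mul]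
        _ ≤ S * (2 * C) := by
            gcongr
            exact Finset.single_le_sum (f := fun k => ∑ i, |V⁻¹ k i|)
              (fun k _ => Finset.sum_nonneg (fun i _ => abs_nonneg _)) (Finset.mem_univ _)
    have hfx : iteratedDeriv k f t = (k.factorial : ℝ) * x ⟨k, by omega⟩ := by
      simp only [hx]
      have : (k.factorial : ℝ) ≠ 0 := by exact_mod_cast Nat.factorial_ne_zero k
      field_simp
    rw [hfx, abs_mul, abs_of_nonneg (by positivity : (0 : ℝ) ≤ (k.factorial : ℝ))]
    have h3 : (k.factorial : ℝ) ≤ (m + 1).factorial := by exact_mod_cast Nat.factorial_le hk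
    calc (k.factorial : ℝ) * |x ⟨k, by omega⟩| ≤ (m + 1).factorial * (S * (2 * C)) := by gcongr
      _ ≤ _ := by nlinarith

lemma landau_scaled (m : ℕ) : ∃ A : ℝ, 0 < A ∧ ∀ (C T : ℝ) (f : ℝ → ℝ), 0 ≤ C → 0 < T →
    (∀ t ∈ Ioo (-T) T, ContDiffAt ℝ m f t) → (∀ t ∈ Ioo (-T) T, |f t| ≤ C) →
    (∀ t ∈ Ioo (-T) T, |iteratedDeriv m f t| * T ^ m ≤ C) →
    ∀ k ≤ m, ∀ t, |t| ≤ T / 2 → |iteratedDeriv k f t| * T ^ k ≤ A * C := by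
  obtain ⟨A, hA, H⟩ := landau m
  refine ⟨A, hA, fun C T f hC hT h0 h1 h2 k hk t ht => ?_⟩
  have hmem : ∀ x ∈ Ioo (-1 : ℝ) 1, 0 + T * x ∈ Ioo (-T) T := fun x hx =>
    ⟨by nlinarith [hx.1], by nlinarith [hx.2]⟩
  have := H C (fun x => f (0 + T * x)) hC
    (fun x hx => (h0 _ (hmem x hx)).comp x (by fun_prop)) (fun x hx => h1 _ (hmem x hx))
    (fun x hx => by
      simp only [iteratedDeriv_affine]
      rw [smul_eq_mul, abs_mul, abs_of_pos (by positivity), mul_comm]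
      exact h2 _ (hmem x hx)) k hk (t / T) (by
        rw [abs_div, abs_of_pos hT, div_le_iff₀ hT]; linarith)
  simp only [iteratedDeriv_affine] at this
  rw [smul_eq_mul, abs_mul, abs_of_pos (by positivity), mul_comm] at this
  rwa [zero_add, mul_div_cancel₀ _ hT.ne'] at this

lemma nonneg_bound {f : ℝ → ℝ} {R η s : ℝ} (hη : 0 < η) (hs : 0 ≤ s) (hsR : s < Real.sqrt η * R) (hR : 0 < R)
    (hf : ∀ t ∈ Ioo (-R) R, ContDiffAt ℝ 2 f t) (h0 : ∀ t ∈ Ioo (-R) R, 0 ≤ f t)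
    (h2 : ∀ t ∈ Ioo (-R) R, |iteratedDeriv 2 f t| ≤ η) (hfs : f 0 = s ^ 2) :
    ∀ t ∈ Ioo (-R) R, f t ≤ (s + Real.sqrt η * |t|) ^ 2 := by
  have m0 : (0 : ℝ) ∈ Ioo (-R) R := ⟨by linarith, hR⟩
  set w := Real.sqrt η with hw
  have hw2 : w ^ 2 = η := Real.sq_sqrt hη.le
  have hwpos : 0 < w := Real.sqrt_pos.2 hη
  have hd1 : ∀ t ∈ Ioo (-R) R, DifferentiableAt ℝ f t := fun t ht => (hf t ht).differentiableAt (by simp)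
  have hd2 : ∀ t ∈ Ioo (-R) R, DifferentiableAt ℝ (deriv f) t := fun t ht => by
    have h := diffAt_iteratedDeriv (hf t ht) (k := 1) (by norm_num)
    rwa [iteratedDeriv_one] at h
  have hder : ∀ u ∈ Ioo (-R) R, |deriv f u - deriv f 0| ≤ η * |u| := by
    intro u hu
    have := (convex_Ioo (-R) R).norm_image_sub_le_of_norm_deriv_le (f := deriv f) (C := η) hd2
      (fun x hx => by
        have := h2 x hx
        rwa [iteratedDeriv_succ, iteratedDeriv_one] at this) m0 hu
    simpa using this
  have htay : ∀ t ∈ Ioo (-R) R, |f t - f 0 - deriv f 0 * t| ≤ η * t ^ 2 := by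
    intro t ht
    have hsub : Icc (-|t|) |t| ⊆ Ioo (-R) R := by
      intro u hu
      have : |t| < R := abs_lt.2 ht
      exact ⟨by linarith [hu.1], by linarith [hu.2]⟩
    have hg : ∀ u ∈ Icc (-|t|) |t|, HasDerivAt (fun u => f u - deriv f 0 * u) (deriv f u - deriv f 0) u := by
      intro u hu
      exact ((hd1 u (hsub hu)).hasDerivAt.fun_sub ((hasDerivAt_id' u).const_mul (deriv f 0))).congr_deriv
        (by simp)
    have := (convex_Icc (-|t|) |t|).norm_image_sub_le_of_norm_hasDerivWithin_le
      (f := fun u => f u - deriv f 0 * u) (C := η * |t|)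
      (fun u hu => (hg u hu).hasDerivWithinAt)
      (fun u hu => (hder u (hsub hu)).trans (mul_le_mul_of_nonneg_left (abs_le.2 hu) hη.le))
      (x := 0) (y := t) ⟨by simp, by simp⟩ ⟨neg_abs_le t, le_abs_self t⟩
    have h3 : η * |t| * ‖t - 0‖ = η * t ^ 2 := by
      rw [sub_zero, Real.norm_eq_abs, mul_assoc, abs_mul_abs_self]; ring
    rw [h3, Real.norm_eq_abs] at this
    convert this using 2
    ring
  have hder0 : |deriv f 0| ≤ 2 * s * w := by
    have hτ : ∀ τ, 0 < τ → τ < R → |deriv f 0| * τ ≤ s ^ 2 + η * τ ^ 2 := by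
      intro τ h1 h3
      have a1 := htay τ ⟨by linarith, h3⟩
      have a2 := htay (-τ) ⟨by linarith, by linarith⟩
      have b1 := h0 τ ⟨by linarith, h3⟩
      have b2 := h0 (-τ) ⟨by linarith, by linarith⟩
      rw [abs_le] at a1 a2
      rw [hfs] at a1 a2
      rcases abs_cases (deriv f 0) with ⟨h, _⟩ | ⟨h, _⟩ <;> rw [h] <;> nlinarith
    rcases hs.eq_or_lt with h | h
    · rw [← h]
      by_contra hcon
      push Not at hcon
      simp only [mul_zero, zero_mul] at hcon
      set d := |deriv f 0|
      have h3 := hτ (min (R / 2) (d / (2 * η))) (by positivity) (lt_of_le_of_lt (min_le_left _ _) (by linarith))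
      set τ := min (R / 2) (d / (2 * η)) with hτd
      have hτp : 0 < τ := by positivity
      have h4 : τ ≤ d / (2 * η) := min_le_right _ _
      rw [le_div_iff₀ (by positivity)] at h4
      rw [← h] at h3
      nlinarith
    · have h3 := hτ (s / w) (by positivity) (by rw [div_lt_iff₀ hwpos]; linarith)
      rw [← hw2] at h3
      have h4 : s ^ 2 + w ^ 2 * (s / w) ^ 2 = 2 * s ^ 2 := by field_simp; ring
      rw [h4] at h3
      have h5 : |deriv f 0| * (s / w) * w ≤ 2 * s ^ 2 * w := by gcongr
      have h6 : |deriv f 0| * (s / w) * w = |deriv f 0| * s := by field_simp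
      rw [h6] at h5
      have h7 : |deriv f 0| * s ≤ (2 * s * w) * s := by linarith
      exact le_of_mul_le_mul_right h7 h
  intro t ht
  have h3 := htay t ht
  rw [abs_le, hfs] at h3
  have h4 : deriv f 0 * t ≤ |deriv f 0| * |t| := by rw [← abs_mul]; exact le_abs_self _
  have h5 : |deriv f 0| * |t| ≤ 2 * s * w * |t| := by gcongr
  have h6 : t ^ 2 = |t| ^ 2 := (sq_abs t).symm
  rw [h6] at h3
  nlinarith

end analysis
end Hyp

namespace Hyp
open Polynomial Filter Topology Set

/-- derivative bound for roots at zero -/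
def Concl {n : ℕ} (a : ℝ → Fin n → ℝ) (ε : ℝ) : Prop :=
  ∀ (l : ℝ → ℝ) (d : ℝ), HasDerivAt l d 0 → (∃ᶠ t in 𝓝[≠] (0 : ℝ), (pol (a t)).eval (l t) = 0) → |d| ≤ ε

def Spl {n : ℕ} (a : ℝ → Fin n → ℝ) : Prop := ∀ t ∈ Ioo (-1 : ℝ) 1, (pol (a t)).Splits

def Lc (n : ℕ) (c : Fin n → ℝ) (ε δ : ℝ) : Prop :=
  ∀ a : ℝ → Fin n → ℝ, Sm n δ a → Spl a → ‖a 0 - c‖ ≤ δ → Concl a ε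

def Good (n : ℕ) : Prop := ∀ c : Fin n → ℝ, (pol c).Splits → ∀ ε > 0, ∃ δ > 0, Lc n c ε δ

lemma ev_Ioo : ∀ᶠ t in 𝓝[≠] (0 : ℝ), t ∈ Ioo (-1 : ℝ) 1 :=
  nhdsWithin_le_nhds (Ioo_mem_nhds (by norm_num) (by norm_num))

lemma m01 : (0 : ℝ) ∈ Ioo (-1 : ℝ) 1 := by constructor <;> norm_num

lemma step1 {n : ℕ} (ih : ∀ m < n, Good m) (c : Fin n → ℝ) {p q : ℕ} (hp : p < n) (hq : q < n)
    (hpq : p + q = n) (c1 : Fin p → ℝ) (c2 : Fin q → ℝ) (hc : pol c = pol c1 * pol c2)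
    (hcop : IsCoprime (pol c1) (pol c2)) (h1 : (pol c1).Splits) (h2 : (pol c2).Splits) :
    ∀ ε > 0, ∃ δ > 0, Lc n c ε δ := by
  subst hpq
  intro ε hε
  obtain ⟨δ1, hδ1, L1⟩ := ih p hp c1 h1 ε hε
  obtain ⟨δ2, hδ2, L2⟩ := ih q hq c2 h2 ε hε
  obtain ⟨Ψ1, Ψ2, hΨ1, hΨ2, e1, e2, hev⟩ := factor c c1 c2 hc hcop (p + q)
  obtain ⟨η1, hη1, H1⟩ := comp_small (by omega) hΨ1 hδ1 hev
  obtain ⟨η2, hη2, H2⟩ := comp_small (by omega) hΨ2 hδ2 hev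
  refine ⟨min η1 η2, by positivity, fun a ha hs ha0 l d hd hf => ?_⟩
  obtain ⟨s1, b1, u⟩ := H1 a (ha.mono (min_le_left _ _)) (ha0.trans (min_le_left _ _))
  obtain ⟨s2, b2, -⟩ := H2 a (ha.mono (min_le_right _ _)) (ha0.trans (min_le_right _ _))
  have hf' : ∃ᶠ t in 𝓝[≠] (0 : ℝ), (pol (Ψ1 (a t))).eval (l t) = 0 ∨ (pol (Ψ2 (a t))).eval (l t) = 0 := by
    refine (hf.and_eventually ev_Ioo).mono ?_
    rintro t ⟨h, ht⟩
    have := u t ht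
    simp only [mem_ofPred_eq] at this
    rw [this, eval_mul] at h
    exact mul_eq_zero.1 h
  rw [frequently_or_distrib] at hf'
  rw [e1] at b1
  rw [e2] at b2
  rcases hf' with h | h
  · refine L1 (Ψ1 ∘ a) (s1.of_le (by omega)) (fun t ht => ?_) b1 l d hd h
    exact (hs t ht).of_dvd (pol_monic _).ne_zero (Dvd.intro _ (u t ht).symm)
  · refine L2 (Ψ2 ∘ a) (s2.of_le (by omega)) (fun t ht => ?_) b2 l d hd h
    exact (hs t ht).of_dvd (pol_monic _).ne_zero (Dvd.intro_left _ (u t ht).symm)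

lemma compact_unif {n : ℕ} {ε : ℝ} {K : Set (Fin n → ℝ)} (hK : IsCompact K)
    (h : ∀ r ∈ K, ∃ δ > 0, Lc n (rc r) ε δ) :
    ∃ δ > 0, ∀ r ∈ K, ∀ a : ℝ → Fin n → ℝ, Sm n δ a → Spl a → a 0 = rc r → Concl a ε := by
  refine hK.induction_on (p := fun S => ∃ δ > 0, ∀ r ∈ S, ∀ a : ℝ → Fin n → ℝ, Sm n δ a → Spl a →
    a 0 = rc r → Concl a ε) ⟨1, one_pos, by simp⟩ ?_ ?_ ?_
  · rintro s t hst ⟨δ, hδ, H⟩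
    exact ⟨δ, hδ, fun r hr => H r (hst hr)⟩
  · rintro s t ⟨δ, hδ, H⟩ ⟨δ', hδ', H'⟩
    refine ⟨min δ δ', by positivity, fun r hr a ha => ?_⟩
    rcases hr with hr | hr
    · exact H r hr a (ha.mono (min_le_left _ _))
    · exact H' r hr a (ha.mono (min_le_right _ _))
  · intro r hr
    obtain ⟨δ, hδ, H⟩ := h r hr
    refine ⟨{x | ‖rc x - rc r‖ < δ}, nhdsWithin_le_nhds ?_, δ, hδ, ?_⟩
    · have : ContinuousAt (fun x : Fin n → ℝ => ‖rc x - rc r‖) r := by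
        have := rc_continuous (n := n)
        fun_prop
      exact this.eventually_lt_const (by simpa using hδ)
    · intro x hx a ha hs ha0
      refine H a ha hs ?_
      rw [ha0]
      exact le_of_lt hx

lemma rc_zero {n : ℕ} : rc (fun _ : Fin n => (0 : ℝ)) = 0 := by
  ext i
  have := rc_bound (fun _ : Fin n => (0 : ℝ)) 0 (by simp) le_rfl i
  rw [zero_pow (by have := i.2; omega), zero_mul] at this
  simpa using this

lemma sh_const {m : ℕ} (ρ : ℝ) : sh (rc (fun _ : Fin (m + 1) => ρ)) = 0 := by
  obtain ⟨r, hr⟩ := splits_exists (sh_splits (rc_splits (fun _ : Fin (m + 1) => ρ)))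
  have hl := sh_last (rc_splits (fun _ : Fin (m + 1) => ρ))
  have : ∀ i, r i = ρ + rc (fun _ : Fin (m + 1) => ρ) (Fin.last m) / (m + 1) := by
    intro i
    have h1 : (pol (sh (rc (fun _ : Fin (m + 1) => ρ)))).eval (r i) = 0 := by
      rw [hr, rc_root]; exact ⟨i, rfl⟩
    rw [pol_sh, eval_comp] at h1
    obtain ⟨j, hj⟩ := rc_root.1 h1
    simp at hj
    linarith
  rw [rc_last] at this
  have h0 : ∀ i, r i = 0 := by
    intro i; rw [this i]; simp
    field_simp
    ring
  rw [hr, ← rc_zero]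
  congr 1
  ext i
  exact h0 i

lemma root_bound {m : ℕ} {a : ℝ → Fin (m + 2) → ℝ} {R η s : ℝ} (hη : 0 < η) (hs : 0 ≤ s)
    (hsR : s < Real.sqrt η * R) (hR : 0 < R)
    (hC : ∀ t ∈ Ioo (-R) R, ContDiffAt ℝ 2 (fun t => a t ⟨m, by omega⟩) t)
    (h2 : ∀ t ∈ Ioo (-R) R, |iteratedDeriv 2 (fun t => a t ⟨m, by omega⟩) t| ≤ η / 2)
    (hspl : ∀ t ∈ Ioo (-R) R, (pol (a t)).Splits) (hl : ∀ t ∈ Ioo (-R) R, a t (Fin.last (m + 1)) = 0)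
    (h0 : -2 * a 0 ⟨m, by omega⟩ = s ^ 2) :
    ∀ t ∈ Ioo (-R) R, ∀ r, a t = rc r → ∀ i, |r i| ≤ s + Real.sqrt η * |t| := by
  have hsum : ∀ t ∈ Ioo (-R) R, ∀ r, a t = rc r → ∑ j, (r j) ^ 2 = -2 * a t ⟨m, by omega⟩ := by
    intro t ht r hr
    rw [hr]
    exact rc_two r (by rw [← hr]; exact hl t ht)
  have key := nonneg_bound (f := fun t => -2 * a t ⟨m, by omega⟩) hη hs hsR hR
    (fun t ht => contDiffAt_const.mul (hC t ht))
    (fun t ht => by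
      obtain ⟨r, hr⟩ := splits_exists (hspl t ht)
      show 0 ≤ -2 * a t ⟨m, by omega⟩
      rw [← hsum t ht r hr]
      positivity)
    (fun t ht => by
      rw [iteratedDeriv_const_mul_field, abs_mul]
      have := h2 t ht
      norm_num
      linarith) h0
  intro t ht r hr i
  have h3 : -2 * a t ⟨m, by omega⟩ ≤ (s + Real.sqrt η * |t|) ^ 2 := key t ht
  rw [← hsum t ht r hr] at h3
  have h4 : (r i) ^ 2 ≤ ∑ j, (r j) ^ 2 :=
    Finset.single_le_sum (f := fun j => (r j) ^ 2) (fun j _ => sq_nonneg _) (Finset.mem_univ i)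
  exact abs_le_of_sq_le_sq (h4.trans h3) (by positivity)

end Hyp

namespace Hyp
open Polynomial Filter Topology Set

lemma freq_scale {s : ℝ} (hs : s ≠ 0) {P : ℝ → Prop} (h : ∃ᶠ t in 𝓝[≠] (0 : ℝ), P t) :
    ∃ᶠ t in 𝓝[≠] (0 : ℝ), P (s * t) := by
  have ht : Tendsto (fun t : ℝ => t / s) (𝓝[≠] 0) (𝓝[≠] 0) := by
    apply tendsto_nhdsWithin_of_tendsto_nhds_of_eventually_within
    · have : ContinuousAt (fun t : ℝ => t / s) 0 := by fun_prop
      have h2 := this.tendsto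
      simp only [zero_div] at h2
      exact h2.mono_left nhdsWithin_le_nhds
    · filter_upwards [self_mem_nhdsWithin] with t ht
      exact div_ne_zero ht hs
  refine ht.frequently (h.mono fun t h => ?_)
  rwa [mul_div_cancel₀ _ hs]

lemma sphere_compact (n : ℕ) : IsCompact {r : Fin n → ℝ | ∑ j, r j = 0 ∧ ∑ j, (r j) ^ 2 = 1} := by
  apply Metric.isCompact_of_isClosed_isBounded
  · exact (isClosed_eq (by fun_prop) (by fun_prop)).inter (isClosed_eq (by fun_prop) (by fun_prop))
  · refine (Metric.isBounded_closedBall (x := (0 : Fin n → ℝ)) (r := 1)).subset ?_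
    rintro r ⟨-, h⟩
    rw [mem_closedBall_zero_iff, pi_norm_le_iff_of_nonneg zero_le_one]
    intro i
    have h4 : (r i) ^ 2 ≤ ∑ j, (r j) ^ 2 :=
      Finset.single_le_sum (f := fun j => (r j) ^ 2) (fun j _ => sq_nonneg _) (Finset.mem_univ i)
    rw [h] at h4
    rw [Real.norm_eq_abs]
    exact abs_le_of_sq_le_sq (by linarith) zero_le_one

lemma sphere_unif {m : ℕ} (ih : ∀ k < m + 2, Good k) {ε : ℝ} (hε : 0 < ε) :
    ∃ δ > 0, ∀ r : Fin (m + 2) → ℝ, ∑ j, r j = 0 → ∑ j, (r j) ^ 2 = 1 → ∀ a : ℝ → Fin (m + 2) → ℝ,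
      Sm (m + 2) δ a → Spl a → a 0 = rc r → Concl a ε := by
  have h : ∀ r ∈ {r : Fin (m + 2) → ℝ | ∑ j, r j = 0 ∧ ∑ j, (r j) ^ 2 = 1},
      ∃ δ > 0, Lc (m + 2) (rc r) ε δ := by
    rintro r ⟨h0, h1⟩
    rcases dichotomy (rc_splits r) with ⟨ρ, hρ⟩ | ⟨p, q, hp, hq, hpq, c1, c2, hc, hcop, s1, s2⟩
    · exfalso
      have hl : rc r (Fin.last (m + 1)) = 0 := by rw [rc_last, h0, neg_zero]
      have a1 := rc_two r hl
      have hl2 := hl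
      rw [hρ] at hl2
      have a2 := rc_two _ hl2
      rw [rc_last] at hl2
      have : ρ = 0 := by
        simp at hl2
        rcases hl2 with h | h
        · have : (0 : ℝ) ≤ m := by positivity
          linarith
        · exact h
      rw [← hρ, ← a1, h1, this] at a2
      simp at a2
    · exact step1 ih _ hp hq hpq c1 c2 hc hcop s1 s2 ε hε
  obtain ⟨δ, hδ, H⟩ := compact_unif (sphere_compact (m + 2)) h
  exact ⟨δ, hδ, fun r h0 h1 => H r ⟨h0, h1⟩⟩

lemma landau_unif (N : ℕ) : ∃ A : ℝ, 0 < A ∧ ∀ m ≤ N, ∀ (C T : ℝ) (f : ℝ → ℝ), 0 ≤ C → 0 < T →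
    (∀ t ∈ Ioo (-T) T, ContDiffAt ℝ m f t) → (∀ t ∈ Ioo (-T) T, |f t| ≤ C) →
    (∀ t ∈ Ioo (-T) T, |iteratedDeriv m f t| * T ^ m ≤ C) →
    ∀ k ≤ m, ∀ t, |t| ≤ T / 2 → |iteratedDeriv k f t| * T ^ k ≤ A * C := by
  choose A hA H using landau_scaled
  refine ⟨∑ i ∈ Finset.range (N + 1), A i, Finset.sum_pos (fun i _ => hA i) ⟨0, by simp⟩, ?_⟩
  intro m hm C T f hC hT h1 h2 h3 k hk t ht
  refine (H m C T f hC hT h1 h2 h3 k hk t ht).trans ?_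
  gcongr
  exact Finset.single_le_sum (f := A) (fun i _ => (hA i).le) (by simp; omega)

/-- derivatives of the rescaled function -/
lemma scaled_deriv (f : ℝ → ℝ) (s : ℝ) (m k : ℕ) (x : ℝ) :
    iteratedDeriv k (fun τ => f (0 + s * τ) / s ^ m) x = s ^ k * iteratedDeriv k f (0 + s * x) / s ^ m := by
  have : (fun τ => f (0 + s * τ) / s ^ m) = (fun τ => (s ^ m)⁻¹ * f (0 + s * τ)) := by
    ext; rw [div_eq_inv_mul]
  rw [this, iteratedDeriv_const_mul_field (f := fun τ => f (0 + s * τ))]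
  simp only [iteratedDeriv_affine, smul_eq_mul]
  ring

lemma step3 {m : ℕ} (ih : ∀ k < m + 2, Good k) {ε : ℝ} (hε : 0 < ε) :
    ∃ δ > 0, ∀ a : ℝ → Fin (m + 2) → ℝ, Sm (m + 2) δ a → Spl a →
      (∀ t ∈ Ioo (-1 : ℝ) 1, a t (Fin.last (m + 1)) = 0) → ‖a 0‖ ≤ δ → Concl a ε := by
  obtain ⟨δ1, hδ1, H1⟩ := sphere_unif ih hε
  obtain ⟨A, hA, HA⟩ := landau_unif (m + 2)
  set N := m + 2 with hN
  set C : ℝ := 4 ^ N with hC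
  have hCpos : 0 < C := by positivity
  set T := max 2 (A * C / δ1) with hT
  have hT2 : 2 ≤ T := le_max_left _ _
  have hTpos : 0 < T := by linarith
  have hT1 : A * C ≤ δ1 * T := by
    have : A * C / δ1 ≤ T := le_max_right _ _
    rw [div_le_iff₀ hδ1] at this
    linarith
  set w := min ε (1 / T) with hw
  have hwpos : 0 < w := by positivity
  refine ⟨min δ1 (min (C / T ^ N) (w ^ 2 / 8)), by positivity, ?_⟩
  set δ := min δ1 (min (C / T ^ N) (w ^ 2 / 8)) with hδ
  have hδpos : 0 < δ := by positivity
  have d1 : δ ≤ δ1 := min_le_left _ _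
  have d2 : δ * T ^ N ≤ C := by
    rw [← le_div_iff₀ (by positivity)]
    exact (min_le_right _ _).trans (min_le_left _ _)
  have d3 : 8 * δ ≤ w ^ 2 := by
    have : δ ≤ w ^ 2 / 8 := (min_le_right _ _).trans (min_le_right _ _)
    linarith
  clear_value δ
  intro a ha hspl hlast ha0 l d hd hfr
  have haj := (Sm_pi hδpos.le).1 ha
  set w0 := Real.sqrt (8 * δ) with hw0
  have hw0w : w0 ≤ w := by
    rw [hw0]; exact Real.sqrt_le_iff.2 ⟨hwpos.le, d3⟩
  have hw0pos : 0 < w0 := Real.sqrt_pos.2 (by positivity)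
  set S := -2 * a 0 ⟨m, by omega⟩ with hS
  have hS0 : 0 ≤ S := by
    obtain ⟨r, hr⟩ := splits_exists (hspl 0 m01)
    have h1 := rc_two r (by rw [← hr]; exact hlast 0 m01)
    rw [← hr] at h1
    rw [hS, ← h1]
    positivity
  have hS1 : S ≤ 2 * δ := by
    have h1 := (norm_le_pi_norm (a 0) ⟨m, by omega⟩).trans ha0
    rw [Real.norm_eq_abs, abs_le] at h1
    linarith
  set s := Real.sqrt S with hs
  have hs0 : 0 ≤ s := Real.sqrt_nonneg _
  have hss : s ^ 2 = S := Real.sq_sqrt hS0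
  have hsw : 2 * s ≤ w0 := by
    apply Real.le_sqrt_of_sq_le
    nlinarith
  have RB := root_bound (a := a) (R := 1) (η := 8 * δ) (s := s) (by positivity) hs0
    (by rw [mul_one, ← hw0]; linarith) one_pos
    (fun t ht => ((haj _).1 t ht).of_le (by norm_cast; omega))
    (fun t ht => ((haj _).2 t ht 2 (by omega) (by omega)).trans (by linarith))
    hspl hlast hss.symm
  rw [← hw0] at RB
  rcases hs0.eq_or_lt with hs00 | hspos
  · rw [← hs00] at RB
    have hfr2 : ∃ᶠ t in 𝓝[≠] (0 : ℝ), |l t| ≤ w0 * |t| := by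
      refine (hfr.and_eventually ev_Ioo).mono ?_
      rintro t ⟨h, ht⟩
      obtain ⟨r, hr⟩ := splits_exists (hspl t ht)
      rw [hr, rc_root] at h
      obtain ⟨i, hi⟩ := h
      rw [hi]
      simpa using RB t ht r hr i
    have hl0 : l 0 = 0 := by
      have hc : ContinuousAt (fun t => |l t| - w0 * |t|) 0 := by
        have := hd.continuousAt
        fun_prop
      have := le_of_tendsto_of_frequently (hc.tendsto.mono_left (nhdsWithin_le_nhds (s := {0}ᶜ)))
        (hfr2.mono (fun t h => sub_nonpos.2 h))
      simpa using this
    have hsl := (hasDerivAt_iff_tendsto_slope.1 hd).abs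
    have := le_of_tendsto_of_frequently (b := w0) hsl ((hfr2.and_eventually self_mem_nhdsWithin).mono (by
      rintro t ⟨h, ht⟩
      have ht' : 0 < |t| := abs_pos.2 ht
      rw [slope_def_field, hl0, sub_zero, sub_zero, abs_div, div_le_iff₀ ht']
      exact h))
    exact this.trans (hw0w.trans (min_le_left _ _))
  · have hwT : w * T ≤ 1 := by
      have : w ≤ 1 / T := min_le_right _ _
      rwa [le_div_iff₀ hTpos] at this
    have hw0T : w0 * T ≤ 1 := (mul_le_mul_of_nonneg_right hw0w hTpos.le).trans hwT
    have hsT : s * T ≤ 1 / 2 := by nlinarith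
    have hs1 : s ≤ 1 := by nlinarith
    have hmem : ∀ τ ∈ Ioo (-T) T, 0 + s * τ ∈ Ioo (-1 : ℝ) 1 := by
      intro τ hτ
      constructor
      · nlinarith [hτ.1]
      · nlinarith [hτ.2]
    set b : ℝ → Fin N → ℝ := fun τ j => a (0 + s * τ) j / s ^ (N - (j : ℕ)) with hb
    have hmem1 : ∀ τ ∈ Ioo (-1 : ℝ) 1, τ ∈ Ioo (-T) T := fun τ hτ => ⟨by linarith [hτ.1], by linarith [hτ.2]⟩
    have hbspl : Spl b := fun τ hτ => splits_scale (hspl _ (hmem τ (hmem1 τ hτ))) hspos.ne'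
    obtain ⟨r, hr⟩ := splits_exists (hbspl 0 m01)
    have hbl : rc r (Fin.last (m + 1)) = 0 := by
      rw [← hr, hb]
      simp only [mul_zero, add_zero]
      rw [hlast 0 m01, zero_div]
    have hr0 : ∑ j, r j = 0 := by
      rw [rc_last] at hbl; linarith
    have hr1 : ∑ j, (r j) ^ 2 = 1 := by
      rw [rc_two r hbl, ← hr, hb]
      simp only [mul_zero, add_zero]
      rw [show N - m = 2 by omega, hss, mul_div_assoc', ← hS]
      exact div_self (by rw [← hss]; positivity)
    have hbC : ∀ j : Fin N, ∀ τ ∈ Ioo (-T) T, ∀ k : ℕ, k ≤ N → ContDiffAt ℝ k (fun τ => b τ j) τ := by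
      intro j τ hτ k hk
      have h1 : ContDiffAt ℝ k (fun t => a t j) (0 + s * τ) := ((haj j).1 _ (hmem τ hτ)).of_le (by exact_mod_cast hk)
      have h2 : ContDiffAt ℝ k (fun τ => a (0 + s * τ) j) τ := h1.comp τ (f := fun τ => 0 + s * τ) (by fun_prop)
      exact h2.div_const _
    have hbD : ∀ j : Fin N, ∀ τ, ∀ k, iteratedDeriv k (fun τ => b τ j) τ =
        s ^ k * iteratedDeriv k (fun t => a t j) (0 + s * τ) / s ^ (N - (j : ℕ)) := by
      intro j τ k
      exact scaled_deriv (fun t => a t j) s _ k τ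
    have hbig : ∀ j : Fin N, ∀ τ ∈ Ioo (-T) T, ∀ k, 1 ≤ k → k ≤ N → N - (j : ℕ) ≤ k →
        |iteratedDeriv k (fun τ => b τ j) τ| ≤ δ := by
      intro j τ hτ k hk1 hk hkj
      have h1 := (haj j).2 _ (hmem τ hτ) k hk1 hk
      rw [hbD, show k = (k - (N - (j : ℕ))) + (N - (j : ℕ)) by omega, pow_add,
        ← show k = (k - (N - (j : ℕ))) + (N - (j : ℕ)) by omega, mul_right_comm,
        mul_div_assoc, div_self (by positivity), mul_one, abs_mul, abs_of_nonneg (by positivity)]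
      have h2 : s ^ (k - (N - (j : ℕ))) ≤ 1 := pow_le_one₀ hs0 hs1
      rw [Real.norm_eq_abs] at h1
      calc _ ≤ 1 * δ := by gcongr
        _ = δ := one_mul _
    have hbS : Sm N δ1 b := by
      rw [Sm_pi hδ1.le]
      intro j
      refine ⟨fun τ hτ => hbC j τ (hmem1 τ hτ) N le_rfl, fun τ hτ k hk1 hk => ?_⟩
      rw [Real.norm_eq_abs]
      rcases le_total (N - (j : ℕ)) k with hkj | hkj
      · exact (hbig j τ (hmem1 τ hτ) k hk1 hk hkj).trans d1
      · have hj := j.2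
        have := HA (N - (j : ℕ)) (by omega) C T (fun τ => b τ j) hCpos.le hTpos
          (fun τ hτ => hbC j τ hτ _ (by omega))
          (fun τ hτ => by
            obtain ⟨r, hr⟩ := splits_exists (hspl _ (hmem τ hτ))
            have h1 := RB _ (hmem τ hτ) r hr
            have hτ' : |τ| ≤ T := abs_le.2 ⟨hτ.1.le, hτ.2.le⟩
            have h2 : ∀ i, |r i| ≤ 2 * s := by
              intro i
              refine (h1 i).trans ?_
              rw [zero_add, abs_mul, abs_of_pos hspos]
              have : w0 * (s * |τ|) ≤ w0 * (s * T) := by gcongr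
              nlinarith
            have h3 := rc_bound r (2 * s) h2 (by positivity) j
            rw [← hr] at h3
            simp only [hb]
            rw [abs_div, abs_of_pos (by positivity : 0 < s ^ (N - (j : ℕ))), div_le_iff₀ (by positivity)]
            refine h3.trans ?_
            rw [mul_pow]
            have h4 : (2 : ℝ) ^ (N - (j : ℕ)) ≤ 2 ^ N := pow_le_pow_right₀ (by norm_num) (by omega)
            have h5 : C = 2 ^ N * 2 ^ N := by rw [hC, ← mul_pow]; norm_num
            rw [h5]
            calc _ = 2 ^ (N - (j : ℕ)) * (2 ^ N * s ^ (N - (j : ℕ))) := by ring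
              _ ≤ 2 ^ N * (2 ^ N * s ^ (N - (j : ℕ))) := by gcongr
              _ = _ := by ring)
          (fun τ hτ => by
            have h1 := hbig j τ hτ (N - (j : ℕ)) (by omega) (by omega) le_rfl
            have h2 : T ^ (N - (j : ℕ)) ≤ T ^ N := pow_le_pow_right₀ (by linarith) (by omega)
            calc _ ≤ δ * T ^ N := by gcongr
              _ ≤ C := d2) k hkj τ (by
            have : |τ| ≤ 1 := abs_le.2 ⟨hτ.1.le, hτ.2.le⟩
            linarith)
        have h2 : T ≤ T ^ k := by
          calc T = T ^ 1 := (pow_one T).symm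
            _ ≤ T ^ k := pow_le_pow_right₀ (by linarith) hk1
        have h3 : |iteratedDeriv k (fun τ => b τ j) τ| * T ≤ δ1 * T := by
          calc _ ≤ |iteratedDeriv k (fun τ => b τ j) τ| * T ^ k := by gcongr
            _ ≤ _ := this
            _ ≤ _ := hT1
        exact le_of_mul_le_mul_right h3 hTpos
    refine H1 r hr0 hr1 b hbS hbspl hr (fun τ => l (s * τ) / s) d ?_ ?_
    · have h1 : HasDerivAt (fun τ : ℝ => s * τ) s 0 := ((hasDerivAt_id' (0 : ℝ)).const_mul s).congr_deriv (by simp)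
      have h2 : HasDerivAt l d (s * 0) := by rwa [mul_zero]
      have h3 := (h2.comp 0 h1).div_const s
      exact h3.congr_deriv (by field_simp)
    · refine (freq_scale hspos.ne' hfr).mono ?_
      intro τ h
      have := eval_scale _ hspos.ne' h
      simp only [hb, zero_add]
      exact this

lemma step3' {m : ℕ} (ih : ∀ k < m + 1, Good k) {ε : ℝ} (hε : 0 < ε) :
    ∃ δ > 0, ∀ a : ℝ → Fin (m + 1) → ℝ, Sm (m + 1) δ a → Spl a →
      (∀ t ∈ Ioo (-1 : ℝ) 1, a t (Fin.last m) = 0) → ‖a 0‖ ≤ δ → Concl a ε := by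
  cases m with
  | succ m => exact step3 ih hε
  | zero =>
    refine ⟨1, one_pos, fun a _ _ hl _ l d hd hfr => ?_⟩
    have hfr2 : ∃ᶠ t in 𝓝[≠] (0 : ℝ), |l t| ≤ 0 := by
      refine (hfr.and_eventually ev_Ioo).mono ?_
      rintro t ⟨h, ht⟩
      have := hl t ht
      rw [pol_eval] at h
      simp at h this
      rw [this] at h
      simp at h
      simp [h]
    have hl0 : l 0 = 0 := by
      have hc : ContinuousAt (fun t => |l t|) 0 := by
        have := hd.continuousAt
        fun_prop
      have := le_of_tendsto_of_frequently (hc.tendsto.mono_left (nhdsWithin_le_nhds (s := {0}ᶜ))) hfr2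
      simpa using this
    have hsl := (hasDerivAt_iff_tendsto_slope.1 hd).abs
    have := le_of_tendsto_of_frequently (b := 0) hsl (hfr2.mono (by
      intro t h
      have : l t = 0 := by simpa using h
      rw [slope_def_field, hl0, this]
      simp))
    exact this.trans hε.le

lemma good (n : ℕ) : Good n := by
  induction n using Nat.strong_induction_on with
  | _ n ih =>
  intro c hc ε hε
  rcases dichotomy hc with ⟨ρ, hρ⟩ | ⟨p, q, hp, hq, hpq, c1, c2, hc, hcop, s1, s2⟩
  swap
  · exact step1 ih _ hp hq hpq c1 c2 hc hcop s1 s2 ε hε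
  cases n with
  | zero =>
    refine ⟨1, one_pos, fun a _ _ _ l d _ hfr => ?_⟩
    exfalso
    obtain ⟨t, ht⟩ := hfr.exists
    rw [pol_eval] at ht
    simp at ht
  | succ m =>
    obtain ⟨δ3, hδ3, H3⟩ := step3' ih (half_pos hε)
    obtain ⟨δ, hδ, H⟩ := comp_small (n := m + 1) (c := c) (by omega) (sh_contDiff.contDiffAt) hδ3 univ_mem
    refine ⟨min δ (ε / 2), by positivity, fun a ha hspl ha0 l d hd hfr => ?_⟩
    obtain ⟨k1, k2, -⟩ := H a (ha.mono (min_le_left _ _)) (ha0.trans (min_le_left _ _))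
    rw [hρ, sh_const, sub_zero] at k2
    set h : ℝ → ℝ := fun t => a t (Fin.last m) with hh
    have hmn : 0 ≤ min δ (ε / 2) := by positivity
    have hSm := (Sm_pi hmn).1 ha (Fin.last m)
    have hdh : HasDerivAt h (deriv h 0) 0 :=
      ((hSm.1 0 m01).differentiableAt (by norm_cast)).hasDerivAt
    have hb : |deriv h 0| ≤ ε / 2 := by
      have := hSm.2 0 m01 1 le_rfl (by omega)
      rw [iteratedDeriv_one] at this
      exact this.trans (min_le_right _ _)
    have key := H3 (sh ∘ a) k1 (fun t ht => sh_splits (hspl t ht)) (fun t ht => sh_last (hspl t ht)) k2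
      (fun t => l t + h t / (m + 1)) (d + deriv h 0 / (m + 1)) (hd.fun_add (hdh.div_const _))
      (hfr.mono fun t ht => sh_root ht)
    have hb2 : |deriv h 0 / ((m : ℝ) + 1)| ≤ ε / 2 := by
      rw [abs_div, abs_of_pos (by positivity : (0 : ℝ) < (m : ℝ) + 1), div_le_iff₀ (by positivity)]
      have : (0 : ℝ) ≤ m := by positivity
      nlinarith
    rw [abs_le] at *
    constructor <;> linarith

/-- uniform version -/
lemma unif (n : ℕ) (M : ℝ) {ε : ℝ} (hε : 0 < ε) :
    ∃ δ > 0, ∀ r : Fin n → ℝ, ‖r‖ ≤ M → ∀ a : ℝ → Fin n → ℝ, Sm n δ a → Spl a → a 0 = rc r → Concl a ε := by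
  obtain ⟨δ, hδ, H⟩ := compact_unif (n := n) (ε := ε) (isCompact_closedBall (0 : Fin n → ℝ) M)
    (fun r _ => good n _ (rc_splits r) ε hε)
  exact ⟨δ, hδ, fun r hr => H r (by simpa using hr)⟩

end Hyp

namespace Hyp
open Polynomial Filter Topology Set

lemma contAt_iteratedDeriv {f : ℝ → ℝ} {n k : ℕ} {t : ℝ} (h : ContDiffAt ℝ n f t) (hk : k ≤ n) :
    ContinuousAt (iteratedDeriv k f) t := by
  rw [iteratedDeriv_eq_equiv_comp]
  exact (LinearIsometryEquiv.continuous _).continuousAt.comp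
    (h.continuousAt_iteratedFDeriv (by exact_mod_cast hk))

lemma vanish {f : ℝ → ℝ} {m : ℕ} {C : ℝ} (hf : ContDiffAt ℝ m f 0)
    (hC : ∀ᶠ t in 𝓝 (0 : ℝ), |f t| ≤ C * |t| ^ m) : ∀ k < m, iteratedDeriv k f 0 = 0 := by
  intro k hk
  obtain ⟨A, hA, H⟩ := landau_scaled m
  have e1 := hf.eventually (by simp)
  have e2 := (contAt_iteratedDeriv hf le_rfl).abs.eventually_lt_const (lt_add_one _)
  obtain ⟨R, hR, hb⟩ := Metric.eventually_nhds_iff.1 (e1.and (e2.and hC))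
  simp only [dist_zero_right, Real.norm_eq_abs] at hb
  set D := |C| + (|iteratedDeriv m f 0| + 1) with hD
  have hDpos : 0 < D := by positivity
  have key : ∀ᶠ T in 𝓝[>] (0 : ℝ), |iteratedDeriv k f 0| ≤ A * D * T := by
    have hlt : ∀ᶠ T in 𝓝[>] (0 : ℝ), T < min R 1 :=
      nhdsWithin_le_nhds (gt_mem_nhds (by positivity))
    filter_upwards [hlt, self_mem_nhdsWithin] with T hT1 hT
    have hT0 : 0 < T := hT
    have hTR : T < R := hT1.trans_le (min_le_left _ _)
    have hT1' : T ≤ 1 := hT1.le.trans (min_le_right _ _)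
    have hin : ∀ t ∈ Ioo (-T) T, |t| < R := fun t ht => (abs_lt.2 ht).trans hTR
    have h1 := H (D * T ^ m) T f (by positivity) hT0 (fun t ht => (hb (hin t ht)).1)
      (fun t ht => by
        refine (hb (hin t ht)).2.2.trans ?_
        have : |t| ≤ T := (abs_lt.2 ht).le
        have h3 : C ≤ D := by
          have := le_abs_self C
          have := abs_nonneg (iteratedDeriv m f 0)
          linarith
        calc C * |t| ^ m ≤ D * |t| ^ m := by gcongr
          _ ≤ D * T ^ m := by gcongr)
      (fun t ht => by
        have := (hb (hin t ht)).2.1.le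
        gcongr
        have := abs_nonneg C
        linarith) k hk.le 0 (by simp; positivity)
    have h2 : A * (D * T ^ m) = A * D * T ^ (m - k) * T ^ k := by
      rw [mul_assoc (A * D), ← pow_add, Nat.sub_add_cancel hk.le]; ring
    rw [h2] at h1
    have h3 := le_of_mul_le_mul_right h1 (by positivity)
    have h4 : T ^ (m - k) ≤ T := by
      simpa using pow_le_pow_of_le_one hT0.le hT1' (by omega : 1 ≤ m - k)
    exact h3.trans (by gcongr)
  have ht : Tendsto (fun T : ℝ => A * D * T) (𝓝[>] 0) (𝓝 0) := by
    have : ContinuousAt (fun T : ℝ => A * D * T) 0 := by fun_prop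
    have h2 := this.tendsto
    simp only [mul_zero] at h2
    exact h2.mono_left nhdsWithin_le_nhds
  have := ge_of_tendsto ht key
  exact abs_nonpos_iff.1 this

lemma decay_aux {f : ℝ → ℝ} {m : ℕ} (hf : ContDiffAt ℝ m f 0) (h0 : ∀ k ≤ m, iteratedDeriv k f 0 = 0) :
    ∀ j ≤ m, ∀ η > 0, ∀ᶠ t in 𝓝 (0 : ℝ), |iteratedDeriv (m - j) f t| ≤ η * |t| ^ j := by
  intro j
  induction j with
  | zero =>
    intro _ η hη
    have h1 := (contAt_iteratedDeriv hf le_rfl).abs.eventually_lt_const (u := η) (by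
      simpa [h0 m le_rfl] using hη)
    filter_upwards [h1] with t ht
    simpa using ht.le
  | succ j ih =>
    intro hj η hη
    obtain ⟨R, hR, hb⟩ := Metric.eventually_nhds_iff.1 ((hf.eventually (by simp)).and (ih (by omega) η hη))
    simp only [dist_zero_right, Real.norm_eq_abs] at hb
    refine Metric.eventually_nhds_iff.2 ⟨R, hR, ?_⟩
    intro t ht
    simp only [dist_zero_right, Real.norm_eq_abs] at ht
    have hsub : ∀ u ∈ Icc (-|t|) |t|, |u| ≤ |t| := fun u hu => abs_le.2 hu
    have hk : m - j = (m - (j + 1)) + 1 := by omega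
    have := (convex_Icc (-|t|) |t|).norm_image_sub_le_of_norm_deriv_le (f := iteratedDeriv (m - (j + 1)) f)
      (C := η * |t| ^ j)
      (fun u hu => diffAt_iteratedDeriv (hb ((hsub u hu).trans_lt ht)).1 (by omega))
      (fun u hu => by
        rw [← iteratedDeriv_succ, ← hk, Real.norm_eq_abs]
        refine (hb ((hsub u hu).trans_lt ht)).2.trans ?_
        have := hsub u hu
        gcongr)
      (x := 0) (y := t) ⟨by simp, by simp⟩ ⟨neg_abs_le t, le_abs_self t⟩
    rw [h0 _ (by omega), sub_zero, sub_zero, Real.norm_eq_abs, Real.norm_eq_abs] at this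
    rw [pow_succ, ← mul_assoc]
    exact this

lemma decay {f : ℝ → ℝ} {N m : ℕ} (hf : ContDiffAt ℝ N f 0) (hm : m ≤ N)
    (h0 : ∀ k ≤ m, iteratedDeriv k f 0 = 0) (i : ℕ) (hi : i ≤ N) :
    Tendsto (fun t => t ^ i * iteratedDeriv i f t * (t ^ m)⁻¹) (𝓝[≠] 0) (𝓝 0) := by
  rcases le_or_gt i m with him | him
  · rw [Metric.tendsto_nhds]
    intro ε hε
    have h1 := decay_aux (hf.of_le (by exact_mod_cast hm)) h0 (m - i) (by omega) (ε / 2) (half_pos hε)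
    rw [show m - (m - i) = i by omega] at h1
    filter_upwards [nhdsWithin_le_nhds h1, self_mem_nhdsWithin] with t ht htne
    have hpos : 0 < |t| := abs_pos.2 htne
    rw [dist_zero_right, Real.norm_eq_abs, abs_mul, abs_mul, abs_inv, abs_pow, abs_pow]
    calc _ ≤ |t| ^ i * (ε / 2 * |t| ^ (m - i)) * (|t| ^ m)⁻¹ := by gcongr
      _ = ε / 2 * (|t| ^ (i + (m - i)) * (|t| ^ m)⁻¹) := by rw [pow_add]; ring
      _ = ε / 2 := by rw [Nat.add_sub_cancel' him, mul_inv_cancel₀ (by positivity), mul_one]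
      _ < ε := by linarith
  · have hc : ContinuousAt (fun t => t ^ (i - m) * iteratedDeriv i f t) 0 := by
      have := contAt_iteratedDeriv hf hi
      fun_prop
    have h2 := hc.tendsto
    rw [zero_pow (by omega), zero_mul] at h2
    refine (h2.mono_left nhdsWithin_le_nhds).congr' ?_
    filter_upwards [self_mem_nhdsWithin] with t ht
    have hne : t ≠ 0 := ht
    have : t ^ i = t ^ (i - m) * t ^ m := by rw [← pow_add]; congr 1; omega
    rw [this]
    field_simp

lemma decay2 {f : ℝ → ℝ} {N m : ℕ} (hf : ContDiffAt ℝ N f 0) (hm : m ≤ N)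
    (h0 : ∀ k ≤ m, iteratedDeriv k f 0 = 0) (k : ℕ) (hk : k ≤ N) :
    Tendsto (fun t => t ^ k * iteratedDeriv k (fun t => f t * t ^ (-(m : ℤ))) t) (𝓝[≠] 0) (𝓝 0) := by
  set c : ℕ → ℝ := fun j => ∏ i ∈ Finset.range j, (((-(m : ℤ) : ℤ) : ℝ) - i) with hc
  have h1 : Tendsto (fun t => ∑ i ∈ Finset.range (k + 1), ((k.choose i : ℝ) * c (k - i)) *
      (t ^ i * iteratedDeriv i f t * (t ^ m)⁻¹)) (𝓝[≠] 0) (𝓝 0) := by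
    have := tendsto_finsetSum (f := fun i t => ((k.choose i : ℝ) * c (k - i)) *
      (t ^ i * iteratedDeriv i f t * (t ^ m)⁻¹)) (x := 𝓝[≠] (0 : ℝ)) (a := fun _ => 0) (Finset.range (k + 1))
      (fun i hi => by
        have hi' : i ≤ N := by have := Finset.mem_range.1 hi; omega
        simpa using (decay hf hm h0 i hi').const_mul ((k.choose i : ℝ) * c (k - i)))
    simpa using this
  refine h1.congr' ?_
  filter_upwards [nhdsWithin_le_nhds (hf.eventually (by simp)), self_mem_nhdsWithin] with t ht htne
  have hne : t ≠ 0 := htne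
  rw [iteratedDeriv_fun_mul (ht.of_le (by exact_mod_cast hk))
    (by
      simp only [zpow_neg, zpow_natCast]
      exact ContDiffAt.inv (by fun_prop) (pow_ne_zero _ hne)), Finset.mul_sum]
  apply Finset.sum_congr rfl
  intro i hi
  have hi' : i ≤ k := by have := Finset.mem_range.1 hi; omega
  rw [iteratedDeriv_eq_iterate (f := fun t : ℝ => t ^ (-(m : ℤ))), iter_deriv_zpow]
  have h3 : t ^ (-(m : ℤ) - ((k - i : ℕ) : ℤ)) = (t ^ m)⁻¹ * (t ^ (k - i))⁻¹ := by
    rw [zpow_sub₀ hne, zpow_neg, zpow_natCast, zpow_natCast]; rfl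
  have h4 : t ^ k = t ^ i * t ^ (k - i) := by rw [← pow_add]; congr 1; omega
  rw [h3, h4]
  simp only [hc]
  field_simp

lemma decay3 {f : ℝ → ℝ} {N m : ℕ} {C : ℝ} (hf : ContDiffAt ℝ N f 0) (hm : m ≤ N)
    (hC : ∀ᶠ t in 𝓝 (0 : ℝ), |f t| ≤ C * |t| ^ m) (k : ℕ) (hk1 : 1 ≤ k) (hk : k ≤ N) :
    Tendsto (fun t => t ^ k * iteratedDeriv k (fun t => f t / t ^ m) t) (𝓝[≠] 0) (𝓝 0) := by
  set A := iteratedDeriv m f 0 / m.factorial with hA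
  set F : ℝ → ℝ := fun t => f t - A * t ^ m with hF
  have hFC : ContDiffAt ℝ N F 0 := hf.sub (by fun_prop)
  have hFm : ContDiffAt ℝ m F 0 := hFC.of_le (by exact_mod_cast hm)
  have hFb : ∀ᶠ t in 𝓝 (0 : ℝ), |F t| ≤ (C + |A|) * |t| ^ m := by
    filter_upwards [hC] with t ht
    have h1 : |F t| ≤ |f t| + |A * t ^ m| := abs_sub _ _
    rw [abs_mul, abs_pow] at h1
    linarith
  have h0 : ∀ k ≤ m, iteratedDeriv k F 0 = 0 := by
    intro k hk
    rcases hk.eq_or_lt with rfl | hlt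
    · have h1 : iteratedDeriv k F 0 = iteratedDeriv k f 0 - iteratedDeriv k (fun t => A * t ^ k) 0 :=
        iteratedDeriv_sub (hf.of_le (by exact_mod_cast hm)) (by fun_prop)
      rw [h1, iteratedDeriv_const_mul_field, iteratedDeriv_fun_pow_zero, if_pos rfl, hA]
      have : (k.factorial : ℝ) ≠ 0 := by exact_mod_cast Nat.factorial_ne_zero k
      field_simp
      ring
    · exact vanish hFm hFb k hlt
  refine (decay2 hFC hm h0 k hk).congr' ?_
  filter_upwards [self_mem_nhdsWithin] with t ht
  have hne : t ≠ 0 := ht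
  congr 1
  have : (fun t => f t / t ^ m) =ᶠ[𝓝 t] (fun t => A + F t * t ^ (-(m : ℤ))) := by
    filter_upwards [isOpen_ne.mem_nhds hne] with u hu
    have hu' : u ≠ 0 := hu
    rw [zpow_neg, zpow_natCast]
    simp only [hF]
    field_simp
    ring
  rw [this.iteratedDeriv_eq, iteratedDeriv_const_add (by omega)]

/-- rescaled functions are almost constant -/
lemma decay_Sm {f : ℝ → ℝ} {N m : ℕ} {C : ℝ} (hf : ContDiffAt ℝ N f 0) (hm : m ≤ N)
    (hC : ∀ᶠ t in 𝓝 (0 : ℝ), |f t| ≤ C * |t| ^ m) {ε : ℝ} (hε : 0 < ε) :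
    ∀ᶠ s in 𝓝[≠] (0 : ℝ), Sm N ε (fun τ => f (s + s / 2 * τ) / (s + s / 2 * τ) ^ m) := by
  set g : ℝ → ℝ := fun t => f t / t ^ m with hg
  have e1 : ∀ᶠ t in 𝓝[≠] (0 : ℝ), ∀ k ∈ Finset.Icc 1 N, |t ^ k * iteratedDeriv k g t| < ε := by
    rw [Filter.eventually_all_finset]
    intro k hk
    rw [Finset.mem_Icc] at hk
    have h := (decay3 hf hm hC k hk.1 hk.2).abs
    rw [abs_zero] at h
    exact h.eventually_lt_const hε
  have e2 : ∀ᶠ t in 𝓝[≠] (0 : ℝ), ContDiffAt ℝ N g t := by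
    filter_upwards [nhdsWithin_le_nhds (hf.eventually (by simp)), self_mem_nhdsWithin] with t ht htne
    exact ht.div (by fun_prop) (pow_ne_zero _ htne)
  obtain ⟨R, hR, hb⟩ := Metric.eventually_nhds_iff.1 (eventually_nhdsWithin_iff.1 (e1.and e2))
  simp only [dist_zero_right, Real.norm_eq_abs] at hb
  rw [eventually_nhdsWithin_iff, Metric.eventually_nhds_iff]
  refine ⟨R / 2, by positivity, fun s hs hsne => ?_⟩
  simp only [dist_zero_right, Real.norm_eq_abs] at hs
  have hs0 : 0 < |s| := abs_pos.2 hsne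
  have hfac : ∀ τ ∈ Ioo (-1 : ℝ) 1, |s| / 2 ≤ |s + s / 2 * τ| ∧ |s + s / 2 * τ| < R := by
    intro τ hτ
    have h1 : s + s / 2 * τ = s * (1 + τ / 2) := by ring
    have h2 : 0 < 1 + τ / 2 := by linarith [hτ.1]
    rw [h1, abs_mul, abs_of_pos h2]
    constructor
    · nlinarith [hτ.1]
    · nlinarith [hτ.2]
  have hne : ∀ τ ∈ Ioo (-1 : ℝ) 1, s + s / 2 * τ ∈ ({0}ᶜ : Set ℝ) := by
    intro τ hτ
    have := (hfac τ hτ).1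
    exact abs_pos.1 (by linarith)
  refine ⟨fun τ hτ => ?_, fun τ hτ k hk1 hk => ?_⟩
  · exact (hb (hfac τ hτ).2 (hne τ hτ)).2.comp τ (f := fun τ => s + s / 2 * τ) (by fun_prop)
  · have h1 : iteratedDeriv k (fun τ => g (s + s / 2 * τ)) τ = (s / 2) ^ k • iteratedDeriv k g (s + s / 2 * τ) := by
      rw [iteratedDeriv_affine]
    have h2 := (hb (hfac τ hτ).2 (hne τ hτ)).1 k (Finset.mem_Icc.2 ⟨hk1, hk⟩)
    change ‖iteratedDeriv k (fun τ => g (s + s / 2 * τ)) τ‖ ≤ ε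
    rw [h1, smul_eq_mul, Real.norm_eq_abs, abs_mul, abs_pow]
    rw [abs_mul, abs_pow] at h2
    refine le_trans ?_ h2.le
    have h3 : |s / 2| ≤ |s + s / 2 * τ| := by
      rw [abs_div, abs_two]; exact (hfac τ hτ).1
    gcongr

end Hyp

namespace Hyp
open Polynomial Filter Topology Set

lemma central {m : ℕ} {a : ℝ → Fin (m + 2) → ℝ} (ha : ContDiffAt ℝ (m + 2 : ℕ) a 0)
    (hspl : ∀ᶠ t in 𝓝 (0 : ℝ), (pol (a t)).Splits) (hlast : ∀ᶠ t in 𝓝 (0 : ℝ), a t (Fin.last (m + 1)) = 0)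
    (ha0 : a 0 = 0) {l : ℝ → ℝ} (hl : ∀ᶠ t in 𝓝 (0 : ℝ), DifferentiableAt ℝ l t)
    (hroot : ∀ᶠ t in 𝓝 (0 : ℝ), (pol (a t)).eval (l t) = 0) : ContinuousAt (deriv l) 0 := by
  have haj : ∀ j, ContDiffAt ℝ (m + 2 : ℕ) (fun t => a t j) 0 := fun j => contDiffAt_pi.1 ha j
  -- linear bound of the roots
  obtain ⟨K, hK, hKb⟩ : ∃ K : ℝ, 0 < K ∧ ∀ᶠ t in 𝓝 (0 : ℝ), ∀ r, a t = rc r → ∀ i, |r i| ≤ K * |t| := by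
    have hf2 : ContDiffAt ℝ (2 : ℕ) (fun t => a t ⟨m, by omega⟩) 0 := (haj _).of_le (by norm_cast; omega)
    have e2 := (contAt_iteratedDeriv hf2 le_rfl).abs.eventually_lt_const (lt_add_one _)
    obtain ⟨R, hR, hb⟩ := Metric.eventually_nhds_iff.1
      ((hf2.eventually (by simp)).and (e2.and (hspl.and hlast)))
    simp only [dist_zero_right, Real.norm_eq_abs] at hb
    set η := 2 * (|iteratedDeriv 2 (fun t => a t ⟨m, by omega⟩) 0| + 1) with hη
    have hηpos : 0 < η := by positivity
    have hin : ∀ t ∈ Ioo (-R) R, |t| < R := fun t ht => abs_lt.2 ht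
    have hwpos := Real.sqrt_pos.2 hηpos
    have RB := root_bound (a := a) (R := R) (η := η) (s := 0) hηpos le_rfl (by positivity) hR
      (fun t ht => (hb (hin t ht)).1)
      (fun t ht => (hb (hin t ht)).2.1.le.trans (by rw [hη]; linarith))
      (fun t ht => (hb (hin t ht)).2.2.1) (fun t ht => (hb (hin t ht)).2.2.2) (by simp [ha0])
    refine ⟨Real.sqrt η, hwpos, ?_⟩
    filter_upwards [Ioo_mem_nhds (by linarith : -R < 0) hR] with t ht r hr i
    simpa using RB t ht r hr i
  have hbd : ∀ j : Fin (m + 2), ∀ᶠ t in 𝓝 (0 : ℝ),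
      |a t j| ≤ (K ^ (m + 2 - (j : ℕ)) * 2 ^ (m + 2)) * |t| ^ (m + 2 - (j : ℕ)) := by
    intro j
    filter_upwards [hKb, hspl] with t h1 h2
    obtain ⟨r, hr⟩ := splits_exists h2
    have := rc_bound r (K * |t|) (h1 r hr) (by positivity) j
    rw [← hr, mul_pow] at this
    linarith
  have hl0 : l 0 = 0 := by
    have h1 := hroot.self_of_nhds
    rw [ha0, ← rc_zero, rc_root] at h1
    exact h1.choose_spec
  have hlim : Tendsto (fun s => l s / s) (𝓝[≠] 0) (𝓝 (deriv l 0)) := by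
    have := hasDerivAt_iff_tendsto_slope.1 hl.self_of_nhds.hasDerivAt
    refine this.congr ?_
    intro s
    rw [slope_def_field, hl0, sub_zero, sub_zero]
  -- key estimate
  have key : ∀ ε > 0, ∀ᶠ s in 𝓝[≠] (0 : ℝ), |deriv l s - l s / s| ≤ 2 * ε := by
    intro ε hε
    obtain ⟨δ, hδ, HU⟩ := unif (m + 2) K hε
    have e1 : ∀ᶠ s in 𝓝[≠] (0 : ℝ), ∀ j : Fin (m + 2), Sm (m + 2) δ (fun τ => a (s + s / 2 * τ) j /
        (s + s / 2 * τ) ^ (m + 2 - (j : ℕ))) := by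
      rw [Filter.eventually_all]
      intro j
      exact decay_Sm (haj j) (by omega) (hbd j) hδ
    obtain ⟨R, hR, hb⟩ := Metric.eventually_nhds_iff.1 (hspl.and (hroot.and (hl.and hKb)))
    simp only [dist_zero_right, Real.norm_eq_abs] at hb
    have e2 : ∀ᶠ s in 𝓝[≠] (0 : ℝ), |s| < R / 2 := by
      refine nhdsWithin_le_nhds (Metric.eventually_nhds_iff.2 ?_)
      exact ⟨R / 2, by positivity, fun s hs => by simpa using hs⟩
    filter_upwards [e1, e2, self_mem_nhdsWithin] with s hs1 hs2 hsne'
    have hsne : s ≠ 0 := hsne'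
    have hs0 : 0 < |s| := abs_pos.2 hsne
    have hfac : ∀ τ ∈ Ioo (-1 : ℝ) 1, s + s / 2 * τ ≠ 0 ∧ |s + s / 2 * τ| < R := by
      intro τ hτ
      have h1 : s + s / 2 * τ = s * (1 + τ / 2) := by ring
      have h2 : 0 < 1 + τ / 2 := by linarith [hτ.1]
      rw [h1, abs_mul, abs_of_pos h2]
      constructor
      · positivity
      · nlinarith [hτ.2]
    set b : ℝ → Fin (m + 2) → ℝ := fun τ j => a (s + s / 2 * τ) j / (s + s / 2 * τ) ^ (m + 2 - (j : ℕ)) with hbdef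
    have hbS : Sm (m + 2) δ b := (Sm_pi hδ.le).2 hs1
    have hbspl : Spl b := fun τ hτ => splits_scale (hb (hfac τ hτ).2).1 (hfac τ hτ).1
    obtain ⟨r, hr⟩ := splits_exists (hbspl 0 m01)
    have hsR : |s| < R := by linarith
    have hb0 : b 0 = fun j => a s j / s ^ (m + 2 - (j : ℕ)) := by
      ext j; simp [hbdef]
    have hrK : ‖r‖ ≤ K := by
      rw [pi_norm_le_iff_of_nonneg hK.le]
      intro i
      have h1 : (pol (b 0)).eval (r i) = 0 := by rw [hr, rc_root]; exact ⟨i, rfl⟩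
      rw [hb0, pol_scale _ hsne, eval_mul, eval_C, eval_comp] at h1
      have h2 := (mul_eq_zero.1 h1).resolve_left (by positivity)
      obtain ⟨r', hr'⟩ := splits_exists (hb hsR).1
      rw [hr', rc_root] at h2
      obtain ⟨i', hi'⟩ := h2
      have h3 := (hb hsR).2.2.2 r' hr' i'
      rw [← hi'] at h3
      simp only [eval_mul, eval_C, eval_X, abs_mul] at h3
      rw [Real.norm_eq_abs]
      nlinarith
    have hd1 : HasDerivAt (fun τ : ℝ => s + s / 2 * τ) (s / 2) 0 :=
      (((hasDerivAt_id' (0 : ℝ)).const_mul (s / 2)).const_add s).congr_deriv (by simp)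
    have hd2 : HasDerivAt (fun t => l t / t) ((deriv l s * s - l s * 1) / s ^ 2) (s + s / 2 * 0) := by
      rw [mul_zero, add_zero]
      exact (hb hsR).2.2.1.hasDerivAt.fun_div (hasDerivAt_id' s) hsne
    have hd3 := hd2.comp 0 hd1
    have hfreq : ∃ᶠ τ in 𝓝[≠] (0 : ℝ), (pol (b τ)).eval (((fun t => l t / t) ∘ fun τ => s + s / 2 * τ) τ) = 0 := by
      apply Eventually.frequently
      filter_upwards [ev_Ioo] with τ hτ
      exact eval_scale _ (hfac τ hτ).1 (hb (hfac τ hτ).2).2.1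
    have h := HU r hrK b hbS hbspl hr _ _ hd3 hfreq
    have h5 : (deriv l s * s - l s * 1) / s ^ 2 * (s / 2) = (deriv l s - l s / s) / 2 := by
      field_simp
    rw [h5, abs_div, abs_two] at h
    linarith
  have hdiff : Tendsto (fun s => deriv l s - l s / s) (𝓝[≠] 0) (𝓝 0) := by
    rw [Metric.tendsto_nhds]
    intro ε hε
    filter_upwards [key (ε / 4) (by positivity)] with s hs
    rw [dist_zero_right, Real.norm_eq_abs]
    linarith
  have hfin := hdiff.add hlim
  simp only [sub_add_cancel, zero_add] at hfin
  exact continuousAt_iff_punctured_nhds.2 hfin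

lemma final (n : ℕ) : ∀ a : ℝ → Fin n → ℝ, ContDiffAt ℝ n a 0 → (∀ᶠ t in 𝓝 (0 : ℝ), (pol (a t)).Splits) →
    ∀ l : ℝ → ℝ, (∀ᶠ t in 𝓝 (0 : ℝ), DifferentiableAt ℝ l t) →
    (∀ᶠ t in 𝓝 (0 : ℝ), (pol (a t)).eval (l t) = 0) → ContinuousAt (deriv l) 0 := by
  induction n using Nat.strong_induction_on with
  | _ n ih =>
  intro a ha hspl l hl hroot
  have hl0c : ContinuousAt l 0 := hl.self_of_nhds.continuousAt
  rcases dichotomy hspl.self_of_nhds with ⟨ρ, hρ⟩ | ⟨p, q, hp, hq, hpq, c1, c2, hc, hcop, s1, s2⟩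
  swap
  · subst hpq
    obtain ⟨Ψ1, Ψ2, hΨ1, hΨ2, e1, e2, hev⟩ := factor (a 0) c1 c2 hc hcop (p + q)
    have k1 : ContDiffAt ℝ (p + q : ℕ) (Ψ1 ∘ a) 0 := hΨ1.comp 0 ha
    have k2 : ContDiffAt ℝ (p + q : ℕ) (Ψ2 ∘ a) 0 := hΨ2.comp 0 ha
    have hev' := ha.continuousAt.eventually hev
    have t1 : ∀ᶠ t in 𝓝 (0 : ℝ), (pol ((Ψ1 ∘ a) t)).Splits := by
      filter_upwards [hspl, hev'] with t h1 h2
      exact h1.of_dvd (pol_monic _).ne_zero (Dvd.intro _ h2.symm)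
    have t2 : ∀ᶠ t in 𝓝 (0 : ℝ), (pol ((Ψ2 ∘ a) t)).Splits := by
      filter_upwards [hspl, hev'] with t h1 h2
      exact h1.of_dvd (pol_monic _).ne_zero (Dvd.intro_left _ h2.symm)
    have c1' : ContinuousAt (fun t => (pol ((Ψ1 ∘ a) t)).eval (l t)) 0 :=
      pol_eval_continuous.continuousAt.comp (f := fun t => ((Ψ1 ∘ a) t, l t)) (k1.continuousAt.prodMk hl0c)
    have c2' : ContinuousAt (fun t => (pol ((Ψ2 ∘ a) t)).eval (l t)) 0 :=
      pol_eval_continuous.continuousAt.comp (f := fun t => ((Ψ2 ∘ a) t, l t)) (k2.continuousAt.prodMk hl0c)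
    have hor : (pol c1).eval (l 0) ≠ 0 ∨ (pol c2).eval (l 0) ≠ 0 := by
      by_contra hcon
      push Not at hcon
      obtain ⟨u, v, huv⟩ := hcop
      have := congrArg (eval (l 0)) huv
      simp [hcon.1, hcon.2] at this
    rcases hor with h | h
    · refine ih q hq (Ψ2 ∘ a) (k2.of_le (by norm_cast; omega)) t2 l hl ?_
      have h' := c1'.eventually_ne (y := 0) (by simpa [e1] using h)
      filter_upwards [h', hev', hroot] with t h1 h2 h3
      rw [h2, eval_mul] at h3
      exact (mul_eq_zero.1 h3).resolve_left h1
    · refine ih p hp (Ψ1 ∘ a) (k1.of_le (by norm_cast; omega)) t1 l hl ?_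
      have h' := c2'.eventually_ne (y := 0) (by simpa [e2] using h)
      filter_upwards [h', hev', hroot] with t h1 h2 h3
      rw [h2, eval_mul] at h3
      exact (mul_eq_zero.1 h3).resolve_right h1
  cases n with
  | zero =>
    have := hroot.self_of_nhds
    rw [pol_eval] at this
    simp at this
  | succ m =>
    set h : ℝ → ℝ := fun t => a t (Fin.last m) with hh
    have hhC : ContDiffAt ℝ (m + 1 : ℕ) h 0 := contDiffAt_pi.1 ha _
    have hhd : ∀ᶠ t in 𝓝 (0 : ℝ), DifferentiableAt ℝ h t := by
      filter_upwards [hhC.eventually (by simp)] with t ht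
      exact ht.differentiableAt (by norm_cast)
    have hhc : ContinuousAt (deriv h) 0 := by
      have := contAt_iteratedDeriv hhC (k := 1) (by omega)
      rwa [iteratedDeriv_one] at this
    set L : ℝ → ℝ := fun t => l t + h t / (m + 1) with hL
    have hLd : ∀ᶠ t in 𝓝 (0 : ℝ), DifferentiableAt ℝ L t := by
      filter_upwards [hl, hhd] with t h1 h2
      exact h1.add (h2.div_const _)
    have hLder : ∀ᶠ t in 𝓝 (0 : ℝ), deriv l t = deriv L t - deriv h t / (m + 1) := by
      filter_upwards [hl, hhd] with t h1 h2
      have := (h1.hasDerivAt.fun_add (h2.hasDerivAt.div_const ((m : ℝ) + 1))).deriv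
      rw [hL, this]; ring
    have hbC : ContDiffAt ℝ (m + 1 : ℕ) (sh ∘ a) 0 := sh_contDiff.contDiffAt.comp 0 ha
    have hbspl : ∀ᶠ t in 𝓝 (0 : ℝ), (pol ((sh ∘ a) t)).Splits := hspl.mono fun t ht => sh_splits ht
    have hblast : ∀ᶠ t in 𝓝 (0 : ℝ), (sh ∘ a) t (Fin.last m) = 0 := hspl.mono fun t ht => sh_last ht
    have hb0 : (sh ∘ a) 0 = 0 := by rw [Function.comp_apply, hρ, sh_const]
    have hbroot : ∀ᶠ t in 𝓝 (0 : ℝ), (pol ((sh ∘ a) t)).eval (L t) = 0 := hroot.mono fun t ht => sh_root ht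
    have hLc : ContinuousAt (deriv L) 0 := by
      cases m with
      | succ m => exact central hbC hbspl hblast hb0 hLd hbroot
      | zero =>
        have hz : L =ᶠ[𝓝 0] fun _ => 0 := by
          filter_upwards [hblast, hbroot] with t h1 h2
          rw [pol_eval] at h2
          simp at h1 h2
          rw [h1] at h2
          simpa using h2
        have hz' : deriv L =ᶠ[𝓝 0] fun _ => 0 := by
          filter_upwards [hz.eventuallyEq_nhds] with t ht
          rw [ht.deriv_eq]; simp
        exact continuousAt_const.congr hz'.symm
    exact (hLc.sub (hhc.div_const _)).congr (hLder.mono fun t ht => ht.symm)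

lemma final_at (n : ℕ) (c : ℝ → Fin n → ℝ) (hc : ContDiff ℝ n c) (hspl : ∀ t, (pol (c t)).Splits)
    (l : ℝ → ℝ) (hl : Differentiable ℝ l) (hroot : ∀ t, (pol (c t)).eval (l t) = 0) : ContDiff ℝ 1 l := by
  rw [contDiff_one_iff_deriv]
  refine ⟨hl, continuous_iff_continuousAt.2 fun t0 => ?_⟩
  have h := final n (fun t => c (t0 + t)) (hc.comp (by fun_prop : ContDiff ℝ n (fun t => t0 + t))).contDiffAt
    (Eventually.of_forall fun t => hspl _) (fun t => l (t0 + t))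
    (Eventually.of_forall fun t => by fun_prop) (Eventually.of_forall fun t => hroot _)
  have h2 : deriv (fun t => l (t0 + t)) = fun t => deriv l (t0 + t) := by
    ext t; rw [deriv_comp_const_add]
  rw [h2] at h
  have h3 : ContinuousAt (fun t : ℝ => t - t0) t0 := by fun_prop
  have h4 : ContinuousAt (fun t => deriv l (t0 + t)) (t0 - t0) := by rwa [sub_self]
  have h5 := ContinuousAt.comp (f := fun t : ℝ => t - t0) h4 h3
  have h6 : (fun t => deriv l (t0 + t)) ∘ (fun t : ℝ => t - t0) = deriv l := by
    ext t; simp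
  rwa [h6] at h5

lemma main (n : ℕ) (a : Fin n → ℝ → ℝ) (ha : ∀ j, ContDiff ℝ n (a j))
    (lam : Fin n → ℝ → ℝ) (hdiff : ∀ j, Differentiable ℝ (lam j))
    (hroots : ∀ t x : ℝ,
      x ^ n + ∑ j : Fin n, (-1 : ℝ) ^ ((j : ℕ) + 1) * a j t * x ^ (n - ((j : ℕ) + 1)) =
        ∏ j : Fin n, (x - lam j t)) : ∀ j, ContDiff ℝ 1 (lam j) := by
  intro j
  set c : ℝ → Fin n → ℝ := fun t i => (-1 : ℝ) ^ ((i.rev : ℕ) + 1) * a i.rev t with hc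
  have hpol : ∀ t, pol (c t) = ∏ j, (X - C (lam j t)) := by
    intro t
    apply Polynomial.funext
    intro x
    rw [pol_eval, eval_prod]
    simp only [eval_sub, eval_X, eval_C]
    rw [← hroots t x, ← Equiv.sum_comp Fin.revPerm]
    congr 1
    apply Finset.sum_congr rfl
    intro i _
    simp only [hc, Fin.revPerm_apply, Fin.rev_rev]
    rw [Fin.val_rev]
  refine final_at n c ?_ ?_ (lam j) (hdiff j) ?_
  · rw [contDiff_pi]
    intro i
    exact contDiff_const.mul (ha _)
  · intro t
    rw [hpol]
    exact Splits.prod (fun i _ => Splits.X_sub_C _)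
  · intro t
    rw [hpol, eval_prod]
    exact Finset.prod_eq_zero (Finset.mem_univ j) (by simp)

end Hyp


/-- If the coefficients of a curve of monic hyperbolic polynomials are of class `C^n`,
then any differentiable parameterization of the roots is actually `C^1`. -/
theorem differentiable_roots_are_C1 (n : ℕ) (hn : 1 ≤ n) (a : Fin n → ℝ → ℝ)
    (ha : ∀ j, ContDiff ℝ n (a j))
    (hhyp : ∀ t : ℝ, ∀ z : ℂ,
      z ^ n + ∑ j : Fin n, (-1 : ℂ) ^ ((j : ℕ) + 1) * (a j t : ℂ) * z ^ (n - ((j : ℕ) + 1)) = 0 →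
        z.im = 0)
    (lam : Fin n → ℝ → ℝ)
    (hdiff : ∀ j, Differentiable ℝ (lam j))
    (hroots : ∀ t x : ℝ,
      x ^ n + ∑ j : Fin n, (-1 : ℝ) ^ ((j : ℕ) + 1) * a j t * x ^ (n - ((j : ℕ) + 1)) =
        ∏ j : Fin n, (x - lam j t)) :
    ∀ j, ContDiff ℝ 1 (lam j) := by
  exact Hyp.main n a ha lam hdiff hroots
end

section
/- Let ρ : G → O(V) be an orthogonal representation of a finite group G on a finite-dimensional real Euclidean vector space V, let σ_1, …, σ_n be a system of homogeneous generators of the algebra ℝ[V]^G of G-invariant polynomial functions on V, let σ = (σ_1, …, σ_n) : V → ℝ^n, and let d = max{deg σ_i : 1 ≤ i ≤ n}. If c : ℝ → ℝ^n is a curve of class C^d whose values lie in σ(V), then there exists a differentiable curve c̄ : ℝ → V with σ ∘ c̄ = c. -/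
section LiftHelpers

open Filter Topology Set

/-- Peano form of the Taylor theorem with a polynomial. -/
theorem lift_taylor_poly {g : ℝ → ℝ} {t₀ : ℝ} {k : ℕ} (hg : ContDiffAt ℝ k g t₀) :
    ∃ R : Polynomial ℝ, Tendsto (fun t => (g t - R.eval (t - t₀)) / (t - t₀) ^ k)
      (𝓝 t₀) (𝓝 0) := by
  obtain ⟨u, hu, hgu⟩ := hg.contDiffOn (m := k) le_rfl (by simp)
  obtain ⟨ε, hε, hball⟩ := Metric.mem_nhds_iff.1 hu
  have h1 := Real.taylor_tendsto (convex_ball t₀ ε) (Metric.mem_ball_self hε) (hgu.mono hball)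
  rw [nhdsWithin_eq_nhds.2 (Metric.ball_mem_nhds _ hε)] at h1
  refine ⟨∑ j ∈ Finset.range (k + 1), Polynomial.monomial j
    (((j.factorial : ℝ)⁻¹) * iteratedDerivWithin j g (Metric.ball t₀ ε) t₀), ?_⟩
  refine h1.congr fun t => ?_
  rw [taylor_within_apply, Polynomial.eval_finsetSum]
  congr 2
  refine Finset.sum_congr rfl fun j _ => ?_
  simp [Polynomial.eval_monomial]
  ring

/-- A `C^k` function which is `O((t-t₀)^k)` has a limit after division by `(t-t₀)^k`. -/
theorem lift_taylor_limit {g : ℝ → ℝ} {t₀ : ℝ} {k : ℕ} (hg : ContDiffAt ℝ k g t₀) {C : ℝ}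
    (hC : ∀ᶠ t in 𝓝[≠] t₀, |g t / (t - t₀) ^ k| ≤ C) :
    ∃ a, Tendsto (fun t => g t / (t - t₀) ^ k) (𝓝[≠] t₀) (𝓝 a) := by
  obtain ⟨R, hR⟩ := lift_taylor_poly hg
  replace hR := hR.mono_left (nhdsWithin_le_nhds (s := {t₀}ᶜ))
  have key : ∀ S : Polynomial ℝ,
      Tendsto (fun t => S.eval (t - t₀)) (𝓝[≠] t₀) (𝓝 (S.eval 0)) := by
    intro S
    have : Continuous fun t : ℝ => S.eval (t - t₀) := by fun_prop
    have h := this.tendsto t₀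
    simp only [sub_self] at h
    exact h.mono_left nhdsWithin_le_nhds
  have hne : ∀ᶠ t in 𝓝[≠] t₀, t - t₀ ≠ 0 := by
    filter_upwards [self_mem_nhdsWithin] with t ht
    exact sub_ne_zero.2 ht
  have hdvd : Polynomial.X ^ k ∣ R := by
    by_cases hR0 : R = 0
    · simp [hR0]
    obtain ⟨S, hS, hnd⟩ := Polynomial.exists_eq_pow_rootMultiplicity_mul_and_not_dvd R hR0 0
    set j := R.rootMultiplicity 0
    simp only [Polynomial.C_0, sub_zero] at hS hnd
    by_cases hjk : k ≤ j
    · rw [hS]; exact Dvd.dvd.mul_right (pow_dvd_pow _ hjk) _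
    exfalso
    push Not at hjk
    apply hnd
    rw [Polynomial.X_dvd_iff, Polynomial.coeff_zero_eq_eval_zero]
    -- `S(t-t₀) = (R/(t-t₀)^k) (t-t₀)^(k-j)` tends to zero
    have hb : ∀ᶠ t in 𝓝[≠] t₀, |R.eval (t - t₀) / (t - t₀) ^ k| ≤ C + 1 := by
      have h1 : ∀ᶠ t in 𝓝[≠] t₀, |(g t - R.eval (t - t₀)) / (t - t₀) ^ k| < 1 := by
        have := hR.abs
        rw [abs_zero] at this
        exact this.eventually (gt_mem_nhds one_pos)
      filter_upwards [h1, hC] with t h1 h2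
      have : R.eval (t - t₀) / (t - t₀) ^ k
          = g t / (t - t₀) ^ k - (g t - R.eval (t - t₀)) / (t - t₀) ^ k := by ring
      rw [this]
      exact (abs_sub _ _).trans (by linarith)
    have hz : Tendsto (fun t => (C + 1) * |(t - t₀) ^ (k - j)|) (𝓝[≠] t₀) (𝓝 0) := by
      have : Continuous fun t : ℝ => (C + 1) * |(t - t₀) ^ (k - j)| := by fun_prop
      have h := this.tendsto t₀
      simp only [sub_self, zero_pow (Nat.sub_ne_zero_of_lt hjk), abs_zero, mul_zero] at h
      exact h.mono_left nhdsWithin_le_nhds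
    have hS0 : Tendsto (fun t => S.eval (t - t₀)) (𝓝[≠] t₀) (𝓝 0) := by
      refine squeeze_zero_norm' ?_ hz
      filter_upwards [hb, hne] with t hb ht
      have e : S.eval (t - t₀) = R.eval (t - t₀) / (t - t₀) ^ k * (t - t₀) ^ (k - j) := by
        have hk : (t - t₀) ^ k = (t - t₀) ^ j * (t - t₀) ^ (k - j) := by
          rw [← pow_add]; congr 1; omega
        rw [hS, hk]
        simp only [Polynomial.eval_mul, Polynomial.eval_pow, Polynomial.eval_X]
        have h1 : (t - t₀) ^ j ≠ 0 := pow_ne_zero _ ht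
        have h2 : (t - t₀) ^ (k - j) ≠ 0 := pow_ne_zero _ ht
        field_simp
      rw [e, Real.norm_eq_abs, abs_mul]
      exact mul_le_mul_of_nonneg_right hb (abs_nonneg _)
    exact tendsto_nhds_unique (key S) hS0
  obtain ⟨S, rfl⟩ := hdvd
  refine ⟨S.eval 0, ?_⟩
  have := hR.add (key S)
  rw [zero_add] at this
  refine this.congr' ?_
  filter_upwards [hne] with t ht
  simp only [Polynomial.eval_mul, Polynomial.eval_pow, Polynomial.eval_X]
  have h1 : (t - t₀) ^ k ≠ 0 := pow_ne_zero _ ht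
  field_simp
  ring

/-- A nonnegative `C²` function vanishing at `t₀` is `O((t-t₀)²)`. -/
theorem lift_quadratic_bound {g : ℝ → ℝ} {t₀ : ℝ} (hg : ContDiffAt ℝ 2 g t₀)
    (h0 : g t₀ = 0) (hpos : ∀ t, 0 ≤ g t) :
    ∃ C, ∀ᶠ t in 𝓝[≠] t₀, g t ≤ C * (t - t₀) ^ 2 := by
  have hd : HasDerivAt g 0 t₀ := by
    have h1 : deriv g t₀ = 0 := by
      apply IsLocalMin.deriv_eq_zero
      exact Eventually.of_forall fun t => by rw [h0]; exact hpos t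
    rw [← h1]
    exact (hg.differentiableAt (by norm_num)).hasDerivAt
  obtain ⟨R, hR⟩ := lift_taylor_poly (k := 2) hg
  replace hR := hR.mono_left (nhdsWithin_le_nhds (s := {t₀}ᶜ))
  have key : ∀ S : Polynomial ℝ,
      Tendsto (fun t => S.eval (t - t₀)) (𝓝[≠] t₀) (𝓝 (S.eval 0)) := by
    intro S
    have : Continuous fun t : ℝ => S.eval (t - t₀) := by fun_prop
    have h := this.tendsto t₀
    simp only [sub_self] at h
    exact h.mono_left nhdsWithin_le_nhds
  have kt : Tendsto (fun t => t - t₀) (𝓝[≠] t₀) (𝓝 0) := by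
    simpa using key Polynomial.X
  have hne : ∀ᶠ t in 𝓝[≠] t₀, t - t₀ ≠ 0 := by
    filter_upwards [self_mem_nhdsWithin] with t ht
    exact sub_ne_zero.2 ht
  have hs : Tendsto (fun t => g t / (t - t₀)) (𝓝[≠] t₀) (𝓝 0) := by
    have := hasDerivAt_iff_tendsto_slope.1 hd
    refine this.congr fun t => ?_
    rw [slope_def_field, h0, sub_zero]
  have hR1 : Polynomial.X ∣ R := by
    rw [Polynomial.X_dvd_iff, Polynomial.coeff_zero_eq_eval_zero]
    refine tendsto_nhds_unique (key R) ?_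
    have := (hs.mul kt).sub (hR.mul (kt.pow 2))
    simp only [mul_zero, zero_mul, sub_zero] at this
    refine this.congr' ?_
    filter_upwards [hne] with t ht
    field_simp
    ring
  obtain ⟨S, rfl⟩ := hR1
  have hR2 : Polynomial.X ∣ S := by
    rw [Polynomial.X_dvd_iff, Polynomial.coeff_zero_eq_eval_zero]
    refine tendsto_nhds_unique (key S) ?_
    have := hs.sub (hR.mul kt)
    simp only [zero_mul, sub_zero] at this
    refine this.congr' ?_
    filter_upwards [hne] with t ht
    simp only [Polynomial.eval_mul, Polynomial.eval_X]
    field_simp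
    ring
  obtain ⟨T, rfl⟩ := hR2
  have hfin : Tendsto (fun t => g t / (t - t₀) ^ 2) (𝓝[≠] t₀) (𝓝 (T.eval 0)) := by
    have := hR.add (key T)
    rw [zero_add] at this
    refine this.congr' ?_
    filter_upwards [hne] with t ht
    simp only [Polynomial.eval_mul, Polynomial.eval_X]
    field_simp
    ring
  refine ⟨T.eval 0 + 1, ?_⟩
  filter_upwards [hfin.eventually (gt_mem_nhds (lt_add_one _)), hne] with t h1 ht
  have : 0 < (t - t₀) ^ 2 := by positivity
  rw [div_lt_iff₀ this] at h1
  exact h1.le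

/-- A continuous simple root of a polynomial with `C^d` coefficients is `C^d`. -/
theorem lift_simple_root {d N : ℕ} (hd : d ≠ 0) (P : ℝ → Polynomial ℝ) (hN : ∀ t, (P t).natDegree < N)
    {t₀ : ℝ} (hP : ∀ k, ContDiffAt ℝ d (fun t => (P t).coeff k) t₀) (y : ℝ → ℝ)
    (hy : ContinuousAt y t₀) (hroot : ∀ t, (P t).eval (y t) = 0)
    (hsimple : (P t₀).derivative.eval (y t₀) ≠ 0) : ContDiffAt ℝ d y t₀ := by
  set F : ℝ × ℝ → ℝ := fun z => (P z.1).eval z.2 with hF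
  have hFs : F = fun z => ∑ k ∈ Finset.range N, (P z.1).coeff k * z.2 ^ k := by
    ext z
    exact Polynomial.eval_eq_sum_range' (hN z.1) z.2
  have cdf : ContDiffAt ℝ d F (t₀, y t₀) := by
    rw [hFs]
    refine ContDiffAt.sum fun k _ => ContDiffAt.mul ?_ (contDiffAt_snd.pow k)
    exact ContDiffAt.comp (t₀, y t₀) (g := fun t => (P t).coeff k) (hP k) contDiffAt_fst
  have hd' : (d : WithTop ℕ∞) ≠ 0 := by exact_mod_cast hd
  have hder : (fderiv ℝ F (t₀, y t₀)) (0, 1) = (P t₀).derivative.eval (y t₀) := by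
    have h1 : HasFDerivAt F (fderiv ℝ F (t₀, y t₀)) (t₀, y t₀) :=
      (cdf.differentiableAt hd').hasFDerivAt
    have h2 : HasDerivAt (fun T : ℝ => (t₀, T)) ((0 : ℝ), (1 : ℝ)) (y t₀) :=
      (hasDerivAt_const _ _).prodMk (hasDerivAt_id _)
    have h3 := HasFDerivAt.comp_hasDerivAt (y t₀) h1 h2
    exact h3.unique ((P t₀).hasDerivAt (y t₀))
  have hinv : (fderiv ℝ F (t₀, y t₀) ∘L .inr ℝ ℝ ℝ).IsInvertible := by
    refine ⟨ContinuousLinearEquiv.unitsEquivAut ℝ (Units.mk0 _ hsimple), ?_⟩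
    ext
    simp [hder]
  have h1 := cdf.contDiffAt_implicitFunction hd' hinv
  refine h1.congr_of_eventuallyEq ?_
  have h2 := cdf.eventually_apply_eq_iff_implicitFunction hd' hinv
  have h3 : Tendsto (fun t => (t, y t)) (𝓝 t₀) (𝓝 (t₀, y t₀)) :=
    (continuousAt_id.prodMk hy)
  filter_upwards [h3.eventually h2] with t ht
  refine (ht.1 ?_).symm
  simp only [hF, hroot]

section Gluing

set_option linter.unusedSectionVars false

variable {E : Type*} [NormedAddCommGroup E] [NormedSpace ℝ E]

/-- `y` picks, for each `t`, a point in the `K`-orbit of `x t`. -/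
def LiftMem (K : Subgroup (E ≃ₗᵢ[ℝ] E)) (x y : ℝ → E) : Prop :=
  ∀ t, ∃ g ∈ K, y t = g (x t)

theorem LiftMem.refl (K : Subgroup (E ≃ₗᵢ[ℝ] E)) (x : ℝ → E) : LiftMem K x x :=
  fun _ => ⟨1, K.one_mem, rfl⟩

theorem LiftMem.smul {K : Subgroup (E ≃ₗᵢ[ℝ] E)} {x y : ℝ → E} (h : LiftMem K x y)
    {g : E ≃ₗᵢ[ℝ] E} (hg : g ∈ K) : LiftMem K x (fun t => g (y t)) := by
  intro t
  obtain ⟨k, hk, e⟩ := h t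
  exact ⟨g * k, K.mul_mem hg hk, by simp [e]⟩

theorem LiftMem.rel {K : Subgroup (E ≃ₗᵢ[ℝ] E)} {x y z : ℝ → E} (hy : LiftMem K x y)
    (hz : LiftMem K x z) (t : ℝ) : ∃ g ∈ K, y t = g (z t) := by
  obtain ⟨k, hk, e⟩ := hy t
  obtain ⟨l, hl, e'⟩ := hz t
  refine ⟨k * l⁻¹, K.mul_mem hk (K.inv_mem hl), ?_⟩
  rw [e, e']
  change k (x t) = k (l.symm (l (x t)))
  rw [l.symm_apply_apply]

theorem LiftMem.ite {K : Subgroup (E ≃ₗᵢ[ℝ] E)} {x y z : ℝ → E} (hy : LiftMem K x y)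
    (hz : LiftMem K x z) (p : ℝ → Prop) [DecidablePred p] :
    LiftMem K x (fun t => if p t then y t else z t) := by
  intro t
  by_cases h : p t
  · simpa [h] using hy t
  · simpa [h] using hz t

/-- Finite pigeonhole for filters. -/
theorem lift_pigeonhole {ι α : Type*} {s : Set ι} (hs : s.Finite) {l : Filter α} [l.NeBot]
    {p : ι → α → Prop} (h : ∀ᶠ a in l, ∃ i ∈ s, p i a) : ∃ i ∈ s, ∃ᶠ a in l, p i a := by
  by_contra hcon
  push Not at hcon
  have h2 : ∀ᶠ a in l, ∀ i ∈ s, ¬ p i a := by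
    rw [eventually_all_finite hs]
    intro i hi
    exact hcon i hi
  obtain ⟨a, ⟨i, hi, h1⟩, h2⟩ := (h.and h2).exists
  exact h2 i hi h1

/-- Two lifts differentiable at the same point have the same value and derivative there, up to
one group element. -/
theorem lift_match {K : Subgroup (E ≃ₗᵢ[ℝ] E)} (hK : (K : Set (E ≃ₗᵢ[ℝ] E)).Finite)
    {x y z : ℝ → E} (hy : LiftMem K x y) (hz : LiftMem K x z) {s : ℝ} {y' z' : E}
    (dy : HasDerivAt y y' s) (dz : HasDerivAt z z' s) :
    ∃ g ∈ K, y s = g (z s) ∧ y' = g z' := by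
  have h : ∀ᶠ t in 𝓝[≠] s, ∃ g ∈ (K : Set (E ≃ₗᵢ[ℝ] E)), y t = g (z t) :=
    Eventually.of_forall fun t => hy.rel hz t
  obtain ⟨g, hg, hfr⟩ := lift_pigeonhole hK h
  have dgz : HasDerivAt (fun t => g (z t)) (g z') s :=
    (g.toContinuousLinearEquiv.toContinuousLinearMap.hasFDerivAt).comp_hasDerivAt s dz
  have hval : y s = g (z s) := by
    by_contra hne
    have h1 : ∀ᶠ t in 𝓝 s, y t ≠ g (z t) :=
      (dy.continuousAt.prodMk dgz.continuousAt).eventually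
        ((isClosed_diagonal (X := E)).isOpen_compl.mem_nhds (by simpa using hne))
    exact hfr (h1.filter_mono nhdsWithin_le_nhds)
  refine ⟨g, hg, hval, ?_⟩
  by_contra hne
  have t1 := hasDerivAt_iff_tendsto_slope.1 dy
  have t2 := hasDerivAt_iff_tendsto_slope.1 dgz
  have h1 : ∀ᶠ t in 𝓝[≠] s, slope y s t ≠ slope (fun t => g (z t)) s t :=
    (t1.prodMk_nhds t2).eventually
        ((isClosed_diagonal (X := E)).isOpen_compl.mem_nhds (by simpa using hne))
  refine hfr (h1.mono fun t ht e => ht ?_)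
  simp only [slope_def_module, e, hval]

/-- Gluing two functions with matching one-sided derivative. -/
theorem lift_hasDerivAt_ite {y z : ℝ → E} {s : ℝ} {w : E}
    (hy : HasDerivWithinAt y w (Iic s) s) (hz : HasDerivWithinAt z w (Ici s) s) (h : y s = z s) :
    HasDerivAt (fun t => if t ≤ s then y t else z t) w s := by
  have h1 : HasDerivWithinAt (fun t => if t ≤ s then y t else z t) w (Iic s) s :=
    hy.congr (fun t ht => by simp [mem_Iic.1 ht]) (by simp)
  have h2 : HasDerivWithinAt (fun t => if t ≤ s then y t else z t) w (Ici s) s := by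
    refine hz.congr (fun t ht => ?_) (by simp [h])
    rcases eq_or_lt_of_le (mem_Ici.1 ht) with rfl | hlt
    · simp [h]
    · simp [not_le.2 hlt]
  have := h1.union h2
  rwa [Iic_union_Ici, hasDerivWithinAt_univ] at this

/-- Gluing of two lifts at a point where both are differentiable. -/
theorem lift_glue {K : Subgroup (E ≃ₗᵢ[ℝ] E)} (hK : (K : Set (E ≃ₗᵢ[ℝ] E)).Finite)
    {x y z : ℝ → E} (hy : LiftMem K x y) (hz : LiftMem K x z) {s : ℝ}
    (dy : DifferentiableAt ℝ y s) (dz : DifferentiableAt ℝ z s) :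
    ∃ u, LiftMem K x u ∧ EqOn u y (Iic s) ∧ (∀ t ≤ s, DifferentiableAt ℝ y t →
      DifferentiableAt ℝ u t) ∧ (∀ t ≥ s, DifferentiableAt ℝ z t → DifferentiableAt ℝ u t) := by
  obtain ⟨g, hg, e, e'⟩ := lift_match hK hy hz dy.hasDerivAt dz.hasDerivAt
  have dg : ∀ t, DifferentiableAt ℝ z t → HasDerivAt (fun t => g (z t)) (g (deriv z t)) t :=
    fun t ht =>
      (g.toContinuousLinearEquiv.toContinuousLinearMap.hasFDerivAt).comp_hasDerivAt t ht.hasDerivAt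
  set u : ℝ → E := fun t => if t ≤ s then y t else g (z t) with hu
  have us : DifferentiableAt ℝ u s := by
    refine (lift_hasDerivAt_ite (z := fun t => g (z t)) dy.hasDerivAt.hasDerivWithinAt ?_ e).differentiableAt
    rw [e']
    exact (dg s dz).hasDerivWithinAt
  refine ⟨u, hy.ite (hz.smul hg) _, fun t ht => by simp [hu, mem_Iic.1 ht], ?_, ?_⟩
  · intro t ht h
    rcases eq_or_lt_of_le ht with rfl | hlt
    · exact us
    · refine h.congr_of_eventuallyEq ?_
      filter_upwards [gt_mem_nhds hlt] with r hr
      simp [hu, hr.le]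
  · intro t ht h
    rcases eq_or_lt_of_le ht with rfl | hlt
    · exact us
    · refine (dg t h).differentiableAt.congr_of_eventuallyEq ?_
      filter_upwards [lt_mem_nhds hlt] with r hr
      simp [hu, not_le.2 hr]

/-- Extending a lift to the right over a compact interval. -/
theorem lift_extend {K : Subgroup (E ≃ₗᵢ[ℝ] E)} (hK : (K : Set (E ≃ₗᵢ[ℝ] E)).Finite)
    {x : ℝ → E} {a b : ℝ} (hab : a ≤ b)
    (hloc : ∀ t ∈ Icc a b, ∃ y, LiftMem K x y ∧ ∀ᶠ s in 𝓝 t, DifferentiableAt ℝ y s)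
    {y : ℝ → E} (hy : LiftMem K x y) (dy : DifferentiableAt ℝ y a) :
    ∃ z, LiftMem K x z ∧ EqOn z y (Iic a) ∧ ∀ t ∈ Icc a b, DifferentiableAt ℝ z t := by
  set T : Set ℝ := {c | c ∈ Icc a b ∧
    ∃ z, LiftMem K x z ∧ EqOn z y (Iic a) ∧ ∀ t ∈ Icc a c, DifferentiableAt ℝ z t} with hT
  have haT : a ∈ T := by
    refine ⟨⟨le_rfl, hab⟩, y, hy, fun _ _ => rfl, fun t ht => ?_⟩
    rw [Icc_self] at ht
    rw [mem_singleton_iff.1 ht]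
    exact dy
  have hTb : BddAbove T := ⟨b, fun c hc => hc.1.2⟩
  set s := sSup T with hs
  have has : a ≤ s := le_csSup hTb haT
  have hsb : s ≤ b := csSup_le ⟨a, haT⟩ fun c hc => hc.1.2
  obtain ⟨z₀, hz₀, dz₀⟩ := hloc s ⟨has, hsb⟩
  obtain ⟨ε, hε, hball⟩ := Metric.eventually_nhds_iff.1 dz₀
  have dz : ∀ t, s - ε < t → t < s + ε → DifferentiableAt ℝ z₀ t := by
    intro t h1 h2
    apply hball
    rw [Real.dist_eq, abs_lt]
    constructor <;> linarith
  obtain ⟨c, hcT, hc⟩ := exists_lt_of_lt_csSup ⟨a, haT⟩ (show s - ε < sSup T by linarith)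
  have hcs : c ≤ s := le_csSup hTb hcT
  obtain ⟨⟨hac, hcb⟩, z, hz, hzy, dzc⟩ := hcT
  obtain ⟨u, hu, huz, du1, du2⟩ := lift_glue hK hz hz₀ (dzc c ⟨hac, le_rfl⟩)
    (dz c hc (by linarith))
  have hext : ∀ c', c' < s + ε → ∀ t ∈ Icc a c', DifferentiableAt ℝ u t := by
    intro c' hc' t ht
    rcases le_total t c with h | h
    · exact du1 t h (dzc t ⟨ht.1, h⟩)
    · exact du2 t h (dz t (by linarith) (by linarith [ht.2]))
  have huy : EqOn u y (Iic a) := fun t ht => by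
    rw [huz (mem_Iic.2 ((mem_Iic.1 ht).trans hac)), hzy ht]
  have hmem : min b (s + ε / 2) ∈ T := by
    refine ⟨⟨le_min hab (by linarith), min_le_left _ _⟩, u, hu, huy, hext _ ?_⟩
    exact (min_le_right _ _).trans_lt (by linarith)
  have hle := le_csSup hTb hmem
  have hbs : b ≤ s := by
    by_contra hlt
    push Not at hlt
    have : s < min b (s + ε / 2) := lt_min hlt (by linarith)
    linarith
  exact ⟨u, hu, huy, hext b (by linarith)⟩

/-- Existence of a lift on the right half of an open interval. -/
theorem lift_right {K : Subgroup (E ≃ₗᵢ[ℝ] E)} (hK : (K : Set (E ≃ₗᵢ[ℝ] E)).Finite)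
    {x : ℝ → E} {J : Set ℝ} (hJ : J.OrdConnected) (hJopen : IsOpen J)
    (hloc : ∀ t ∈ J, ∃ y, LiftMem K x y ∧ ∀ᶠ s in 𝓝 t, DifferentiableAt ℝ y s)
    {t₀ : ℝ} (ht₀ : t₀ ∈ J) :
    ∃ y, LiftMem K x y ∧ ∀ t ∈ J, t₀ ≤ t → DifferentiableAt ℝ y t := by
  classical
  set J' : Set ℝ := J ∩ Ici t₀ with hJ'
  have hJo : J'.OrdConnected := hJ.inter ordConnected_Ici
  have : Nonempty J' := ⟨⟨t₀, ht₀, mem_Ici.2 le_rfl⟩⟩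
  obtain ⟨b, hbm, hbt⟩ := exists_seq_monotone_tendsto_atTop_atTop J'
  have hstep : ∀ n (y : {y : ℝ → E // LiftMem K x y ∧ ∀ t ∈ Icc t₀ (b n : ℝ), DifferentiableAt ℝ y t}),
      ∃ z : {z : ℝ → E // LiftMem K x z ∧ ∀ t ∈ Icc t₀ (b (n + 1) : ℝ), DifferentiableAt ℝ z t},
        EqOn z.1 y.1 (Iic (b n : ℝ)) := by
    rintro n ⟨y, hy, dy⟩
    have hbn : (b n : ℝ) ≤ b (n + 1) := hbm (Nat.le_succ n)
    obtain ⟨z, hz, hzy, dz⟩ := lift_extend hK hbn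
      (fun t ht => hloc t (hJ.out (b n).2.1 (b (n + 1)).2.1 ht)) hy (dy _ ⟨(b n).2.2, le_rfl⟩)
    refine ⟨⟨z, hz, fun t ht => ?_⟩, hzy⟩
    rcases lt_or_ge t (b n : ℝ) with h | h
    · refine (dy t ⟨ht.1, h.le⟩).congr_of_eventuallyEq ?_
      filter_upwards [gt_mem_nhds h] with r hr
      exact hzy (mem_Iic.2 hr.le)
    · exact dz t ⟨h, ht.2⟩
  obtain ⟨y₀, hy₀, dy₀⟩ : ∃ y, LiftMem K x y ∧ ∀ t ∈ Icc t₀ (b 0 : ℝ), DifferentiableAt ℝ y t := by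
    obtain ⟨y, hy, dy⟩ := hloc t₀ ht₀
    obtain ⟨z, hz, -, dz⟩ := lift_extend hK (b 0).2.2
      (fun t ht => hloc t (hJ.out ht₀ (b 0).2.1 ht)) hy dy.self_of_nhds
    exact ⟨z, hz, dz⟩
  choose next hnext using hstep
  let Y : (n : ℕ) → {y : ℝ → E // LiftMem K x y ∧ ∀ t ∈ Icc t₀ (b n : ℝ), DifferentiableAt ℝ y t} :=
    fun n => Nat.rec ⟨y₀, hy₀, dy₀⟩ (fun n y => next n y) n
  have hY : ∀ n, EqOn (Y (n + 1)).1 (Y n).1 (Iic (b n : ℝ)) := fun n => hnext n (Y n)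
  have hY' : ∀ n k, EqOn (Y (n + k)).1 (Y n).1 (Iic (b n : ℝ)) := by
    intro n k
    induction k with
    | zero => exact fun _ _ => rfl
    | succ k ih =>
      intro t ht
      rw [← ih ht]
      exact hY (n + k) (mem_Iic.2 ((mem_Iic.1 ht).trans (hbm (Nat.le_add_right n k))))
  have hex : ∀ t ∈ J, t₀ ≤ t → ∃ n, t ≤ b n := by
    intro t ht h
    obtain ⟨n, hn⟩ := (hbt.eventually (eventually_ge_atTop ⟨t, ht, h⟩)).exists
    exact ⟨n, hn⟩
  -- the limit lift
  let y : ℝ → E := fun t => if h : ∃ n, t ≤ b n then (Y (Nat.find h)).1 t else x t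
  have hyeq : ∀ n, EqOn y (Y n).1 (Iic (b n : ℝ)) := by
    intro n t ht
    have h : ∃ n, t ≤ b n := ⟨n, ht⟩
    have h1 : y t = (Y (Nat.find h)).1 t := dif_pos h
    have h2 := Nat.find_min' h (show t ≤ b n from ht)
    obtain ⟨k, hk⟩ := Nat.exists_eq_add_of_le h2
    rw [h1]
    conv_rhs => rw [hk]
    exact (hY' _ k (Nat.find_spec h)).symm
  refine ⟨y, ?_, ?_⟩
  · intro t
    by_cases h : ∃ n, t ≤ b n
    · obtain ⟨n, hn⟩ := h
      rw [hyeq n hn]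
      exact (Y n).2.1 t
    · have : y t = x t := dif_neg h
      rw [this]
      exact LiftMem.refl K x t
  · intro t ht h
    obtain ⟨t', htt', hsub⟩ := exists_Ico_subset_of_mem_nhds (hJopen.mem_nhds ht) (exists_gt t)
    have hm : (t + t') / 2 ∈ J := hsub ⟨by linarith, by linarith⟩
    obtain ⟨n, hn⟩ := hex _ hm (by linarith)
    have htn : t < b n := by linarith
    refine ((Y n).2.2 t ⟨h, htn.le⟩).congr_of_eventuallyEq ?_
    filter_upwards [gt_mem_nhds htn] with r hr
    exact hyeq n (mem_Iic.2 hr.le)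

/-- Existence of a lift on an open interval. -/
theorem lift_interval {K : Subgroup (E ≃ₗᵢ[ℝ] E)} (hK : (K : Set (E ≃ₗᵢ[ℝ] E)).Finite)
    {x : ℝ → E} {J : Set ℝ} (hJ : J.OrdConnected) (hJopen : IsOpen J)
    (hloc : ∀ t ∈ J, ∃ y, LiftMem K x y ∧ ∀ᶠ s in 𝓝 t, DifferentiableAt ℝ y s) :
    ∃ y, LiftMem K x y ∧ ∀ t ∈ J, DifferentiableAt ℝ y t := by
  rcases J.eq_empty_or_nonempty with rfl | ⟨t₀, ht₀⟩
  · exact ⟨x, LiftMem.refl K x, by simp⟩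
  obtain ⟨yR, hyR, dyR⟩ := lift_right hK hJ hJopen hloc ht₀
  obtain ⟨yL', hyL', dyL'⟩ := lift_right (x := fun t => x (-t)) hK (J := Neg.neg ⁻¹' J)
    (hJ.preimage_anti (fun a b h => neg_le_neg h)) (hJopen.preimage continuous_neg) (by
      intro t ht
      obtain ⟨y, hy, dy⟩ := hloc (-t) ht
      refine ⟨fun t => y (-t), fun t => hy (-t), ?_⟩
      have := (continuous_neg.tendsto t).eventually dy
      filter_upwards [this] with s hs
      exact DifferentiableAt.comp s hs differentiable_neg.differentiableAt)
    (t₀ := -t₀) (by simpa using ht₀)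
  obtain ⟨u, hu, -, du1, du2⟩ := lift_glue hK (x := x) (y := fun t => yL' (-t)) (z := yR) (s := t₀)
    (fun t => by simpa using hyL' (-t)) hyR
    (DifferentiableAt.comp t₀ (dyL' (-t₀) (by simpa using ht₀) le_rfl)
      differentiable_neg.differentiableAt) (dyR t₀ ht₀ le_rfl)
  refine ⟨u, hu, fun t ht => ?_⟩
  rcases le_total t t₀ with h | h
  · exact du1 t h (DifferentiableAt.comp t (dyL' (-t) (by simpa using ht) (neg_le_neg h))
      differentiable_neg.differentiableAt)
  · exact du2 t h (dyR t ht h)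

/-- Local lifts give a lift on an open set. -/
theorem lift_open {K : Subgroup (E ≃ₗᵢ[ℝ] E)} (hK : (K : Set (E ≃ₗᵢ[ℝ] E)).Finite)
    {x : ℝ → E} {U : Set ℝ} (hU : IsOpen U)
    (hloc : ∀ t ∈ U, ∃ y, LiftMem K x y ∧ ∀ᶠ s in 𝓝 t, DifferentiableAt ℝ y s) :
    ∃ y, LiftMem K x y ∧ ∀ t ∈ U, DifferentiableAt ℝ y t := by
  classical
  have hopen : ∀ τ, IsOpen (U.ordConnectedComponent τ) := by
    intro τ
    rw [isOpen_iff_mem_nhds]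
    intro t ht
    have htU : t ∈ U := ordConnectedComponent_subset ht
    have h1 := ordConnectedComponent_mem_nhds.2 (hU.mem_nhds htU)
    rwa [← ordConnectedComponent_eq ht] at h1
  have hcomp : ∀ τ, ∃ y, LiftMem K x y ∧ ∀ t ∈ U.ordConnectedComponent τ,
      DifferentiableAt ℝ y t := fun τ =>
    lift_interval hK inferInstance (hopen τ) fun t ht => hloc t (ordConnectedComponent_subset ht)
  choose Y hY dY using hcomp
  refine ⟨fun t => if h : t ∈ U then Y (ordConnectedProj U ⟨t, h⟩) t else x t, ?_, ?_⟩
  · intro t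
    by_cases h : t ∈ U
    · simpa [h] using hY _ t
    · simpa [h] using LiftMem.refl K x t
  · intro t ht
    have hmem : t ∈ U.ordConnectedComponent (ordConnectedProj U ⟨t, ht⟩) :=
      mem_ordConnectedComponent_ordConnectedProj U ⟨t, ht⟩
    refine (dY _ t hmem).congr_of_eventuallyEq ?_
    filter_upwards [(hopen t).mem_nhds (self_mem_ordConnectedComponent.2 ht)] with r hr
    have hrU : r ∈ U := ordConnectedComponent_subset hr
    rw [dif_pos hrU]
    have : ordConnectedProj U ⟨r, hrU⟩ = ordConnectedProj U ⟨t, ht⟩ := by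
      rw [ordConnectedProj_eq, uIcc_comm]
      exact hr
    rw [this]

/-- A continuous function approaching a finite set, along a filter with a basis of connected sets,
converges to a point of this set. -/
theorem lift_converge {F : Set E} (hF : F.Finite) {D : ℝ → E} {l : Filter ℝ} [l.NeBot]
    (hl : ∀ s ∈ l, ∃ s' ∈ l, s' ⊆ s ∧ IsPreconnected s') (hD : ∀ᶠ t in l, ContinuousAt D t)
    (hnear : ∀ δ > 0, ∀ᶠ t in l, ∃ w ∈ F, dist (D t) w < δ) :
    ∃ w ∈ F, Tendsto D l (𝓝 w) := by
  obtain ⟨δ₀, hδ₀, hsep⟩ : ∃ δ₀ > 0, ∀ w ∈ F, ∀ w' ∈ F, w ≠ w' → 2 * δ₀ ≤ dist w w' := by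
    have : ∀ᶠ δ in 𝓝[>] (0 : ℝ), ∀ w ∈ F, ∀ w' ∈ F, w ≠ w' → 2 * δ ≤ dist w w' := by
      rw [eventually_all_finite hF]
      intro w _
      rw [eventually_all_finite hF]
      intro w' _
      by_cases hww : w = w'
      · exact Eventually.of_forall fun _ h => absurd hww h
      have : 0 < dist w w' / 2 := by have := dist_pos.2 hww; linarith
      filter_upwards [nhdsWithin_le_nhds (gt_mem_nhds this)] with δ hδ _
      linarith
    obtain ⟨δ, h1, h2⟩ := (this.and self_mem_nhdsWithin).exists
    exact ⟨δ, h2, h1⟩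
  obtain ⟨I, hI, hIsub, hIc⟩ := hl _ (hD.and (hnear δ₀ hδ₀))
  obtain ⟨t₁, ht₁⟩ := Filter.nonempty_of_mem hI
  obtain ⟨w, hw, hw1⟩ := (hIsub ht₁).2
  have himg : IsPreconnected (D '' I) := hIc.image D fun t ht => (hIsub ht).1.continuousWithinAt
  have hsub : D '' I ⊆ Metric.ball w δ₀ := by
    refine himg.subset_left_of_subset_union (v := ⋃ w' ∈ F \ {w}, Metric.ball w' δ₀)
      Metric.isOpen_ball (isOpen_biUnion fun _ _ => Metric.isOpen_ball) ?_ ?_ ?_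
    · rw [disjoint_iUnion₂_right]
      intro w' hw'
      apply Metric.ball_disjoint_ball
      have := hsep w hw w' hw'.1 (fun h => hw'.2 h.symm)
      linarith
    · rintro _ ⟨t, ht, rfl⟩
      obtain ⟨w', hw', h⟩ := (hIsub ht).2
      by_cases e : w' = w
      · left; rw [← e]; exact h
      · right; exact mem_biUnion ⟨hw', e⟩ h
    · exact ⟨D t₁, ⟨t₁, ht₁, rfl⟩, hw1⟩
  refine ⟨w, hw, Metric.tendsto_nhds.2 fun ε hε => ?_⟩
  filter_upwards [hI, hnear (min ε δ₀) (lt_min hε hδ₀)] with t ht hn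
  obtain ⟨w', hw', h⟩ := hn
  have e : w = w' := by
    by_contra hne
    have h1 := hsep w hw w' hw' hne
    have h2 : dist (D t) w < δ₀ := hsub ⟨t, ht, rfl⟩
    have h3 := dist_triangle_left w w' (D t)
    have := min_le_right ε δ₀
    linarith
  rw [e]
  exact h.trans_le (min_le_left _ _)

end Gluing

section Poly

variable {m : ℕ}

/-- Polynomial functions on `ℝ^m`. -/
def IsPolyFun (f : EuclideanSpace ℝ (Fin m) → ℝ) : Prop :=
  ∃ p : MvPolynomial (Fin m) ℝ, ∀ v, f v = MvPolynomial.eval (fun j => v j) p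

/-- Functions of degree at most `d` along all affine lines. -/
def LineDegLE (d : ℕ) (f : EuclideanSpace ℝ (Fin m) → ℝ) : Prop :=
  ∀ v u, ∃ q : Polynomial ℝ, q.natDegree ≤ d ∧ ∀ s : ℝ, f (v + s • u) = q.eval s

/-- Invariance of a function under a group of linear isometries. -/
def InvFun (K : Subgroup (EuclideanSpace ℝ (Fin m) ≃ₗᵢ[ℝ] EuclideanSpace ℝ (Fin m)))
    (f : EuclideanSpace ℝ (Fin m) → ℝ) : Prop :=
  ∀ g ∈ K, ∀ v, f (g v) = f v

theorem IsPolyFun.const (a : ℝ) : IsPolyFun (m := m) (fun _ => a) :=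
  ⟨MvPolynomial.C a, fun v => by simp⟩

theorem IsPolyFun.coord (j : Fin m) : IsPolyFun (m := m) (fun v => v j) :=
  ⟨MvPolynomial.X j, fun v => by simp⟩

theorem IsPolyFun.add {f g : EuclideanSpace ℝ (Fin m) → ℝ} (hf : IsPolyFun f) (hg : IsPolyFun g) :
    IsPolyFun (fun v => f v + g v) := by
  obtain ⟨p, hp⟩ := hf
  obtain ⟨q, hq⟩ := hg
  exact ⟨p + q, fun v => by simp [hp, hq]⟩

theorem IsPolyFun.mul {f g : EuclideanSpace ℝ (Fin m) → ℝ} (hf : IsPolyFun f) (hg : IsPolyFun g) :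
    IsPolyFun (fun v => f v * g v) := by
  obtain ⟨p, hp⟩ := hf
  obtain ⟨q, hq⟩ := hg
  exact ⟨p * q, fun v => by simp [hp, hq]⟩

theorem IsPolyFun.sum {ι : Type*} (s : Finset ι) {f : ι → EuclideanSpace ℝ (Fin m) → ℝ}
    (hf : ∀ i ∈ s, IsPolyFun (f i)) : IsPolyFun (fun v => ∑ i ∈ s, f i v) := by
  classical
  induction s using Finset.induction_on with
  | empty => simpa using IsPolyFun.const 0
  | insert a s ha ih =>
    simp only [Finset.sum_insert ha]
    exact (hf a (Finset.mem_insert_self _ _)).add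
      (ih fun i hi => hf i (Finset.mem_insert_of_mem hi))

theorem IsPolyFun.prod {ι : Type*} (s : Finset ι) {f : ι → EuclideanSpace ℝ (Fin m) → ℝ}
    (hf : ∀ i ∈ s, IsPolyFun (f i)) : IsPolyFun (fun v => ∏ i ∈ s, f i v) := by
  classical
  induction s using Finset.induction_on with
  | empty => simpa using IsPolyFun.const 1
  | insert a s ha ih =>
    simp only [Finset.prod_insert ha]
    exact (hf a (Finset.mem_insert_self _ _)).mul
      (ih fun i hi => hf i (Finset.mem_insert_of_mem hi))

theorem IsPolyFun.comp {f : EuclideanSpace ℝ (Fin m) → ℝ} (hf : IsPolyFun f)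
    {F : EuclideanSpace ℝ (Fin m) → EuclideanSpace ℝ (Fin m)}
    (hF : ∀ j, IsPolyFun (fun v => F v j)) : IsPolyFun (fun v => f (F v)) := by
  obtain ⟨p, hp⟩ := hf
  choose q hq using hF
  refine ⟨MvPolynomial.bind₁ q p, fun v => ?_⟩
  have := MvPolynomial.eval₂Hom_bind₁ (RingHom.id ℝ) (fun j => v j) q p
  simp only at hq
  simp only [hp, hq]
  exact this.symm

theorem IsPolyFun.continuous {f : EuclideanSpace ℝ (Fin m) → ℝ} (hf : IsPolyFun f) :
    Continuous f := by
  obtain ⟨p, hp⟩ := hf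
  have : f = fun v => MvPolynomial.eval (fun j => v j) p := funext hp
  rw [this]
  exact (MvPolynomial.continuous_eval p).comp (by fun_prop)

theorem IsPolyFun.comp_isometry {f : EuclideanSpace ℝ (Fin m) → ℝ} (hf : IsPolyFun f)
    (g : EuclideanSpace ℝ (Fin m) ≃ₗᵢ[ℝ] EuclideanSpace ℝ (Fin m)) :
    IsPolyFun (fun v => f (g v)) := by
  refine hf.comp fun j => ?_
  have : (fun v : EuclideanSpace ℝ (Fin m) => g v j)
      = fun v => ∑ i ∈ Finset.univ, g (EuclideanSpace.single i 1) j * v i := by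
    ext v
    have hv : v = ∑ i, v i • EuclideanSpace.single i (1 : ℝ) := by
      ext j
      simp [Finset.sum_apply, Pi.single_apply]
    conv_lhs => rw [hv]
    simp [map_sum, map_smul, mul_comm]
  rw [this]
  exact IsPolyFun.sum _ fun i _ => (IsPolyFun.const _).mul (IsPolyFun.coord i)

theorem IsPolyFun.comp_sub {f : EuclideanSpace ℝ (Fin m) → ℝ} (hf : IsPolyFun f)
    (w : EuclideanSpace ℝ (Fin m)) : IsPolyFun (fun v => f (v - w)) := by
  refine hf.comp fun j => ?_
  simpa [sub_eq_add_neg] using (IsPolyFun.coord j).add (IsPolyFun.const (-(w j)))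

theorem isPolyFun_dist_sq (w : EuclideanSpace ℝ (Fin m)) :
    IsPolyFun (fun v => ‖v - w‖ ^ 2) := by
  refine IsPolyFun.comp_sub (f := fun v => ‖v‖ ^ 2) ?_ w
  simp only [EuclideanSpace.norm_sq_eq, Real.norm_eq_abs, sq_abs]
  refine IsPolyFun.sum _ fun i _ => ?_
  simp only [sq]
  exact (IsPolyFun.coord i).mul (IsPolyFun.coord i)

/-- The `k`-homogeneous part is invariant, and the parts up to degree `d` sum up. -/
theorem IsPolyFun.decompose {f : EuclideanSpace ℝ (Fin m) → ℝ} (hf : IsPolyFun f) {d : ℕ}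
    (hd : LineDegLE d f)
    {K : Subgroup (EuclideanSpace ℝ (Fin m) ≃ₗᵢ[ℝ] EuclideanSpace ℝ (Fin m))}
    (hK : InvFun K f) :
    ∃ F : ℕ → EuclideanSpace ℝ (Fin m) → ℝ, (∀ k, IsPolyFun (F k)) ∧ (∀ k, InvFun K (F k)) ∧
      (∀ k (s : ℝ) v, F k (s • v) = s ^ k * F k v) ∧
      ∀ v, f v = ∑ k ∈ Finset.range (d + 1), F k v := by
  obtain ⟨p, hp⟩ := hf
  set F : ℕ → EuclideanSpace ℝ (Fin m) → ℝ :=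
    fun k v => MvPolynomial.eval (fun j => v j) (MvPolynomial.homogeneousComponent k p) with hF
  have hhom : ∀ k (s : ℝ) v, F k (s • v) = s ^ k * F k v := by
    intro k s v
    have h2 := (MvPolynomial.homogeneousComponent_isHomogeneous k p)
    simp only [hF]
    rw [MvPolynomial.eval_eq, MvPolynomial.eval_eq, Finset.mul_sum]
    refine Finset.sum_congr rfl fun e he => ?_
    have hdeg := h2 (MvPolynomial.mem_support_iff.1 he)
    have hdeg' : ∑ i ∈ e.support, e i = k := by
      rw [← hdeg, Finsupp.weight_apply]
      simp [Finsupp.sum]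
    simp only [PiLp.smul_apply, smul_eq_mul, mul_pow]
    rw [Finset.prod_mul_distrib, Finset.prod_pow_eq_pow_sum, hdeg']
    ring
  have hsum : ∀ v, f v = ∑ k ∈ Finset.range (p.totalDegree + 1), F k v := by
    intro v
    rw [hp]
    conv_lhs => rw [← MvPolynomial.sum_homogeneousComponent p]
    rw [map_sum]
  set Q : EuclideanSpace ℝ (Fin m) → Polynomial ℝ :=
    fun v => ∑ k ∈ Finset.range (p.totalDegree + 1), Polynomial.monomial k (F k v) with hQ
  have hQe : ∀ v s, f (s • v) = (Q v).eval s := by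
    intro v s
    rw [hsum, hQ, Polynomial.eval_finsetSum]
    refine Finset.sum_congr rfl fun k _ => ?_
    rw [hhom, Polynomial.eval_monomial, mul_comm]
  have hcoeff : ∀ k v, (Q v).coeff k = F k v := by
    intro k v
    simp only [hQ, Polynomial.finsetSum_coeff, Polynomial.coeff_monomial]
    rw [Finset.sum_ite_eq' ]
    split_ifs with h
    · rfl
    · simp only [Finset.mem_range, not_lt] at h
      simp only [hF]
      rw [MvPolynomial.homogeneousComponent_eq_zero _ _ (by omega), map_zero]
  refine ⟨F, fun k => ⟨_, fun v => rfl⟩, ?_, hhom, ?_⟩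
  · intro k g hg v
    rw [← hcoeff, ← hcoeff]
    congr 1
    refine Polynomial.funext fun s => ?_
    rw [← hQe, ← hQe, ← map_smul, hK g hg]
  · intro v
    obtain ⟨q, hq, hqe⟩ := hd 0 v
    have hqQ : Q v = q := by
      refine Polynomial.funext fun s => ?_
      rw [← hQe, ← hqe, zero_add]
    have h1 := hQe v 1
    rw [one_smul, hqQ, Polynomial.eval_eq_sum_range' (Nat.lt_succ_of_le hq)] at h1
    rw [h1]
    refine Finset.sum_congr rfl fun k _ => ?_
    rw [one_pow, mul_one, ← hqQ, hcoeff]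

/-- Invariants of degree at most `d` separate orbits. -/
def SepOrbits (K : Subgroup (EuclideanSpace ℝ (Fin m) ≃ₗᵢ[ℝ] EuclideanSpace ℝ (Fin m)))
    (d : ℕ) : Prop :=
  ∀ u w, (∀ f, IsPolyFun f → LineDegLE d f → InvFun K f → f u = f w) → ∃ g ∈ K, w = g u

/-- All invariant polynomials are `C^d` along `x` at `t`. -/
def SmoothAlong (K : Subgroup (EuclideanSpace ℝ (Fin m) ≃ₗᵢ[ℝ] EuclideanSpace ℝ (Fin m)))
    (d : ℕ) (x : ℝ → EuclideanSpace ℝ (Fin m)) (t : ℝ) : Prop :=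
  ∀ f, IsPolyFun f → InvFun K f → ContDiffAt ℝ d (fun s => f (x s)) t

/-- The invariant polynomial vanishing exactly on the orbit of `u`. -/
theorem exists_orbit_poly {K : Subgroup (EuclideanSpace ℝ (Fin m) ≃ₗᵢ[ℝ] EuclideanSpace ℝ (Fin m))}
    (hK : (K : Set (EuclideanSpace ℝ (Fin m) ≃ₗᵢ[ℝ] EuclideanSpace ℝ (Fin m))).Finite)
    (u : EuclideanSpace ℝ (Fin m)) :
    ∃ f, IsPolyFun f ∧ InvFun K f ∧ f u = 0 ∧
      ∀ v, ∀ ε > 0, (∀ g ∈ K, ε ≤ ‖v - g u‖) → (ε ^ 2) ^ hK.toFinset.card ≤ f v := by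
  classical
  refine ⟨fun v => ∏ g ∈ hK.toFinset, ‖v - g u‖ ^ 2, IsPolyFun.prod _ fun g _ => isPolyFun_dist_sq _,
    ?_, ?_, ?_⟩
  · intro k hk v
    simp only
    refine Finset.prod_nbij' (fun g => k⁻¹ * g) (fun g => k * g) ?_ ?_ ?_ ?_ ?_
    · intro g hg
      simp only [Finite.mem_toFinset, SetLike.mem_coe] at hg ⊢
      exact K.mul_mem (K.inv_mem hk) hg
    · intro g hg
      simp only [Finite.mem_toFinset, SetLike.mem_coe] at hg ⊢
      exact K.mul_mem hk hg
    · intro g _; simp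
    · intro g _; simp
    · intro g _
      have e : (k⁻¹ * g) u = k.symm (g u) := rfl
      rw [e, ← k.norm_map (v - k.symm (g u)), map_sub, k.apply_symm_apply]
  · refine Finset.prod_eq_zero (i := 1) (by simp [K.one_mem]) ?_
    simp
  · intro v ε hε h
    rw [← Finset.prod_const]
    refine Finset.prod_le_prod (fun _ _ => by positivity) fun g hg => ?_
    have := h g (by simpa using hg)
    gcongr

/-- Continuity of orbits. -/
theorem orbit_tendsto {K : Subgroup (EuclideanSpace ℝ (Fin m) ≃ₗᵢ[ℝ] EuclideanSpace ℝ (Fin m))}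
    (hK : (K : Set (EuclideanSpace ℝ (Fin m) ≃ₗᵢ[ℝ] EuclideanSpace ℝ (Fin m))).Finite)
    {d : ℕ} {x : ℝ → EuclideanSpace ℝ (Fin m)} {t₁ : ℝ} (hx : SmoothAlong K d x t₁)
    {ε : ℝ} (hε : 0 < ε) : ∀ᶠ t in 𝓝 t₁, ∃ g ∈ K, ‖x t - g (x t₁)‖ < ε := by
  obtain ⟨f, hf, hfi, h0, hfε⟩ := exists_orbit_poly hK (x t₁)
  have hcont := (hx f hf hfi).continuousAt
  have hpos : f (x t₁) < (ε ^ 2) ^ hK.toFinset.card := by rw [h0]; positivity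
  filter_upwards [hcont.eventually (gt_mem_nhds hpos)] with t ht
  by_contra hcon
  push Not at hcon
  exact absurd (hfε (x t) ε hε hcon) (not_le.2 ht)

end Poly

section Main

variable {m : ℕ}

/-- Blow-up at a fixed point: the difference quotients approach one orbit. -/
theorem lift_tangent {K : Subgroup (EuclideanSpace ℝ (Fin m) ≃ₗᵢ[ℝ] EuclideanSpace ℝ (Fin m))}
    {d : ℕ} (hd : 2 ≤ d) (hsep : SepOrbits K d)
    {x : ℝ → EuclideanSpace ℝ (Fin m)} {t₀ : ℝ} (hx : SmoothAlong K d x t₀)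
    (hfix : ∀ g ∈ K, g (x t₀) = x t₀) :
    ∃ w, ∀ δ > 0, ∀ᶠ t in 𝓝[≠] t₀, ∃ g ∈ K, dist ((t - t₀)⁻¹ • (x t - x t₀)) (g w) < δ := by
  set v₀ := x t₀ with hv₀
  set D : ℝ → EuclideanSpace ℝ (Fin m) := fun t => (t - t₀)⁻¹ • (x t - v₀) with hD
  have hshift : ∀ f, InvFun K f → InvFun K (fun v => f (v - v₀)) := by
    intro f hf g hg v
    simp only
    have : g v - v₀ = g (v - v₀) := by rw [map_sub, hfix g hg]
    rw [this, hf g hg]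
  have hne : ∀ᶠ t in 𝓝[≠] t₀, t - t₀ ≠ 0 := by
    filter_upwards [self_mem_nhdsWithin] with t ht
    exact sub_ne_zero.2 ht
  -- boundedness
  obtain ⟨C, hC⟩ : ∃ C, ∀ᶠ t in 𝓝[≠] t₀, D t ∈ Metric.closedBall 0 C := by
    have h1 : ContDiffAt ℝ d (fun t => ‖x t - v₀‖ ^ 2) t₀ := by
      refine hx _ (isPolyFun_dist_sq v₀) (hshift (fun v => ‖v‖ ^ 2) ?_)
      intro g _ v
      simp
    obtain ⟨C, hC⟩ := lift_quadratic_bound (h1.of_le (by exact_mod_cast hd)) (by simp [hv₀])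
      (fun t => by positivity)
    refine ⟨√C, ?_⟩
    filter_upwards [hC, hne] with t ht htne
    rw [mem_closedBall_zero_iff]
    apply Real.le_sqrt_of_sq_le
    rw [hD, norm_smul, mul_pow, norm_inv, inv_pow, Real.norm_eq_abs, sq_abs,
      inv_mul_le_iff₀ (by positivity), mul_comm]
    exact ht
  have hcpt : IsCompact (Metric.closedBall (0 : EuclideanSpace ℝ (Fin m)) C) :=
    isCompact_closedBall _ _
  -- homogeneous invariants converge
  have hconv : ∀ k ≤ d, ∀ f, IsPolyFun f → InvFun K f → (∀ (s : ℝ) v, f (s • v) = s ^ k * f v) →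
      ∃ a, Tendsto (fun t => f (D t)) (𝓝[≠] t₀) (𝓝 a) := by
    intro k hk f hf hfi hfh
    have e : ∀ t, f (D t) = f (x t - v₀) / (t - t₀) ^ k := by
      intro t
      rw [hD, hfh, inv_pow, div_eq_inv_mul]
    have h1 : ContDiffAt ℝ d (fun t => f (x t - v₀)) t₀ := hx _ (hf.comp_sub v₀) (hshift f hfi)
    obtain ⟨M, hM⟩ := hcpt.exists_bound_of_continuousOn hf.continuous.continuousOn
    have := lift_taylor_limit (k := k) (h1.of_le (by exact_mod_cast hk)) (C := M) (by
      filter_upwards [hC] with t ht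
      rw [← e]
      exact hM _ ht)
    simpa only [e] using this
  have hclus : ∀ w w', MapClusterPt w (𝓝[≠] t₀) D → MapClusterPt w' (𝓝[≠] t₀) D →
      ∃ g ∈ K, w' = g w := by
    intro w w' hw hw'
    refine hsep w w' fun f hf hfd hfi => ?_
    obtain ⟨F, hF, hFi, hFh, hFs⟩ := hf.decompose hfd hfi
    rw [hFs, hFs]
    refine Finset.sum_congr rfl fun k hk => ?_
    obtain ⟨a, ha⟩ := hconv k (by simpa [Nat.lt_succ_iff] using hk) (F k) (hF k) (hFi k) (hFh k)
    have hu : ∀ w, MapClusterPt w (𝓝[≠] t₀) D → F k w = a := by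
      intro w hw
      have h1 : MapClusterPt (F k w) (𝓝[≠] t₀) (F k ∘ D) :=
        hw.continuousAt_comp (hF k).continuous.continuousAt
      have h2 : ClusterPt (F k w) (𝓝 a) := ClusterPt.mono h1 ha
      exact eq_of_nhds_neBot h2
    rw [hu w hw, hu w' hw']
  obtain ⟨w, -, hw⟩ := hcpt.exists_mapClusterPt_of_frequently hC.frequently
  refine ⟨w, fun δ hδ => ?_⟩
  by_contra hcon
  rw [not_eventually] at hcon
  have hcl : IsClosed {v : EuclideanSpace ℝ (Fin m) | ∀ g ∈ K, δ ≤ dist v (g w)} := by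
    simp only [ofPred_forall]
    exact isClosed_iInter fun g => isClosed_iInter fun _ =>
      isClosed_le continuous_const (by fun_prop)
  obtain ⟨w', hw'm, hw'⟩ := (hcpt.inter_right hcl).exists_mapClusterPt_of_frequently
    (f := D) (l := 𝓝[≠] t₀) ((hcon.and_eventually hC).mono fun t ht => ⟨ht.2, by
      have := ht.1
      push Not at this
      exact this⟩)
  obtain ⟨g, hg, e⟩ := hclus w w' hw hw'
  have := hw'm.2 g hg
  rw [e, dist_self] at this
  linarith

/-- The stabilizer of `v₀` in `K`. -/
def stabSub (K : Subgroup (EuclideanSpace ℝ (Fin m) ≃ₗᵢ[ℝ] EuclideanSpace ℝ (Fin m)))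
    (v₀ : EuclideanSpace ℝ (Fin m)) :
    Subgroup (EuclideanSpace ℝ (Fin m) ≃ₗᵢ[ℝ] EuclideanSpace ℝ (Fin m)) where
  carrier := {g | g ∈ K ∧ g v₀ = v₀}
  mul_mem' := by
    rintro a b ⟨ha, ha'⟩ ⟨hb, hb'⟩
    refine ⟨K.mul_mem ha hb, ?_⟩
    change a (b v₀) = v₀
    rw [hb', ha']
  one_mem' := ⟨K.one_mem, rfl⟩
  inv_mem' := by
    rintro a ⟨ha, ha'⟩
    refine ⟨K.inv_mem ha, ?_⟩
    change a.symm v₀ = v₀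
    rw [LinearIsometryEquiv.symm_apply_eq, ha']

theorem mem_stabSub {K : Subgroup (EuclideanSpace ℝ (Fin m) ≃ₗᵢ[ℝ] EuclideanSpace ℝ (Fin m))}
    {v₀ : EuclideanSpace ℝ (Fin m)} {g : EuclideanSpace ℝ (Fin m) ≃ₗᵢ[ℝ] EuclideanSpace ℝ (Fin m)} :
    g ∈ stabSub K v₀ ↔ g ∈ K ∧ g v₀ = v₀ := Iff.rfl

/-- A gap radius around `v₀`. -/
theorem exists_gap {K : Subgroup (EuclideanSpace ℝ (Fin m) ≃ₗᵢ[ℝ] EuclideanSpace ℝ (Fin m))}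
    (hK : (K : Set (EuclideanSpace ℝ (Fin m) ≃ₗᵢ[ℝ] EuclideanSpace ℝ (Fin m))).Finite)
    (v₀ : EuclideanSpace ℝ (Fin m)) :
    ∃ r > 0, ∀ g ∈ K, g v₀ ≠ v₀ → 3 * r ≤ ‖g v₀ - v₀‖ := by
  have : ∀ᶠ r in 𝓝[>] (0 : ℝ), ∀ g ∈ (K : Set (EuclideanSpace ℝ (Fin m) ≃ₗᵢ[ℝ] EuclideanSpace ℝ (Fin m))),
      g v₀ ≠ v₀ → 3 * r ≤ ‖g v₀ - v₀‖ := by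
    rw [eventually_all_finite hK]
    intro g _
    by_cases h : g v₀ = v₀
    · exact Eventually.of_forall fun _ h' => absurd h h'
    have hp : 0 < ‖g v₀ - v₀‖ / 3 := by
      have := norm_pos_iff.2 (sub_ne_zero.2 h)
      linarith
    filter_upwards [nhdsWithin_le_nhds (gt_mem_nhds hp)] with r hr _
    linarith
  obtain ⟨r, h1, h2⟩ := (this.and self_mem_nhdsWithin).exists
  exact ⟨r, h2, h1⟩

/-- Separation passes to stabilizers. -/
theorem SepOrbits.stab {K : Subgroup (EuclideanSpace ℝ (Fin m) ≃ₗᵢ[ℝ] EuclideanSpace ℝ (Fin m))}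
    (hK : (K : Set (EuclideanSpace ℝ (Fin m) ≃ₗᵢ[ℝ] EuclideanSpace ℝ (Fin m))).Finite)
    {d : ℕ} (hsep : SepOrbits K d) (v₀ : EuclideanSpace ℝ (Fin m)) :
    SepOrbits (stabSub K v₀) d := by
  intro u w h
  obtain ⟨r, hr, hgap⟩ := exists_gap hK v₀
  obtain ⟨s, hs, hsr⟩ : ∃ s > 0, s * (‖u‖ + ‖w‖) < 3 * r := by
    refine ⟨r / (‖u‖ + ‖w‖ + 1), by positivity, ?_⟩
    rw [div_mul_eq_mul_div, div_lt_iff₀ (by positivity)]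
    nlinarith [norm_nonneg u, norm_nonneg w]
  obtain ⟨k, hk, e⟩ := hsep (v₀ + s • u) (v₀ + s • w) (by
    intro f hf hfd hfi
    refine h (fun v => f (v₀ + s • v)) ?_ ?_ ?_
    · refine hf.comp fun j => ?_
      simpa using (IsPolyFun.const (v₀ j)).add ((IsPolyFun.const s).mul (IsPolyFun.coord j))
    · intro v u'
      obtain ⟨q, hq, hqe⟩ := hfd (v₀ + s • v) (s • u')
      refine ⟨q, hq, fun τ => ?_⟩
      rw [← hqe]
      change f (v₀ + s • (v + τ • u')) = _
      congr 1
      rw [smul_add, smul_comm s τ, add_assoc]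
    · intro g hg v
      simp only
      rw [← hfi g hg.1 (v₀ + s • v), map_add, hg.2, map_smul])
  have hfix : k v₀ = v₀ := by
    by_contra hne
    have h1 := hgap k hk hne
    have h2 : k v₀ - v₀ = s • w - s • (k u) := by
      rw [map_add, map_smul] at e
      rw [sub_eq_sub_iff_add_eq_add, ← e]
      abel
    have h3 : ‖k v₀ - v₀‖ ≤ s * (‖u‖ + ‖w‖) := by
      rw [h2]
      refine (norm_sub_le _ _).trans ?_
      rw [norm_smul, norm_smul, k.norm_map, Real.norm_eq_abs, abs_of_pos hs]
      linarith
    linarith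
  refine ⟨k, ⟨hk, hfix⟩, ?_⟩
  rw [map_add, map_smul, hfix] at e
  exact smul_right_injective _ hs.ne' (add_left_cancel e)

/-- An `H`-invariant polynomial taking a separated value is `C^d` along `x`. -/
theorem smooth_of_separated
    {K H : Subgroup (EuclideanSpace ℝ (Fin m) ≃ₗᵢ[ℝ] EuclideanSpace ℝ (Fin m))}
    (hK : (K : Set (EuclideanSpace ℝ (Fin m) ≃ₗᵢ[ℝ] EuclideanSpace ℝ (Fin m))).Finite)
    {d : ℕ} (hd : 2 ≤ d) {x : ℝ → EuclideanSpace ℝ (Fin m)} {t₁ : ℝ} (hx : SmoothAlong K d x t₁)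
    {q : EuclideanSpace ℝ (Fin m) → ℝ} (hq : IsPolyFun q) (hqi : InvFun H q)
    (hcont : ContinuousAt (fun t => q (x t)) t₁)
    (hval : ∀ g ∈ K, g ∉ H → q (g (x t₁)) ≠ q (x t₁)) :
    ContDiffAt ℝ d (fun t => q (x t)) t₁ := by
  classical
  set Φ : Finset (EuclideanSpace ℝ (Fin m) → ℝ) := hK.toFinset.image fun g v => q (g v) with hΦ
  have hΦmem : ∀ φ, φ ∈ Φ ↔ ∃ g ∈ K, (fun v => q (g v)) = φ := by
    intro φ
    simp [hΦ]
  have hqΦ : q ∈ Φ := (hΦmem q).2 ⟨1, K.one_mem, rfl⟩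
  have hΦpoly : ∀ φ ∈ Φ, IsPolyFun φ := by
    intro φ hφ
    obtain ⟨g, -, rfl⟩ := (hΦmem φ).1 hφ
    exact hq.comp_isometry g
  set P : EuclideanSpace ℝ (Fin m) → Polynomial ℝ :=
    fun v => ∏ φ ∈ Φ, (Polynomial.X - Polynomial.C (φ v)) with hP
  have hPinv : ∀ k ∈ K, ∀ v, P (k v) = P v := by
    intro k hk v
    simp only [hP]
    refine Finset.prod_nbij' (fun φ u => φ (k u)) (fun φ u => φ (k.symm u)) ?_ ?_ ?_ ?_ ?_
    · intro φ hφ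
      obtain ⟨g, hg, rfl⟩ := (hΦmem φ).1 hφ
      exact (hΦmem _).2 ⟨g * k, K.mul_mem hg hk, rfl⟩
    · intro φ hφ
      obtain ⟨g, hg, rfl⟩ := (hΦmem φ).1 hφ
      exact (hΦmem _).2 ⟨g * k⁻¹, K.mul_mem hg (K.inv_mem hk), rfl⟩
    · intro φ _; simp
    · intro φ _; simp
    · intro φ _; rfl
  have hPpoly : ∀ j, IsPolyFun (fun v => (P v).coeff j) := by
    intro j
    choose p hp using hΦpoly
    refine ⟨(∏ φ : Φ, (Polynomial.X - Polynomial.C (p φ.1 φ.2))).coeff j, fun v => ?_⟩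
    rw [← Polynomial.coeff_map, Polynomial.map_prod]
    simp only [hP, Polynomial.map_sub, Polynomial.map_X, Polynomial.map_C]
    have e1 := Finset.prod_coe_sort Φ
      (fun φ => (Polynomial.X - Polynomial.C (φ v) : Polynomial ℝ))
    rw [← e1]
    refine congrArg (fun r : Polynomial ℝ => r.coeff j) ?_
    refine Finset.prod_congr (M := Polynomial ℝ) rfl fun φ _ => ?_
    rw [hp φ.1 φ.2 v]
  refine lift_simple_root (N := Φ.card + 1) (by omega) (fun t => P (x t)) ?_ ?_ _ hcont ?_ ?_
  · intro t
    simp only [hP]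
    rw [Polynomial.natDegree_prod_of_monic _ _ fun φ _ => Polynomial.monic_X_sub_C _]
    simp
  · intro j
    exact hx _ (hPpoly j) fun g hg v => by simp only [hPinv g hg]
  · intro t
    simp only [hP, Polynomial.eval_prod]
    exact Finset.prod_eq_zero hqΦ (by simp)
  · simp only [hP]
    rw [← Finset.mul_prod_erase Φ _ hqΦ, Polynomial.derivative_mul]
    simp only [Polynomial.derivative_sub, Polynomial.derivative_X, Polynomial.derivative_C,
      sub_zero, one_mul, Polynomial.eval_add, Polynomial.eval_mul, Polynomial.eval_sub,
      Polynomial.eval_X, Polynomial.eval_C, sub_self, zero_mul, add_zero, Polynomial.eval_prod]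
    rw [Finset.prod_ne_zero_iff]
    intro φ hφ
    obtain ⟨hne, hφ⟩ := Finset.mem_erase.1 hφ
    obtain ⟨g, hg, rfl⟩ := (hΦmem φ).1 hφ
    refine sub_ne_zero.2 (Ne.symm (hval g hg fun hgH => hne ?_))
    funext v
    exact hqi g hgH v

/-- Smoothness passes to stabilizers near `v₀`. -/
theorem SmoothAlong.stab
    {K : Subgroup (EuclideanSpace ℝ (Fin m) ≃ₗᵢ[ℝ] EuclideanSpace ℝ (Fin m))}
    (hK : (K : Set (EuclideanSpace ℝ (Fin m) ≃ₗᵢ[ℝ] EuclideanSpace ℝ (Fin m))).Finite)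
    {d : ℕ} (hd : 2 ≤ d) {x : ℝ → EuclideanSpace ℝ (Fin m)} {t₁ : ℝ} (hx : SmoothAlong K d x t₁)
    {v₀ : EuclideanSpace ℝ (Fin m)} {r : ℝ} (hr : 0 < r)
    (hgap : ∀ g ∈ K, g v₀ ≠ v₀ → 3 * r ≤ ‖g v₀ - v₀‖) (hnear : ∀ᶠ t in 𝓝 t₁, ‖x t - v₀‖ < r) :
    SmoothAlong (stabSub K v₀) d x t₁ := by
  have h1 : ‖x t₁ - v₀‖ < r := hnear.self_of_nhds
  have hfar : ∀ g ∈ K, g ∉ stabSub K v₀ → 2 * r < ‖g (x t₁) - v₀‖ := by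
    intro g hg hgH
    have h2 := hgap g hg fun h => hgH ⟨hg, h⟩
    have h3 : ‖g (x t₁) - g v₀‖ < r := by rw [← map_sub, g.norm_map]; exact h1
    have h4 : ‖g v₀ - v₀‖ ≤ ‖g (x t₁) - g v₀‖ + ‖g (x t₁) - v₀‖ := by
      have : g v₀ - v₀ = (g (x t₁) - v₀) - (g (x t₁) - g v₀) := by abel
      rw [this, add_comm]
      exact norm_sub_le _ _
    linarith
  have hcont : ∀ q, IsPolyFun q → InvFun (stabSub K v₀) q → ContinuousAt (fun t => q (x t)) t₁ := by
    intro q hq hqi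
    rw [Metric.continuousAt_iff']
    intro ε hε
    obtain ⟨δ, hδ, hδq⟩ := Metric.continuousAt_iff.1 (hq.continuous.continuousAt (x := x t₁)) ε hε
    filter_upwards [hnear, orbit_tendsto hK hx (lt_min hδ hr)] with t ht1 ht2
    obtain ⟨g, hg, hgt⟩ := ht2
    have hgH : g ∈ stabSub K v₀ := by
      by_contra hgH
      have h2 := hfar g hg hgH
      have h3 : ‖g (x t₁) - v₀‖ ≤ ‖x t - v₀‖ + ‖x t - g (x t₁)‖ := by
        have : g (x t₁) - v₀ = (x t - v₀) - (x t - g (x t₁)) := by abel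
        rw [this]
        exact norm_sub_le _ _
      have := min_le_right δ r
      linarith
    have e : q (x t) = q (g.symm (x t)) := by
      rw [← hqi g hgH (g.symm (x t)), g.apply_symm_apply]
    rw [e]
    apply hδq
    rw [dist_eq_norm, ← g.norm_map, map_sub, g.apply_symm_apply]
    exact hgt.trans_le (min_le_left _ _)
  intro q hq hqi
  set q₀ : EuclideanSpace ℝ (Fin m) → ℝ := fun v => ‖v - v₀‖ ^ 2 with hq₀
  have hq₀p : IsPolyFun q₀ := isPolyFun_dist_sq v₀
  have hq₀i : InvFun (stabSub K v₀) q₀ := by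
    intro g hg v
    have : g v - v₀ = g (v - v₀) := by rw [map_sub, hg.2]
    simp only [hq₀]
    rw [this, g.norm_map]
  have hq₀lt : ∀ g ∈ K, g ∉ stabSub K v₀ → q₀ (x t₁) < q₀ (g (x t₁)) := by
    intro g hg hgH
    have := hfar g hg hgH
    simp only [hq₀]
    gcongr
    linarith
  have s0 : ContDiffAt ℝ d (fun t => q₀ (x t)) t₁ :=
    smooth_of_separated hK hd hx hq₀p hq₀i (hcont q₀ hq₀p hq₀i) fun g hg hgH => (hq₀lt g hg hgH).ne'
  obtain ⟨c, hc⟩ : ∃ c : ℝ, ∀ g ∈ (K : Set (EuclideanSpace ℝ (Fin m) ≃ₗᵢ[ℝ] EuclideanSpace ℝ (Fin m))),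
      g ∉ stabSub K v₀ → q (x t₁) + c * q₀ (x t₁) < q (g (x t₁)) + c * q₀ (g (x t₁)) := by
    have : ∀ᶠ c : ℝ in atTop,
        ∀ g ∈ (K : Set (EuclideanSpace ℝ (Fin m) ≃ₗᵢ[ℝ] EuclideanSpace ℝ (Fin m))),
        g ∉ stabSub K v₀ → q (x t₁) + c * q₀ (x t₁) < q (g (x t₁)) + c * q₀ (g (x t₁)) := by
      rw [eventually_all_finite hK]
      intro g hg
      by_cases hgH : g ∈ stabSub K v₀
      · exact Eventually.of_forall fun _ h => absurd hgH h
      have hlt := sub_pos.2 (hq₀lt g hg hgH)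
      filter_upwards [eventually_gt_atTop ((q (x t₁) - q (g (x t₁))) /
        (q₀ (g (x t₁)) - q₀ (x t₁)))] with c hc _
      rw [div_lt_iff₀ hlt] at hc
      linarith
    exact this.exists
  have hsp : IsPolyFun (fun v => q v + c * q₀ v) := hq.add ((IsPolyFun.const c).mul hq₀p)
  have hsi : InvFun (stabSub K v₀) (fun v => q v + c * q₀ v) := by
    intro g hg v
    simp only [hqi g hg v, hq₀i g hg v]
  have s1 : ContDiffAt ℝ d (fun t => q (x t) + c * q₀ (x t)) t₁ :=
    smooth_of_separated hK hd hx hsp hsi (hcont _ hsp hsi) fun g hg hgH => (hc g hg hgH).ne'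
  have s2 := s1.sub (contDiffAt_const (c := c) |>.mul s0)
  refine s2.congr_of_eventuallyEq (Eventually.of_forall fun t => ?_)
  simp

end Main

section Final

variable {m : ℕ}

/-- Local lift at an isolated point with full isotropy. -/
theorem lift_isolated
    {K : Subgroup (EuclideanSpace ℝ (Fin m) ≃ₗᵢ[ℝ] EuclideanSpace ℝ (Fin m))}
    (hK : (K : Set (EuclideanSpace ℝ (Fin m) ≃ₗᵢ[ℝ] EuclideanSpace ℝ (Fin m))).Finite)
    {d : ℕ} (hd : 2 ≤ d) (hsep : SepOrbits K d)
    {x : ℝ → EuclideanSpace ℝ (Fin m)} {t₀ : ℝ} (hx : SmoothAlong K d x t₀)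
    (hfix : ∀ g ∈ K, g (x t₀) = x t₀)
    (hloc : ∀ᶠ t in 𝓝[≠] t₀, ∃ y, LiftMem K x y ∧ ∀ᶠ s in 𝓝 t, DifferentiableAt ℝ y s) :
    ∃ y, LiftMem K x y ∧ ∀ᶠ s in 𝓝 t₀, DifferentiableAt ℝ y s := by
  obtain ⟨w, hw⟩ := lift_tangent hd hsep hx hfix
  rw [eventually_nhdsWithin_iff, Metric.eventually_nhds_iff_ball] at hloc
  obtain ⟨ε, hε, hloc⟩ := hloc
  obtain ⟨y, hy, dy⟩ := lift_open hK (x := x) (U := Metric.ball t₀ ε ∩ {t₀}ᶜ)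
    (Metric.isOpen_ball.inter isOpen_compl_singleton) fun t ht => hloc t ht.1 ht.2
  have hy0 : y t₀ = x t₀ := by
    obtain ⟨g, hg, e⟩ := hy t₀
    rw [e, hfix g hg]
  have hevd : ∀ᶠ t in 𝓝[≠] t₀, DifferentiableAt ℝ y t := by
    rw [eventually_nhdsWithin_iff]
    filter_upwards [Metric.ball_mem_nhds t₀ hε] with t ht hne
    exact dy t ⟨ht, hne⟩
  set F : Set (EuclideanSpace ℝ (Fin m)) := (fun g => g w) ''
    (K : Set (EuclideanSpace ℝ (Fin m) ≃ₗᵢ[ℝ] EuclideanSpace ℝ (Fin m))) with hF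
  have hFf : F.Finite := hK.image _
  have hnear : ∀ δ > 0, ∀ᶠ t in 𝓝[≠] t₀, ∃ w ∈ F, dist (slope y t₀ t) w < δ := by
    intro δ hδ
    filter_upwards [hw δ hδ] with t ht
    obtain ⟨g, hg, h⟩ := ht
    obtain ⟨k, hk, e⟩ := hy t
    refine ⟨(k * g) w, ⟨k * g, K.mul_mem hk hg, rfl⟩, ?_⟩
    have e2 : slope y t₀ t = k ((t - t₀)⁻¹ • (x t - x t₀)) := by
      rw [slope_def_module, hy0, e, map_smul, map_sub, hfix k hk]
    rw [e2]
    change dist _ (k (g w)) < δ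
    rwa [k.dist_map]
  have hcts : ∀ᶠ t in 𝓝[≠] t₀, ContinuousAt (slope y t₀) t := by
    filter_upwards [hevd, self_mem_nhdsWithin] with t ht hne
    have hne' : t - t₀ ≠ 0 := sub_ne_zero.2 hne
    have : slope y t₀ = fun t => (t - t₀)⁻¹ • (y t - y t₀) := by
      funext t; rw [slope_def_module]
    rw [this]
    have h1 : ContinuousAt (fun t : ℝ => (t - t₀)⁻¹) t := ContinuousAt.inv₀ (by fun_prop) hne'
    have h2 : ContinuousAt (fun t => y t - y t₀) t := ht.continuousAt.sub continuousAt_const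
    exact h1.smul h2
  have lR : (𝓝[>] t₀) ≤ 𝓝[≠] t₀ := nhdsWithin_mono _ fun t ht => ne_of_gt ht
  have lL : (𝓝[<] t₀) ≤ 𝓝[≠] t₀ := nhdsWithin_mono _ fun t ht => ne_of_lt ht
  obtain ⟨_, ⟨g₁, hg₁, rfl⟩, h₁⟩ := lift_converge hFf (D := slope y t₀) (l := 𝓝[>] t₀) (by
    intro s hs
    obtain ⟨u, hu, hus⟩ := mem_nhdsGT_iff_exists_Ioo_subset.1 hs
    exact ⟨Ioo t₀ u, Ioo_mem_nhdsGT hu, hus, isPreconnected_Ioo⟩)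
    (hcts.filter_mono lR) fun δ hδ => (hnear δ hδ).filter_mono lR
  obtain ⟨_, ⟨g₂, hg₂, rfl⟩, h₂⟩ := lift_converge hFf (D := slope y t₀) (l := 𝓝[<] t₀) (by
    intro s hs
    obtain ⟨u, hu, hus⟩ := mem_nhdsLT_iff_exists_Ioo_subset.1 hs
    exact ⟨Ioo u t₀, Ioo_mem_nhdsLT hu, hus, isPreconnected_Ioo⟩)
    (hcts.filter_mono lL) fun δ hδ => (hnear δ hδ).filter_mono lL
  simp only at h₁ h₂
  have dR : HasDerivWithinAt y (g₁ w) (Ici t₀) t₀ := by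
    rw [← hasDerivWithinAt_Ioi_iff_Ici, hasDerivWithinAt_iff_tendsto_slope' (by simp)]
    exact h₁
  have dL : HasDerivWithinAt y (g₂ w) (Iic t₀) t₀ := by
    rw [← hasDerivWithinAt_Iio_iff_Iic, hasDerivWithinAt_iff_tendsto_slope' (by simp)]
    exact h₂
  set k := g₂ * g₁⁻¹ with hk
  have hkK : k ∈ K := K.mul_mem hg₂ (K.inv_mem hg₁)
  have hkw : k (g₁ w) = g₂ w := by
    change g₂ (g₁.symm (g₁ w)) = _
    rw [g₁.symm_apply_apply]
  have dR' : HasDerivWithinAt (fun t => k (y t)) (g₂ w) (Ici t₀) t₀ := by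
    rw [← hkw]
    exact (k.toContinuousLinearEquiv.toContinuousLinearMap.hasFDerivAt).comp_hasDerivWithinAt t₀ dR
  have dz := lift_hasDerivAt_ite dL dR' (by rw [hy0, hfix k hkK])
  refine ⟨_, hy.ite (hy.smul hkK) (fun t => t ≤ t₀), ?_⟩
  rw [eventually_nhdsWithin_iff] at hevd
  filter_upwards [hevd] with t ht
  rcases lt_trichotomy t t₀ with h | h | h
  · refine (ht h.ne).congr_of_eventuallyEq ?_
    filter_upwards [gt_mem_nhds h] with r hr
    simp [hr.le]
  · rw [h]; exact dz.differentiableAt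
  · have h1 : DifferentiableAt ℝ (fun t => k (y t)) t :=
      (k.toContinuousLinearEquiv.toContinuousLinearMap.differentiableAt).comp t (ht h.ne')
    refine h1.congr_of_eventuallyEq ?_
    filter_upwards [lt_mem_nhds h] with r hr
    simp [not_le.2 hr]

/-- The inductive main theorem. -/
theorem lift_main {d : ℕ} (hd : 2 ≤ d) (N : ℕ) :
    ∀ (K : Subgroup (EuclideanSpace ℝ (Fin m) ≃ₗᵢ[ℝ] EuclideanSpace ℝ (Fin m))),
    (K : Set (EuclideanSpace ℝ (Fin m) ≃ₗᵢ[ℝ] EuclideanSpace ℝ (Fin m))).Finite →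
    (K : Set (EuclideanSpace ℝ (Fin m) ≃ₗᵢ[ℝ] EuclideanSpace ℝ (Fin m))).ncard ≤ N →
    SepOrbits K d → ∀ (x : ℝ → EuclideanSpace ℝ (Fin m)) (U : Set ℝ), IsOpen U →
    (∀ t ∈ U, SmoothAlong K d x t) →
    ∃ y, LiftMem K x y ∧ ∀ t ∈ U, DifferentiableAt ℝ y t := by
  classical
  induction N with
  | zero =>
    intro K hK hcard
    have : 0 < (K : Set (EuclideanSpace ℝ (Fin m) ≃ₗᵢ[ℝ] EuclideanSpace ℝ (Fin m))).ncard :=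
      (ncard_pos hK).2 ⟨1, K.one_mem⟩
    omega
  | succ N ih =>
  intro K hK hcard hsep x U hU hx
  -- local lifts away from full isotropy
  have hA : ∀ t₀ ∈ U, (¬ ∀ g ∈ K, g (x t₀) = x t₀) →
      ∃ y, LiftMem K x y ∧ ∀ᶠ s in 𝓝 t₀, DifferentiableAt ℝ y s := by
    intro t₀ ht₀ hnf
    push Not at hnf
    obtain ⟨g₀, hg₀, hg₀x⟩ := hnf
    set v₀ := x t₀ with hv₀
    obtain ⟨r, hr, hgap⟩ := exists_gap hK v₀
    have hsub : ∀ g ∈ stabSub K v₀, g ∈ K := fun g hg => hg.1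
    have hHfin := hK.subset hsub
    have hHcard : ((stabSub K v₀ : Subgroup _) :
        Set (EuclideanSpace ℝ (Fin m) ≃ₗᵢ[ℝ] EuclideanSpace ℝ (Fin m))).ncard ≤ N := by
      have : ((stabSub K v₀ : Subgroup _) :
        Set (EuclideanSpace ℝ (Fin m) ≃ₗᵢ[ℝ] EuclideanSpace ℝ (Fin m))).ncard <
        (K : Set (EuclideanSpace ℝ (Fin m) ≃ₗᵢ[ℝ] EuclideanSpace ℝ (Fin m))).ncard := by
        refine ncard_lt_ncard ⟨hsub, fun h => hg₀x (h hg₀).2⟩ hK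
      omega
    set x' : ℝ → EuclideanSpace ℝ (Fin m) := fun t =>
      if h : ∃ g ∈ K, ‖g (x t) - v₀‖ < r then h.choose (x t) else x t with hx'
    have hx'm : LiftMem K x x' := by
      intro t
      by_cases h : ∃ g ∈ K, ‖g (x t) - v₀‖ < r
      · exact ⟨h.choose, h.choose_spec.1, by simp only [hx']; rw [dif_pos h]⟩
      · exact ⟨1, K.one_mem, by simp only [hx']; rw [dif_neg h]; rfl⟩
    have hev : ∀ᶠ t in 𝓝 t₀, t ∈ U ∧ ‖x' t - v₀‖ < r := by
      filter_upwards [hU.mem_nhds ht₀, orbit_tendsto hK (hx t₀ ht₀) hr] with t ht h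
      refine ⟨ht, ?_⟩
      have h' : ∃ g ∈ K, ‖g (x t) - v₀‖ < r := by
        obtain ⟨g, hg, hgt⟩ := h
        refine ⟨g⁻¹, K.inv_mem hg, ?_⟩
        change ‖g.symm (x t) - v₀‖ < r
        rw [← g.norm_map, map_sub, g.apply_symm_apply]
        exact hgt
      simp only [hx']
      rw [dif_pos h']
      exact h'.choose_spec.2
    obtain ⟨W, hWsub, hWo, hWm⟩ := eventually_nhds_iff.1 hev
    have hsm : ∀ t ∈ W, SmoothAlong (stabSub K v₀) d x' t := by
      intro t ht
      refine SmoothAlong.stab hK hd ?_ hr hgap ?_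
      · intro f hf hfi
        refine (hx t (hWsub t ht).1 f hf hfi).congr_of_eventuallyEq (Eventually.of_forall fun s => ?_)
        obtain ⟨g, hg, e⟩ := hx'm s
        simp only [e, hfi g hg]
      · filter_upwards [hWo.mem_nhds ht] with s hs
        exact (hWsub s hs).2
    obtain ⟨y, hy, dy⟩ := ih (stabSub K v₀) hHfin hHcard (hsep.stab hK v₀) x' W hWo hsm
    refine ⟨y, fun t => ?_, ?_⟩
    · obtain ⟨g, hg, e⟩ := hy t
      obtain ⟨k, hk, e'⟩ := hx'm t
      exact ⟨g * k, K.mul_mem hg.1 hk, by rw [e, e']; rfl⟩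
    · filter_upwards [hWo.mem_nhds hWm] with s hs
      exact dy s hs
  -- the complement of the accumulation points of full isotropy
  set V : Set ℝ := {t | t ∈ U ∧ ∀ᶠ s in 𝓝[≠] t, ¬ ∀ g ∈ K, g (x s) = x s} with hV
  have hVo : IsOpen V := by
    rw [isOpen_iff_mem_nhds]
    rintro t ⟨ht, hs⟩
    have h1 := eventually_eventually_nhdsWithin.2 hs
    rw [eventually_nhdsWithin_iff] at h1
    filter_upwards [hU.mem_nhds ht, h1] with s hsU h2
    refine ⟨hsU, ?_⟩
    by_cases e : s = t
    · rw [e]; exact hs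
    · have h3 := h2 e
      rw [IsOpen.nhdsWithin_eq isOpen_compl_singleton e] at h3
      exact h3.filter_mono nhdsWithin_le_nhds
  obtain ⟨y, hy, dy⟩ := lift_open hK (x := x) hVo (by
    rintro t₀ ⟨ht₀, hiso⟩
    by_cases hfix : ∀ g ∈ K, g (x t₀) = x t₀
    · refine lift_isolated hK hd hsep (hx t₀ ht₀) hfix ?_
      filter_upwards [hiso, nhdsWithin_le_nhds (hU.mem_nhds ht₀)] with t h1 h2
      exact hA t h2 h1
    · exact hA t₀ ht₀ hfix)
  refine ⟨y, hy, fun t₀ ht₀ => ?_⟩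
  by_cases htV : t₀ ∈ V
  · exact dy t₀ htV
  have hfreq : ∃ᶠ s in 𝓝[≠] t₀, ∀ g ∈ K, g (x s) = x s := by
    by_contra hcon
    exact htV ⟨ht₀, not_frequently.1 hcon⟩
  -- full isotropy is a closed condition
  have hclosed : ∀ v : EuclideanSpace ℝ (Fin m),
      (∀ δ > 0, ∃ u, (∀ g ∈ K, g u = u) ∧ ∃ k ∈ K, dist u (k v) < δ) → ∀ g ∈ K, g v = v := by
    intro v hv g hg
    have hle : ∀ δ > 0, dist (g v) v < δ := by
      intro δ hδ
      obtain ⟨u, hu, k, hk, hd⟩ := hv (δ / 2) (by linarith)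
      have h1 : dist u v < δ / 2 := by
        have : u = k u := (hu k hk).symm
        rw [this, k.dist_map] at hd
        exact hd
      have h2 : dist u (g v) < δ / 2 := by
        have : u = g u := (hu g hg).symm
        rw [this, g.dist_map]
        exact h1
      have := dist_triangle_left (g v) v u
      linarith
    by_contra hne
    exact lt_irrefl _ (hle _ (dist_pos.2 hne))
  have hfix : ∀ g ∈ K, g (x t₀) = x t₀ := by
    refine hclosed _ fun δ hδ => ?_
    obtain ⟨t, h1, k, hk, h2⟩ := (hfreq.and_eventually
      ((orbit_tendsto hK (hx t₀ ht₀) hδ).filter_mono nhdsWithin_le_nhds)).exists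
    exact ⟨x t, h1, k, hk, by rwa [dist_eq_norm]⟩
  obtain ⟨w, hw⟩ := lift_tangent hd hsep (hx t₀ ht₀) hfix
  have hwfix : ∀ g ∈ K, g w = w := by
    refine hclosed _ fun δ hδ => ?_
    obtain ⟨t, h1, k, hk, h2⟩ := (hfreq.and_eventually (hw δ hδ)).exists
    refine ⟨_, fun g hg => ?_, k, hk, h2⟩
    rw [map_smul, map_sub, h1 g hg, hfix g hg]
  have hder : HasDerivAt y w t₀ := by
    rw [hasDerivAt_iff_tendsto_slope, Metric.tendsto_nhds]
    intro δ hδ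
    filter_upwards [hw δ hδ] with t ht
    obtain ⟨g, hg, h⟩ := ht
    obtain ⟨k, hk, e⟩ := hy t
    obtain ⟨k₀, hk₀, e₀⟩ := hy t₀
    rw [slope_def_module, e, e₀, hfix k₀ hk₀]
    have e2 : k (x t) - x t₀ = k (x t - x t₀) := by rw [map_sub, hfix k hk]
    rw [e2, ← map_smul, ← hwfix k hk, k.dist_map]
    rwa [hwfix g hg] at h
  exact hder.differentiableAt

end Final

section FinalB

variable {m : ℕ}

/-- In degree at most one the group acts trivially. -/
theorem SepOrbits.trivial_of_le_one
    {K : Subgroup (EuclideanSpace ℝ (Fin m) ≃ₗᵢ[ℝ] EuclideanSpace ℝ (Fin m))} {d : ℕ}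
    (hd : d ≤ 1) (hsep : SepOrbits K d) : ∀ g ∈ K, ∀ u, g u = u := by
  intro g hg u
  have key : ∀ s : ℝ, ‖u + s • (g u - u)‖ = ‖u‖ := by
    intro s
    obtain ⟨k, -, hk⟩ := hsep u (u + s • (g u - u)) (by
      intro f _ hdeg hinv
      obtain ⟨q, hq, hqe⟩ := hdeg u (g u - u)
      have hlin := Polynomial.eq_X_add_C_of_natDegree_le_one (hq.trans hd)
      have h0 := hqe 0
      have h1 := hqe 1
      have hs := hqe s
      rw [hlin] at h0 h1 hs
      simp at h0 h1 hs
      have h2 := hinv g hg u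
      have : q.coeff 1 = 0 := by linarith
      rw [hs, h0, this]
      ring)
    rw [hk, k.norm_map]
  by_contra hne
  have hw : 0 < ‖g u - u‖ := norm_pos_iff.2 (sub_ne_zero.2 hne)
  have h := key ((2 * ‖u‖ + 1) / ‖g u - u‖)
  have h2 : ‖((2 * ‖u‖ + 1) / ‖g u - u‖) • (g u - u)‖ = 2 * ‖u‖ + 1 := by
    rw [norm_smul, Real.norm_of_nonneg (by positivity), div_mul_cancel₀ _ hw.ne']
  have h3 := norm_sub_le (u + ((2 * ‖u‖ + 1) / ‖g u - u‖) • (g u - u)) u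
  rw [add_sub_cancel_left, h2, h] at h3
  linarith

/-- In degree zero the space is trivial. -/
theorem SepOrbits.eq_zero
    {K : Subgroup (EuclideanSpace ℝ (Fin m) ≃ₗᵢ[ℝ] EuclideanSpace ℝ (Fin m))}
    (hsep : SepOrbits K 0) (u : EuclideanSpace ℝ (Fin m)) : u = 0 := by
  obtain ⟨k, -, hk⟩ := hsep 0 u (by
    intro f _ hdeg _
    obtain ⟨q, hq, hqe⟩ := hdeg 0 u
    have hq0 := Polynomial.eq_C_of_natDegree_le_zero hq
    have h0 := hqe 0
    have h1 := hqe 1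
    rw [hq0] at h0 h1
    simp at h0 h1
    rw [h0, h1])
  simpa using hk

theorem lineDegLE_eval {p : MvPolynomial (Fin m) ℝ} {d : ℕ} (hp : p.totalDegree ≤ d) :
    LineDegLE d (fun v : EuclideanSpace ℝ (Fin m) => MvPolynomial.eval (fun j => v j) p) := by
  intro v u
  refine ⟨MvPolynomial.aeval (fun j => Polynomial.C (v j) + Polynomial.X * Polynomial.C (u j)) p,
    ?_, fun s => ?_⟩
  · have := MvPolynomial.aeval_natDegree_le p hp
      (fun j => Polynomial.C (v j) + Polynomial.X * Polynomial.C (u j)) (n := 1) (fun j => by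
        compute_degree)
    simpa using this
  · change _ = (Polynomial.evalRingHom s) _
    rw [MvPolynomial.aeval_def, MvPolynomial.hom_eval₂]
    change MvPolynomial.eval₂ _ _ p = _
    congr 1
    · ext a
      simp
    · funext j
      simp
      ring

theorem sepOrbits_of_gen
    {K : Subgroup (EuclideanSpace ℝ (Fin m) ≃ₗᵢ[ℝ] EuclideanSpace ℝ (Fin m))}
    (hK : (K : Set (EuclideanSpace ℝ (Fin m) ≃ₗᵢ[ℝ] EuclideanSpace ℝ (Fin m))).Finite) {d n : ℕ}
    (σ : Fin n → MvPolynomial (Fin m) ℝ) (hdeg : ∀ i, (σ i).totalDegree ≤ d)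
    (hinv : ∀ i, InvFun K
      (fun v : EuclideanSpace ℝ (Fin m) => MvPolynomial.eval (fun j => v j) (σ i)))
    (hgen : ∀ p : MvPolynomial (Fin m) ℝ,
      InvFun K (fun v : EuclideanSpace ℝ (Fin m) => MvPolynomial.eval (fun j => v j) p) →
      p ∈ Algebra.adjoin ℝ (Set.range σ)) : SepOrbits K d := by
  intro u w huw
  have hall : ∀ p ∈ Algebra.adjoin ℝ (Set.range σ),
      MvPolynomial.eval (fun j => u j) p = MvPolynomial.eval (fun j => w j) p := by
    intro p hp
    induction hp using Algebra.adjoin_induction with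
    | mem p hp =>
      obtain ⟨i, rfl⟩ := hp
      exact huw _ ⟨σ i, fun v => rfl⟩ (lineDegLE_eval (hdeg i)) (hinv i)
    | algebraMap r => simp [MvPolynomial.algebraMap_eq]
    | add p q _ _ h1 h2 => simp [h1, h2]
    | mul p q _ _ h1 h2 => simp [h1, h2]
  obtain ⟨f, ⟨p, hp⟩, hfi, h0, hfe⟩ := exists_orbit_poly hK u
  have hfw : f w = 0 := by
    rw [← h0, hp, hp, hall p (hgen p (by
      have : f = fun v => MvPolynomial.eval (fun j => v j) p := funext hp
      rwa [← this]))]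
  by_contra hcon
  push Not at hcon
  have hne : hK.toFinset.Nonempty := ⟨1, by simp⟩
  obtain ⟨g₀, hg₀, hmin⟩ := hK.toFinset.exists_min_image (fun g => ‖w - g u‖) hne
  have hpos : 0 < ‖w - g₀ u‖ := norm_pos_iff.2 (sub_ne_zero.2 (hcon g₀ (by simpa using hg₀)))
  have := hfe w _ hpos fun g hg => hmin g (by simpa using hg)
  rw [hfw] at this
  have h2 : 0 < (‖w - g₀ u‖ ^ 2) ^ hK.toFinset.card := by positivity
  linarith

theorem smoothAlong_of_gen
    {K : Subgroup (EuclideanSpace ℝ (Fin m) ≃ₗᵢ[ℝ] EuclideanSpace ℝ (Fin m))} {d n : ℕ}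
    (σ : Fin n → MvPolynomial (Fin m) ℝ)
    (hgen : ∀ p : MvPolynomial (Fin m) ℝ,
      InvFun K (fun v : EuclideanSpace ℝ (Fin m) => MvPolynomial.eval (fun j => v j) p) →
      p ∈ Algebra.adjoin ℝ (Set.range σ))
    {x : ℝ → EuclideanSpace ℝ (Fin m)} {t : ℝ}
    (hx : ∀ i, ContDiffAt ℝ d (fun s => MvPolynomial.eval (fun j => x s j) (σ i)) t) :
    SmoothAlong K d x t := by
  rintro f ⟨p, hp⟩ hfi
  obtain rfl : f = fun v => MvPolynomial.eval (fun j => v j) p := funext hp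
  have hmem := hgen p hfi
  clear hfi hp
  induction hmem using Algebra.adjoin_induction with
  | mem p hp =>
    obtain ⟨i, rfl⟩ := hp
    exact hx i
  | algebraMap r =>
    simp only [MvPolynomial.algebraMap_eq, MvPolynomial.eval_C]
    exact contDiffAt_const
  | add p q _ _ h1 h2 =>
    simp only [map_add]
    exact h1.add h2
  | mul p q _ _ h1 h2 =>
    simp only [map_mul]
    exact h1.mul h2

end FinalB

end LiftHelpers

/-- For an orthogonal representation `ρ` of a finite group `G` on `V = ℝ^m`, with homogeneous
generators `σ 0, …, σ (n-1)` of the algebra of `G`-invariant polynomials, of maximal degree `d`: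
any curve of class `C^d` in the orbit space `σ(V) ⊆ ℝ^n` admits a differentiable lift to `V`. -/
theorem exists_differentiable_lift
    (G : Type*) [Group G] [Fintype G] (m n : ℕ)
    (ρ : G →* (EuclideanSpace ℝ (Fin m) ≃ₗᵢ[ℝ] EuclideanSpace ℝ (Fin m)))
    (σ : Fin n → MvPolynomial (Fin m) ℝ)
    (deg : Fin n → ℕ)
    (hhom : ∀ i, (σ i).IsHomogeneous (deg i))
    (hinv : ∀ i g (v : EuclideanSpace ℝ (Fin m)),
      MvPolynomial.eval (fun j => ρ g v j) (σ i) = MvPolynomial.eval (fun j => v j) (σ i))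
    (hgen : ∀ p : MvPolynomial (Fin m) ℝ,
      (∀ g (v : EuclideanSpace ℝ (Fin m)),
        MvPolynomial.eval (fun j => ρ g v j) p = MvPolynomial.eval (fun j => v j) p) →
      p ∈ Algebra.adjoin ℝ (Set.range σ))
    (S : EuclideanSpace ℝ (Fin m) → EuclideanSpace ℝ (Fin n))
    (hS : ∀ v i, S v i = MvPolynomial.eval (fun j => v j) (σ i))
    (d : ℕ) (hd : d = Finset.univ.sup deg)
    (c : ℝ → EuclideanSpace ℝ (Fin n))
    (hc : ContDiff ℝ d c)
    (hcval : ∀ t, c t ∈ Set.range S) :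
    ∃ cbar : ℝ → EuclideanSpace ℝ (Fin m),
      Differentiable ℝ cbar ∧ ∀ t, S (cbar t) = c t := by
  choose x hx using hcval
  have hinv' : ∀ i, InvFun ρ.range
      (fun v : EuclideanSpace ℝ (Fin m) => MvPolynomial.eval (fun j => v j) (σ i)) := by
    rintro i _ ⟨g, rfl⟩ v
    exact hinv i g v
  have hgen' : ∀ p : MvPolynomial (Fin m) ℝ,
      InvFun ρ.range (fun v : EuclideanSpace ℝ (Fin m) => MvPolynomial.eval (fun j => v j) p) →
      p ∈ Algebra.adjoin ℝ (Set.range σ) :=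
    fun p hp => hgen p fun g v => hp (ρ g) ⟨g, rfl⟩ v
  have hK : (ρ.range : Set (EuclideanSpace ℝ (Fin m) ≃ₗᵢ[ℝ] EuclideanSpace ℝ (Fin m))).Finite := by
    rw [MonoidHom.coe_range]
    exact Set.finite_range ρ
  have hdeg : ∀ i, (σ i).totalDegree ≤ d := fun i =>
    (hhom i).totalDegree_le.trans (hd ▸ Finset.le_sup (Finset.mem_univ i))
  have hsep : SepOrbits ρ.range d := sepOrbits_of_gen hK σ hdeg hinv' hgen'
  have hsmooth : ∀ t, SmoothAlong ρ.range d x t := fun t =>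
    smoothAlong_of_gen σ hgen' fun i => by
      have h1 : (fun s => MvPolynomial.eval (fun j => x s j) (σ i)) = fun s => c s i := by
        funext s
        rw [← hS, hx]
      rw [h1]
      exact (contDiff_euclidean.1 hc i).contDiffAt
  rcases Nat.lt_or_ge 1 d with hd2 | hd1
  · obtain ⟨y, hy, hyd⟩ := lift_main hd2 _ ρ.range hK le_rfl hsep x Set.univ isOpen_univ
      fun t _ => hsmooth t
    refine ⟨y, fun t => hyd t (Set.mem_univ t), fun t => ?_⟩
    obtain ⟨_, ⟨g, rfl⟩, hg⟩ := hy t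
    rw [← hx t]
    ext i
    rw [hS, hS, hg]
    exact hinv i g (x t)
  · refine ⟨x, ?_, hx⟩
    rcases Nat.lt_or_ge 0 d with hpos | h0
    · have hd' : d = 1 := by omega
      subst hd'
      rw [differentiable_euclidean]
      intro j t
      have h1 := hsmooth t (fun v => v j) (IsPolyFun.coord j) fun g hg v => by
        rw [hsep.trivial_of_le_one le_rfl g hg v]
      exact h1.differentiableAt (by simp)
    · obtain rfl : d = 0 := by omega
      have : x = fun _ => 0 := funext fun t => hsep.eq_zero (x t)
      rw [this]
      exact differentiable_const _
end
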